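/- For any theory T of unital C*-algebras, the minimal tensor norm predicate P^min is T-definable if and only if T is subhomogeneous (i.e., every model of T is subhomogeneous; equivalently, there is an n such that every model of T is n-subhomogeneous). -/

import Mathlib

open scoped TensorProduct
open Filter Topology Function

noncomputable section

/-- The star operation on the algebraic tensor product `A ⊗[ℂ] B` of two complex
C*-algebras, determined by `star (a ⊗ b) = star a ⊗ star b`. -/
def tensorStar (A B : Type) [CStarAlgebra A] [CStarAlgebra B] :
    A ⊗[ℂ] B →+ A ⊗[ℂ] B :=
  TensorProduct.liftAddHom
    { toFun := fun a =>
        { toFun := fun b => star a ⊗ₜ[ℂ] star b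
          map_zero' := by simp
          map_add' := fun b b' => by simp [star_add, TensorProduct.tmul_add] }
      map_zero' := by ext b; simp
      map_add' := fun a a' => by ext b; simp [star_add, TensorProduct.add_tmul] }
    (fun c a b => by
      simp [star_smul, TensorProduct.smul_tmul, TensorProduct.tmul_smul])

/-- A C*-norm on the algebraic tensor product `A ⊗[ℂ] B`: a submultiplicative,
star-invariant norm satisfying the C*-identity (so that the completion with respect to it
is a C*-algebra). -/
structure IsCStarNorm {A B : Type} [CStarAlgebra A] [CStarAlgebra B]
    (nu : A ⊗[ℂ] B → ℝ) : Prop where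
  eq_zero_iff : ∀ x, nu x = 0 ↔ x = 0
  nonneg : ∀ x, 0 ≤ nu x
  add_le : ∀ x y, nu (x + y) ≤ nu x + nu y
  smul_eq : ∀ (c : ℂ) x, nu (c • x) = ‖c‖ * nu x
  mul_le : ∀ x y, nu (x * y) ≤ nu x * nu y
  star_eq : ∀ x, nu (tensorStar A B x) = nu x
  cstar : ∀ x, nu (tensorStar A B x * x) = nu x ^ 2

/-- The minimal tensor norm on `A ⊗[ℂ] B`: by Takesaki's theorem, the minimal C*-norm
on the algebraic tensor product. -/
def minNorm (A B : Type) [CStarAlgebra A] [CStarAlgebra B] (x : A ⊗[ℂ] B) : ℝ :=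
  sInf {r : ℝ | ∃ nu : A ⊗[ℂ] B → ℝ, IsCStarNorm nu ∧ r = nu x}

/-- A family of elements of C*-algebras is (uniformly norm-)bounded. -/
def Bdd {I : Type} {A : I → Type} [∀ i, CStarAlgebra (A i)] (f : ∀ i, A i) : Prop :=
  ∃ M : ℝ, ∀ i, ‖f i‖ ≤ M

/-- `π : (∀ i, A i) → B` realizes `B` as the C*-algebra ultraproduct `∏_U A_i`, i.e. as
the quotient of the ℓ∞-product of the `A i` by the ideal of bounded families whose norms
tend to `0` along `U`:  `π` is a unital *-homomorphism on bounded families, every element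
of `B` lifts to a bounded family (with control of norms), and the norm of `π f` is the
`U`-limit of the norms `‖f i‖`.  This data determines `B` uniquely up to isometric
*-isomorphism. -/
structure IsCStarUltraproduct {I : Type} (U : Ultrafilter I) (A : I → Type)
    [∀ i, CStarAlgebra (A i)] (B : Type) [CStarAlgebra B]
    (π : (∀ i, A i) → B) : Prop where
  map_one : π 1 = 1
  map_add : ∀ f g, Bdd f → Bdd g → π (f + g) = π f + π g
  map_mul : ∀ f g, Bdd f → Bdd g → π (f * g) = π f * π g
  map_star : ∀ f, Bdd f → π (star f) = star (π f)
  map_smul : ∀ (c : ℂ) f, Bdd f → π (c • f) = c • π f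
  norm_eq : ∀ f, Bdd f → Tendsto (fun i => ‖f i‖) (U : Filter I) (nhds ‖π f‖)
  surj : ∀ b : B, ∃ f, (∀ i, ‖f i‖ ≤ ‖b‖) ∧ π f = b

/-- *-polynomial terms in `n` variables over `ℂ`: the terms of the continuous-logic
language of (unital) C*-algebras. -/
inductive CTerm : ℕ → Type
  | var {n : ℕ} : Fin n → CTerm n
  | one {n : ℕ} : CTerm n
  | add {n : ℕ} : CTerm n → CTerm n → CTerm n
  | mul {n : ℕ} : CTerm n → CTerm n → CTerm n
  | star {n : ℕ} : CTerm n → CTerm n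
  | smul {n : ℕ} : ℂ → CTerm n → CTerm n

/-- Evaluation of a *-polynomial term in a C*-algebra. -/
def CTerm.eval {A : Type} [CStarAlgebra A] : ∀ {n : ℕ}, CTerm n → (Fin n → A) → A
  | _, CTerm.var i, a => a i
  | _, CTerm.one, _ => 1
  | _, CTerm.add s t, a => CTerm.eval s a + CTerm.eval t a
  | _, CTerm.mul s t, a => CTerm.eval s a * CTerm.eval t a
  | _, CTerm.star t, a => Star.star (CTerm.eval t a)
  | _, CTerm.smul c t, a => c • CTerm.eval t a

/-- Formulas of the continuous-logic language of (unital) C*-algebras in `n` free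
variables (all variables ranging over the closed unit ball): atomic formulas `‖t‖` for
*-polynomial terms `t`, closed under continuous combinations and the quantifiers
`sup` and `inf` over the unit ball. -/
inductive Formula : ℕ → Type
  | atom {n : ℕ} : CTerm n → Formula n
  | comb {n k : ℕ} (u : (Fin k → ℝ) → ℝ) (hu : Continuous u)
      (phis : Fin k → Formula n) : Formula n
  | sup {n : ℕ} : Formula (n + 1) → Formula n
  | inf {n : ℕ} : Formula (n + 1) → Formula n

/-- The interpretation of a formula in a (unital) C*-algebra, the quantified variables
ranging over the closed unit ball. -/
def Formula.interp (A : Type) [CStarAlgebra A] :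
    ∀ {n : ℕ}, Formula n → (Fin n → A) → ℝ
  | _, Formula.atom t, a => ‖t.eval a‖
  | _, Formula.comb u _ phis, a => u fun j => (phis j).interp A a
  | _, Formula.sup phi, a => ⨆ b : {x : A // ‖x‖ ≤ 1}, phi.interp A (Fin.snoc a b.1)
  | _, Formula.inf phi, a => ⨅ b : {x : A // ‖x‖ ≤ 1}, phi.interp A (Fin.snoc a b.1)

/-- A sentence is a formula with no free variables. -/
abbrev Sentence := Formula 0

/-- A theory of (unital) C*-algebras: a set of sentences, each imposed as the condition
`σ = 0`. -/
abbrev CStarTheory := Set Sentence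

/-- `A` is a model of the theory `T`. -/
def Models (A : Type) [CStarAlgebra A] (T : CStarTheory) : Prop :=
  ∀ σ ∈ T, σ.interp A finZeroElim = 0

/-- `A` is `n`-subhomogeneous: every (topologically) irreducible *-representation of `A`
on a complex Hilbert space has dimension at most `n`. -/
def IsSubhomogeneous (n : ℕ) (A : Type) [CStarAlgebra A] : Prop :=
  ∀ (H : Type) [NormedAddCommGroup H] [InnerProductSpace ℂ H] [CompleteSpace H]
    (π : A →⋆ₐ[ℂ] (H →L[ℂ] H)),
    (∀ K : Submodule ℂ H, IsClosed (K : Set H) →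
      (∀ a : A, ∀ x ∈ K, π a x ∈ K) → K = ⊥ ∨ K = ⊤) →
    FiniteDimensional ℂ H ∧ Module.finrank ℂ H ≤ n

/-- The minimal tensor norm predicate `P^min` is `T`-definable: for each `n`, the
`T`-function `(a, b) ↦ ‖Σ a_k ⊗ b_k‖_min` (on `2n`-tuples from the unit ball) is realized
by a `T`-formula, i.e. it is a uniform-over-models-of-`T` limit of interpretations of
formulas. -/
def MinDefinableOver (T : CStarTheory) : Prop :=
  ∀ (n : ℕ) (ε : ℝ), 0 < ε → ∃ phi : Formula (n + n),
    ∀ (A : Type) [CStarAlgebra A], Models A T →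
      ∀ a b : Fin n → A, (∀ k, ‖a k‖ ≤ 1) → (∀ k, ‖b k‖ ≤ 1) →
        |minNorm A A (∑ k, a k ⊗ₜ[ℂ] b k) - phi.interp A (Fin.append a b)| ≤ ε

/-!
**Preparation.** The minimal norm is identified with the supremum of the norms of `(π ⊗ σ)(x)` over
irreducible representations `π`, `σ` (`tau_le_minNorm`, `minNorm_le_of_irred`). One inequality is
elementary, as this supremum is a C*-norm (`isCStarNorm_sup`). The other is Takesaki's theorem that
every C*-norm dominates it, proved by compressing the elements of both factors to scalars by
contractions (`excise`) so that product vector functionals are bounded, and by iterating the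
C*-identity (`IsCStarNorm.tau_le`). Ultraproducts of C*-algebras satisfy Łoś's theorem
(`Formula.los`). An ultraproduct of algebras that are less and less subhomogeneous contains elements
`y₀, y₁, …` with `yᵢ* yⱼ = δᵢⱼ c`, `‖c‖ = 1` (`exists_system`), and an algebra containing such a
system is not subhomogeneous (`not_isSubhomogeneous_of_system`).

**Definability implies subhomogeneity.** If some model is not subhomogeneous, some ultrapower `A` of
it, again a model, contains an infinite system `y`. A system indexed by a finite set `X` turns weighted
permutations of `X` into contractions `∑ χ(x) y_{σ x} y_x*`. Taking for `X` the points of order `n + 1`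
of the torus, with two characters and two shears, gives five contractions `aₙ,ₖ`, and five conjugate
ones `bₙ,ₖ`. The norm of `∑ₖ aₙ,ₖ ⊗ bₙ,ₖ` is at least `5` by an invariant vector (`le_minNorm_tw`),
whereas for `n ≠ m` the norm of `∑ₖ aₙ,ₖ ⊗ bₘ,ₖ` is at most `5 - 1/1024`. Indeed an almost invariant
function would give a mass distribution, supported near the origin of the torus by the characters but
off the origin because the orders differ, almost invariant under two shears which act paradoxically
there (`paradox`, `torus_gap`, `minNorm_tw_le`). Now let `a`, `b` be the classes of these sequences in
an ultrapower of `A` along `U`, and map it into the ultrapower along an ultrafilter `V` on pairs whose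
marginals are both `U` and which avoids the diagonal. By injectivity of the minimal norm
(`minNorm_map`), its value at `∑ aₖ ⊗ bₖ` is the same whether both factors are embedded along the
first coordinate or along different coordinates. If the norm were definable, the first choice would
give a value close to a limit of the diagonal norms, the second one close to a limit of the
off-diagonal norms, a contradiction (`not_minDefinable`).

**Subhomogeneity implies definability.** An ultraproduct of models of growing degrees would not be
subhomogeneous, so there is a common bound `n` on the degrees (`exists_uniform_degree`). For an
`n`-subhomogeneous algebra, writing `π(a)` in an orthonormal basis gives
`‖x‖ ≤ ‖x‖_min ≤ n² ‖x‖`, where on the outside `‖·‖` is the injective Banach space norm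
`sup ‖(f ⊗ id)(x)‖` over contractive functionals `f` (`minNorm_le_of_coeff`). This norm is approximated
by formulas: the tuple of scalars `f(αₗ)` ranges over a finite net, and being the tuple of values of a
contractive functional amounts to `|∑ uₗ f(αₗ)| ≤ ‖∑ uₗ αₗ‖` for all scalars `u`, whose violation is
subtracted as a penalty (`injComb`). Applied to the iterated square `x ↦ x* x` of
`x = ∑ aₖ ⊗ bₖ`, followed by the corresponding root, the constant `n²` becomes as close to `1` as
desired (`abs_sub_root_le`).
-/

/-! ### States, the GNS construction and irreducible representations -/

section States

open scoped ComplexOrder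

variable {A : Type} [CStarAlgebra A]

/-- A *-representation of `A` on a complex Hilbert space. -/
structure CRep (A : Type) [CStarAlgebra A] : Type 1 where
  /-- the Hilbert space -/
  H : Type
  [nacg : NormedAddCommGroup H]
  [ips : InnerProductSpace ℂ H]
  [cs : CompleteSpace H]
  /-- the action -/
  π : A →⋆ₐ[ℂ] (H →L[ℂ] H)

attribute [instance] CRep.nacg CRep.ips CRep.cs

/-- Topological irreducibility, as in `IsSubhomogeneous`. -/
def CRep.Irred (r : CRep A) : Prop :=
  ∀ K : Submodule ℂ r.H, IsClosed (K : Set r.H) →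
      (∀ a : A, ∀ x ∈ K, r.π a x ∈ K) → K = ⊥ ∨ K = ⊤

lemma CRep.inner_star (r : CRep A) (a : A) (x y : r.H) :
    inner ℂ (r.π (star a) x) y = inner ℂ x (r.π a y) := by
  rw [map_star, ContinuousLinearMap.star_eq_adjoint, ContinuousLinearMap.adjoint_inner_left]

lemma CRep.inner_star' (r : CRep A) (a : A) (x y : r.H) :
    inner ℂ (r.π a x) y = inner ℂ x (r.π (star a) y) := by
  rw [← r.inner_star, star_star]

lemma CRep.norm_le (r : CRep A) (a : A) : ‖r.π a‖ ≤ ‖a‖ :=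
  NonUnitalStarAlgHom.norm_apply_le r.π a

lemma CRep.norm_apply_le (r : CRep A) (a : A) (x : r.H) : ‖r.π a x‖ ≤ ‖a‖ * ‖x‖ :=
  (ContinuousLinearMap.le_of_opNorm_le _ (r.norm_le a) x)

/-- A state, as a bare function: linear, unital and contractive. -/
structure IsState (f : A → ℂ) : Prop where
  add : ∀ a b, f (a + b) = f a + f b
  smul : ∀ (c : ℂ) a, f (c • a) = c * f a
  one : f 1 = 1
  le : ∀ a, ‖f a‖ ≤ ‖a‖

lemma IsState.neg {f : A → ℂ} (hf : IsState f) (a : A) : f (-a) = -f a := by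
  have := hf.smul (-1) a
  simpa using this

lemma IsState.sub {f : A → ℂ} (hf : IsState f) (a b : A) : f (a - b) = f a - f b := by
  rw [sub_eq_add_neg, hf.add, hf.neg, sub_eq_add_neg]

lemma norm_add_I_smul_sq (h : A) (hh : IsSelfAdjoint h) (t : ℝ) :
    ‖h + ((t : ℂ) * Complex.I) • (1 : A)‖ ^ 2 ≤ ‖h‖ ^ 2 + t ^ 2 := by
  rw [sq, ← CStarRing.norm_star_mul_self]
  have : star (h + ((t : ℂ) * Complex.I) • (1 : A)) * (h + ((t : ℂ) * Complex.I) • (1 : A))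
      = h * h + ((t : ℂ) ^ 2) • (1 : A) := by
    simp only [star_add, hh.star_eq, star_smul, star_one, Complex.star_def, map_mul,
      Complex.conj_ofReal, Complex.conj_I, mul_add, add_mul, smul_mul_assoc, mul_smul_comm,
      one_mul, mul_one, smul_add, smul_smul]
    have : (t : ℂ) * Complex.I * ((t : ℂ) * -Complex.I) = (t : ℂ) ^ 2 := by
      ring_nf; simp
    rw [this]
    simp only [mul_neg, neg_smul]
    abel
  rw [this]
  rcases subsingleton_or_nontrivial A with h1 | h1
  · rw [Subsingleton.elim (h * h + ((t : ℂ) ^ 2) • (1 : A)) 0, norm_zero]; positivity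
  refine (norm_add_le _ _).trans ?_
  rw [norm_smul, CStarRing.norm_one]
  have := norm_mul_le h h
  simp
  nlinarith

lemma IsState.im_eq {f : A → ℂ} (hf : IsState f) {h : A} (hh : IsSelfAdjoint h) :
    (f h).im = 0 := by
  have key : ∀ t : ℝ, 2 * t * (f h).im ≤ ‖h‖ ^ 2 := by
    intro t
    have h1 := hf.le (h + ((t : ℂ) * Complex.I) • (1 : A))
    have h2 := norm_add_I_smul_sq h hh t
    rw [hf.add, hf.smul, hf.one, mul_one] at h1
    have h3 : ((f h).im + t) ^ 2 ≤ ‖f h + (t : ℂ) * Complex.I‖ ^ 2 := by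
      rw [← Complex.normSq_eq_norm_sq, Complex.normSq_apply]
      simp
      nlinarith [sq_nonneg (f h).re]
    have h4 : ‖f h + (t : ℂ) * Complex.I‖ ^ 2 ≤ ‖h + ((t : ℂ) * Complex.I) • (1 : A)‖ ^ 2 := by
      gcongr
    nlinarith [sq_nonneg (f h).im]
  by_contra hne
  have := key ((‖h‖ ^ 2 + 1) / (2 * (f h).im))
  field_simp at this
  linarith

lemma IsState.nonneg {f : A → ℂ} (hf : IsState f) (a : A) : 0 ≤ f (star a * a) := by
  let _ := CStarAlgebra.spectralOrder A
  have _ := CStarAlgebra.spectralOrderedRing A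
  set h := star a * a with hdef
  have hh : IsSelfAdjoint h := IsSelfAdjoint.star_mul_self a
  have him := hf.im_eq hh
  have hn : 0 ≤ h := star_mul_self_nonneg a
  have h1 : ‖((‖h‖ : ℂ)) • (1 : A) - h‖ ≤ ‖h‖ := by
    have h2 : (0 : A) ≤ ((‖h‖ : ℂ)) • (1 : A) - h := by
      have := IsSelfAdjoint.le_algebraMap_norm_self (a := h) (ha := hh)
      rw [sub_nonneg]
      convert this using 1
      rw [Algebra.algebraMap_eq_smul_one]
      exact Complex.coe_smul _ _
    rcases subsingleton_or_nontrivial A with h1 | h1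
    · rw [Subsingleton.elim (((‖h‖ : ℂ)) • (1 : A) - h) 0, norm_zero]; positivity
    calc _ ≤ ‖((‖h‖ : ℂ)) • (1 : A)‖ := CStarAlgebra.norm_le_norm_of_nonneg_of_le h2 (by simpa using hn)
      _ = ‖h‖ := by rw [norm_smul, CStarRing.norm_one]; simp
  have h3 := (hf.le _).trans h1
  rw [hf.sub, hf.smul, hf.one, mul_one] at h3
  have h4 := (Complex.abs_re_le_norm _).trans h3
  simp at h4
  rw [Complex.le_def]
  refine ⟨?_, by simp [him]⟩
  have := (abs_le.1 h4).2
  simp; linarith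

/-- The GNS representation of a state. -/
lemma IsState.gns {f : A → ℂ} (hf : IsState f) : ∃ (r : CRep A) (ξ : r.H), ‖ξ‖ = 1 ∧
    (∀ a, inner ℂ ξ (r.π a ξ) = f a) ∧ Dense (Set.range fun a => r.π a ξ) := by
  let _ := CStarAlgebra.spectralOrder A
  have _ := CStarAlgebra.spectralOrderedRing A
  let F : A →ₚ[ℂ] ℂ := PositiveLinearMap.mk₀
    { toFun := f, map_add' := hf.add, map_smul' := hf.smul } (by
      intro x hx
      obtain ⟨a, rfl⟩ := CStarAlgebra.nonneg_iff_eq_star_mul_self.1 hx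
      exact hf.nonneg a)
  have hF : ∀ a, F a = f a := fun a => rfl
  let ξ : F.GNS := ((F.toPreGNS 1 : F.PreGNS) : F.GNS)
  have hact : ∀ a, F.gnsStarAlgHom a ξ = ((F.toPreGNS a : F.PreGNS) : F.GNS) := by
    intro a
    change F.gnsNonUnitalStarAlgHom a _ = _
    rw [PositiveLinearMap.gnsNonUnitalStarAlgHom_apply_coe]
    simp
  have hin : ∀ a, inner ℂ ξ (F.gnsStarAlgHom a ξ) = f a := by
    intro a
    rw [hact, UniformSpace.Completion.inner_coe, PositiveLinearMap.preGNS_inner_def, hF]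
    simp
  refine ⟨{ H := F.GNS, π := F.gnsStarAlgHom }, ξ, ?_, hin, ?_⟩
  · have := hin 1
    rw [map_one, hf.one] at this
    have h2 : ‖ξ‖ ^ 2 = 1 := by
      have h3 : inner ℂ ξ ξ = ((‖ξ‖ : ℂ)) ^ 2 := inner_self_eq_norm_sq_to_K ξ
      have h4 : inner ℂ ξ ξ = (1 : ℂ) := this
      rw [h4] at h3
      exact_mod_cast h3.symm
    nlinarith [norm_nonneg ξ]
  · have : (Set.range fun a => F.gnsStarAlgHom a ξ)
        = Set.range (fun x : F.PreGNS => (x : F.GNS)) := by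
      ext z
      constructor
      · rintro ⟨a, rfl⟩; exact ⟨_, (hact a).symm⟩
      · rintro ⟨a, rfl⟩; exact ⟨F.ofPreGNS a, hact _⟩
    change Dense (Set.range fun a => F.gnsStarAlgHom a ξ)
    rw [this]
    exact UniformSpace.Completion.denseRange_coe

lemma isState_vector (r : CRep A) (ξ : r.H) (hξ : ‖ξ‖ = 1) :
    IsState fun a => (inner ℂ ξ (r.π a ξ) : ℂ) where
  add a b := by simp
  smul c a := by simp
  one := by simp [inner_self_eq_norm_sq_to_K, hξ]
  le a := by
    refine (norm_inner_le_norm _ _).trans ?_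
    have := r.norm_apply_le a ξ
    simpa [hξ] using this

/-- A norming functional of `1 + b⋆b` is a state attaining `‖b‖ ^ 2` at `b⋆b`. -/
lemma exists_state [Nontrivial A] (b : A) :
    ∃ f : A → ℂ, IsState f ∧ f (star b * b) = ((‖b‖ ^ 2 : ℝ) : ℂ) := by
  let _ := CStarAlgebra.spectralOrder A
  have _ := CStarAlgebra.spectralOrderedRing A
  set h := star b * b with hdef
  have hn : 0 ≤ h := star_mul_self_nonneg b
  have hnorm : ‖h‖ = ‖b‖ ^ 2 := by rw [hdef, CStarRing.norm_star_mul_self, sq]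
  have h1 : 1 + ‖h‖ ≤ ‖1 + h‖ := by
    have h2 : ‖h‖ ∈ spectrum ℝ h := CStarAlgebra.norm_mem_spectrum_of_nonneg hn
    have h3 : ‖h‖ + 1 ∈ spectrum ℝ (algebraMap ℝ A 1 + h) := by
      rw [spectrum.add_mem_add_iff]; exact h2
    rw [map_one, add_comm ‖h‖] at h3
    have := spectrum.norm_le_norm_of_mem h3
    rwa [Real.norm_of_nonneg (by positivity)] at this
  have h0 : (1 + h) ≠ 0 := by
    intro h2; rw [h2, norm_zero] at h1; linarith [norm_nonneg h]
  obtain ⟨g, hg, hg2⟩ := exists_dual_vector ℂ (1 + h) (norm_ne_zero_iff.2 h0)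
  have hle : ∀ a, ‖g a‖ ≤ ‖a‖ := fun a => by
    simpa [hg] using g.le_opNorm a
  have hg1 := hle 1
  have hgh := hle h
  rw [CStarRing.norm_one] at hg1
  rw [map_add] at hg2
  have hre : (g 1).re + (g h).re = ‖1 + h‖ := by
    have := congrArg Complex.re hg2
    simpa using this
  have e1 : ∀ (z : ℂ) (r : ℝ), ‖z‖ ≤ r → r ≤ z.re → z = r := by
    intro z r h1 h2
    have h3 : z.re ≤ ‖z‖ := Complex.re_le_norm z
    have h4 : ‖z‖ ^ 2 = z.re ^ 2 + z.im ^ 2 := by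
      rw [← Complex.normSq_eq_norm_sq, Complex.normSq_apply]; ring
    have h5 : z.re = r := by linarith
    have h6 : ‖z‖ = r := by linarith
    rw [h5, h6] at h4
    have h7 : z.im = 0 := by nlinarith
    apply Complex.ext <;> simp [h5, h7]
  have r1 := Complex.re_le_norm (g 1)
  have r2 := Complex.re_le_norm (g h)
  refine ⟨g, ⟨map_add g, fun c a => by simp, ?_, hle⟩, ?_⟩
  · have := e1 (g 1) 1 hg1 (by linarith)
    simpa using this
  · have := e1 (g h) ‖h‖ hgh (by linarith)
    rw [this, hnorm]

/-- Existence of pure states: an extreme point of the face of states attaining the norm of `b`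
has an irreducible GNS representation. -/
lemma exists_irred [Nontrivial A] (b : A) :
    ∃ (r : CRep A) (ξ : r.H), r.Irred ∧ ‖ξ‖ = 1 ∧ ‖r.π b ξ‖ = ‖b‖ := by
  let S : Set (A → ℂ) := {f | IsState f ∧ f (star b * b) = ((‖b‖ ^ 2 : ℝ) : ℂ)}
  have hcomp : IsCompact S := by
    refine (isCompact_univ_pi (fun a : A => isCompact_closedBall (0 : ℂ) ‖a‖)).of_isClosed_subset
      ?_ ?_
    · have : S = (⋂ a : A, ⋂ a' : A, {f | f (a + a') = f a + f a'})
          ∩ (⋂ c : ℂ, ⋂ a : A, {f | f (c • a) = c * f a}) ∩ {f | f 1 = 1}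
          ∩ (⋂ a : A, {f | ‖f a‖ ≤ ‖a‖}) ∩ {f | f (star b * b) = ((‖b‖ ^ 2 : ℝ) : ℂ)} := by
        ext f
        simp only [S, Set.mem_ofPred_eq, Set.mem_inter_iff, Set.mem_iInter]
        constructor
        · rintro ⟨⟨h1, h2, h3, h4⟩, h5⟩; exact ⟨⟨⟨⟨h1, h2⟩, h3⟩, h4⟩, h5⟩
        · rintro ⟨⟨⟨⟨h1, h2⟩, h3⟩, h4⟩, h5⟩; exact ⟨⟨h1, h2, h3, h4⟩, h5⟩
      rw [this]
      refine ((((?_ : IsClosed _).inter ?_).inter ?_).inter ?_).inter ?_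
      · exact isClosed_iInter fun a => isClosed_iInter fun a' =>
          isClosed_eq (by fun_prop) (by fun_prop)
      · exact isClosed_iInter fun a => isClosed_iInter fun a' =>
          isClosed_eq (by fun_prop) (by fun_prop)
      · exact isClosed_eq (by fun_prop) (by fun_prop)
      · exact isClosed_iInter fun a => isClosed_le (by fun_prop) (by fun_prop)
      · exact isClosed_eq (by fun_prop) (by fun_prop)
    · intro f hf a _
      simpa using hf.1.le a
  obtain ⟨f, hfS, hext⟩ := hcomp.extremePoints_nonempty (exists_state b)
  obtain ⟨hf, hfb⟩ := hfS
  obtain ⟨r, ξ, hξ, hrep, hdense⟩ := hf.gns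
  refine ⟨r, ξ, ?_, hξ, ?_⟩
  · intro K hK hinv
    have hKc : IsComplete (K : Set r.H) := hK.isComplete
    have : CompleteSpace K := hK.completeSpace_coe
    -- the two components of the cyclic vector
    set p := K.starProjection ξ with hp
    set q := ξ - p with hq
    have hpK : p ∈ K := Submodule.starProjection_apply_mem K ξ
    have hqK : q ∈ Kᗮ := Submodule.sub_starProjection_mem_orthogonal ξ
    have hinv' : ∀ a : A, ∀ x ∈ Kᗮ, r.π a x ∈ Kᗮ := by
      intro a x hx
      rw [Submodule.mem_orthogonal] at hx ⊢
      intro u hu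
      rw [← r.inner_star]
      exact hx _ (hinv _ _ hu)
    have hpq : ξ = p + q := by simp [hq]
    have cross1 : ∀ a, inner ℂ p (r.π a q) = 0 := fun a =>
      Submodule.inner_right_of_mem_orthogonal hpK (hinv' a q hqK)
    have cross2 : ∀ a, inner ℂ q (r.π a p) = 0 := fun a =>
      Submodule.inner_left_of_mem_orthogonal (hinv a p hpK) hqK
    have dense0 : ∀ v : r.H, (∀ a, inner ℂ v (r.π a ξ) = 0) → v = 0 := by
      intro v hv
      have : Set.EqOn (fun x => inner ℂ v x) (fun _ => (0 : ℂ)) (Set.range fun a => r.π a ξ) := by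
        rintro _ ⟨a, rfl⟩; exact hv a
      have := Continuous.ext_on hdense (by fun_prop) (by fun_prop) this
      exact inner_self_eq_zero.1 (congrFun this v)
    have hsum : ‖p‖ ^ 2 + ‖q‖ ^ 2 = 1 := by
      have h1 : inner ℂ p q = 0 := by simpa using cross1 1
      have := norm_add_sq_eq_norm_sq_add_norm_sq_of_inner_eq_zero p q h1
      rw [← hpq, hξ] at this
      nlinarith
    by_cases hp0 : p = 0
    · left
      rw [Submodule.eq_bot_iff]
      intro x hx
      apply dense0
      intro a
      have : ξ ∈ Kᗮ := by rw [hpq, hp0, zero_add]; exact hqK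
      exact Submodule.inner_right_of_mem_orthogonal hx (hinv' a ξ this)
    by_cases hq0 : q = 0
    · right
      rw [Submodule.eq_top_iff']
      have : ξ ∈ K := by rw [hpq, hq0, add_zero]; exact hpK
      have hsub : (Set.range fun a => r.π a ξ) ⊆ (K : Set r.H) := by
        rintro _ ⟨a, rfl⟩; exact hinv a ξ this
      intro x
      exact (hK.closure_subset_iff.2 hsub) (hdense x)
    exfalso
    have hpn : 0 < ‖p‖ := norm_pos_iff.2 hp0
    have hqn : 0 < ‖q‖ := norm_pos_iff.2 hq0
    have hnormal : ∀ v : r.H, 0 < ‖v‖ → ‖((‖v‖⁻¹ : ℝ) : ℂ) • v‖ = 1 := by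
      intro v hv
      rw [norm_smul]; simp; field_simp
    let g (v : r.H) (a : A) : ℂ := (((‖v‖ ^ 2)⁻¹ : ℝ) : ℂ) * inner ℂ v (r.π a v)
    have hg : ∀ v : r.H, 0 < ‖v‖ → IsState (g v) := by
      intro v hv
      have := isState_vector r _ (hnormal v hv)
      convert this using 2 with a
      simp only [g, map_smul, inner_smul_left, inner_smul_right]
      simp
      ring
    have hfg : ∀ a, f a = ((‖p‖ ^ 2 : ℝ) : ℂ) * g p a + ((‖q‖ ^ 2 : ℝ) : ℂ) * g q a := by
      intro a
      rw [← hrep a]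
      conv_lhs => rw [hpq]
      simp only [map_add, inner_add_left, inner_add_right, cross1, cross2, g]
      have : (‖p‖ : ℂ) ≠ 0 := by exact_mod_cast hpn.ne'
      have : (‖q‖ : ℂ) ≠ 0 := by exact_mod_cast hqn.ne'
      push_cast
      field_simp
      ring
    have hbd : ∀ v : r.H, 0 < ‖v‖ → (g v (star b * b)).re ≤ ‖b‖ ^ 2 := by
      intro v hv
      have := (hg v hv).le (star b * b)
      rw [CStarRing.norm_star_mul_self, ← sq] at this
      exact (Complex.re_le_norm _).trans this
    have hre : ‖p‖ ^ 2 * (g p (star b * b)).re + ‖q‖ ^ 2 * (g q (star b * b)).re = ‖b‖ ^ 2 := by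
      have := congrArg Complex.re ((hfg (star b * b)).symm.trans hfb)
      clear_value g
      rwa [Complex.add_re, Complex.re_ofReal_mul, Complex.re_ofReal_mul, Complex.ofReal_re] at this
    have hbp := hbd p hpn
    have hbq := hbd q hqn
    have hp2 : 0 < ‖p‖ ^ 2 := by positivity
    have hq2 : 0 < ‖q‖ ^ 2 := by positivity
    have hval : ∀ v : r.H, 0 < ‖v‖ → (g v (star b * b)).re = ‖b‖ ^ 2 → g v ∈ S := by
      intro v hv h1
      refine ⟨hg v hv, ?_⟩
      apply Complex.ext
      · rw [h1, Complex.ofReal_re]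
      · rw [(hg v hv).im_eq (IsSelfAdjoint.star_mul_self b), Complex.ofReal_im]
    have hpS : g p ∈ S := hval p hpn (by nlinarith)
    have hqS : g q ∈ S := hval q hqn (by nlinarith)
    have hgp : g p = f := by
      refine hext hpS hqS ⟨‖p‖ ^ 2, ‖q‖ ^ 2, hp2, hq2, hsum, ?_⟩
      funext a
      rw [hfg a]
      simp
    -- hence `p` is a scalar multiple of the cyclic vector
    have hpξ : p - ((‖p‖ ^ 2 : ℝ) : ℂ) • ξ = 0 := by
      apply dense0
      intro a
      have h1 := congrFun hgp a
      rw [← hrep a] at h1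
      have h2 : inner ℂ p (r.π a ξ) = inner ℂ p (r.π a p) := by
        conv_lhs => rw [hpq]
        rw [map_add, inner_add_right, cross1, add_zero]
      rw [inner_sub_left, inner_smul_left, ← h1, h2]
      simp only [g]
      have : (‖p‖ : ℂ) ≠ 0 := by exact_mod_cast hpn.ne'
      simp
      field_simp
      ring
    have hn := congrArg (inner ℂ q) hpξ
    have h1 : inner ℂ q p = 0 := by simpa using cross2 1
    rw [inner_sub_right, inner_smul_right, h1, inner_zero_right, hpq, inner_add_right, h1,
      inner_self_eq_norm_sq_to_K] at hn
    have h3 : (‖p‖ : ℂ) ≠ 0 := by exact_mod_cast hpn.ne'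
    have h4 : (‖q‖ : ℂ) ≠ 0 := by exact_mod_cast hqn.ne'
    simp at hn
    tauto
  · have h1 : ‖r.π b ξ‖ ^ 2 = ‖b‖ ^ 2 := by
      have h2 : inner ℂ (r.π b ξ) (r.π b ξ) = ((‖b‖ ^ 2 : ℝ) : ℂ) := by
        rw [r.inner_star', ← hfb, ← hrep, map_mul]; rfl
      rw [inner_self_eq_norm_sq_to_K] at h2
      apply Complex.ofReal_injective
      rw [← h2]; simp
    exact (sq_eq_sq₀ (norm_nonneg _) (norm_nonneg _)).1 h1

end States

/-! ### Tensor products of representations -/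

section HT

variable {H K H' K' : Type} [NormedAddCommGroup H] [InnerProductSpace ℂ H]
  [NormedAddCommGroup K] [InnerProductSpace ℂ K]
  [NormedAddCommGroup H'] [InnerProductSpace ℂ H']
  [NormedAddCommGroup K'] [InnerProductSpace ℂ K']

/-- The algebraic tensor product of two Hilbert spaces, as an (incomplete) inner product space. -/
def HT (H K : Type) [NormedAddCommGroup H] [InnerProductSpace ℂ H]
    [NormedAddCommGroup K] [InnerProductSpace ℂ K] : Type := H ⊗[ℂ] K

instance : NormedAddCommGroup (HT H K) := inferInstanceAs (NormedAddCommGroup (H ⊗[ℂ] K))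
instance : InnerProductSpace ℂ (HT H K) := inferInstanceAs (InnerProductSpace ℂ (H ⊗[ℂ] K))

/-- Elementary tensors in `HT H K`. -/
def tm : H →ₗ[ℂ] K →ₗ[ℂ] HT H K := TensorProduct.mk ℂ H K

@[elab_as_elim]
lemma HT.induction {p : HT H K → Prop} (x : HT H K) (h0 : p 0) (ht : ∀ x y, p (tm x y))
    (ha : ∀ x y, p x → p y → p (x + y)) : p x :=
  TensorProduct.induction_on (motive := p) x h0 ht ha

lemma inner_tm (x x' : H) (y y' : K) :
    inner ℂ (tm x y) (tm x' y') = inner ℂ x x' * inner ℂ y y' :=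
  TensorProduct.inner_tmul ℂ x x' y y'

lemma norm_tm (x : H) (y : K) : ‖tm x y‖ = ‖x‖ * ‖y‖ := TensorProduct.norm_tmul x y

/-- The tensor product of two bounded operators. -/
def HT.map (f : H →L[ℂ] H') (g : K →L[ℂ] K') : HT H K →L[ℂ] HT H' K' := TensorProduct.mapL f g

@[simp] lemma HT.map_tm (f : H →L[ℂ] H') (g : K →L[ℂ] K') (x : H) (y : K) :
    HT.map f g (tm x y) = tm (f x) (g y) := TensorProduct.mapL_tmul f g x y

lemma HT.norm_map_le (f : H →L[ℂ] H') (g : K →L[ℂ] K') : ‖HT.map f g‖ ≤ ‖f‖ * ‖g‖ :=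
  TensorProduct.norm_mapL_le f g

lemma HT.ext_op {S T : HT H K →L[ℂ] HT H' K'} (h : ∀ x y, S (tm x y) = T (tm x y)) : S = T := by
  ext x
  induction x using HT.induction with
  | h0 => simp
  | ht x y => exact h x y
  | ha x y hx hy => rw [map_add, map_add, hx, hy]

end HT

section TensorReps

variable {A B : Type} [CStarAlgebra A] [CStarAlgebra B]

/-- The action of the algebraic tensor product `A ⊗ B` on the (uncompleted) Hilbert space tensor
product of the spaces of two representations. -/
def tau (r : CRep A) (s : CRep B) : A ⊗[ℂ] B →ₗ[ℂ] (HT r.H s.H →L[ℂ] HT r.H s.H) :=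
  TensorProduct.lift (LinearMap.mk₂ ℂ (fun a b => HT.map (r.π a) (s.π b))
    (by intro a a' b; apply HT.ext_op; simp)
    (by intro c a b; apply HT.ext_op; simp)
    (by intro a b b'; apply HT.ext_op; simp)
    (by intro c a b; apply HT.ext_op; simp))

lemma tau_tmul (r : CRep A) (s : CRep B) (a : A) (b : B) :
    tau r s (a ⊗ₜ b) = HT.map (r.π a) (s.π b) := by
  simp [tau]

@[simp] lemma tau_tmul_tm (r : CRep A) (s : CRep B) (a : A) (b : B) (x : r.H) (y : s.H) :
    tau r s (a ⊗ₜ b) (tm x y) = tm (r.π a x) (s.π b y) := by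
  rw [tau_tmul, HT.map_tm]

lemma tau_mul (r : CRep A) (s : CRep B) (x y : A ⊗[ℂ] B) :
    tau r s (x * y) = tau r s x * tau r s y := by
  induction x using TensorProduct.induction_on with
  | zero => simp
  | add x x' h h' => simp [add_mul, h, h']
  | tmul a b =>
    induction y using TensorProduct.induction_on with
    | zero => simp
    | add x x' h h' => simp [mul_add, h, h']
    | tmul a' b' =>
      apply HT.ext_op
      simp

lemma tau_one (r : CRep A) (s : CRep B) : tau r s 1 = 1 := by
  apply HT.ext_op
  simp [Algebra.TensorProduct.one_def]

@[simp] lemma tensorStar_tmul (a : A) (b : B) :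
    tensorStar A B (a ⊗ₜ b) = star a ⊗ₜ star b := by
  simp [tensorStar]

lemma tau_inner_tensorStar (r : CRep A) (s : CRep B) (x : A ⊗[ℂ] B) (u v : HT r.H s.H) :
    inner ℂ (tau r s (tensorStar A B x) u) v = inner ℂ u (tau r s x v) := by
  induction x using TensorProduct.induction_on with
  | zero => simp
  | add x x' h h' => simp [inner_add_left, inner_add_right, h, h']
  | tmul a b =>
    induction u using HT.induction with
    | h0 => simp
    | ha x x' h h' => simp only [map_add, inner_add_left, h, h']
    | ht u u' =>
      induction v using HT.induction with
      | h0 => simp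
      | ha x x' h h' => simp only [map_add, inner_add_right, h, h']
      | ht v v' =>
        simp [inner_tm, r.inner_star', s.inner_star']

@[simp] lemma tensorStar_tensorStar (x : A ⊗[ℂ] B) :
    tensorStar A B (tensorStar A B x) = x := by
  induction x using TensorProduct.induction_on with
  | zero => simp
  | add x x' h h' => simp [h, h']
  | tmul a b => simp

lemma tensorStar_smul (c : ℂ) (x : A ⊗[ℂ] B) :
    tensorStar A B (c • x) = star c • tensorStar A B x := by
  induction x using TensorProduct.induction_on with
  | zero => simp
  | add x x' h h' => rw [smul_add, map_add, h, h', map_add, smul_add]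
  | tmul a b => simp [TensorProduct.smul_tmul']

lemma tensorStar_mul (x y : A ⊗[ℂ] B) :
    tensorStar A B (x * y) = tensorStar A B y * tensorStar A B x := by
  induction x using TensorProduct.induction_on with
  | zero => simp
  | add x x' h h' => simp [add_mul, mul_add, h, h']
  | tmul a b =>
    induction y using TensorProduct.induction_on with
    | zero => simp
    | add x x' h h' => simp [add_mul, mul_add, h, h']
    | tmul a' b' => simp

lemma tau_norm_sq (r : CRep A) (s : CRep B) (x : A ⊗[ℂ] B) (v : HT r.H s.H) :
    ((‖tau r s x v‖ ^ 2 : ℝ) : ℂ) = inner ℂ v (tau r s (tensorStar A B x * x) v) := by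
  rw [tau_mul, mul_apply_eq_comp, ← tau_inner_tensorStar, tensorStar_tensorStar,
    inner_self_eq_norm_sq_to_K]
  simp

lemma tau_norm_star_le (r : CRep A) (s : CRep B) (x : A ⊗[ℂ] B) :
    ‖tau r s (tensorStar A B x)‖ ≤ ‖tau r s x‖ := by
  refine ContinuousLinearMap.opNorm_le_bound _ (norm_nonneg _) fun v => ?_
  have h1 : ‖tau r s (tensorStar A B x) v‖ ^ 2 ≤
      (‖tau r s x‖ * ‖v‖) * ‖tau r s (tensorStar A B x) v‖ := by
    have h2 : ((‖tau r s (tensorStar A B x) v‖ ^ 2 : ℝ) : ℂ)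
        = inner ℂ v (tau r s x (tau r s (tensorStar A B x) v)) := by
      rw [tau_norm_sq, tensorStar_tensorStar, tau_mul, mul_apply_eq_comp]
    have h3 := congrArg norm h2
    rw [Complex.norm_real, Real.norm_of_nonneg (by positivity)] at h3
    rw [h3]
    refine (norm_inner_le_norm _ _).trans ?_
    have := (tau r s x).le_opNorm (tau r s (tensorStar A B x) v)
    nlinarith [norm_nonneg v]
  by_contra hlt
  push Not at hlt
  have : 0 < ‖tau r s (tensorStar A B x) v‖ := lt_of_le_of_lt (by positivity) hlt
  nlinarith

lemma tau_norm_star (r : CRep A) (s : CRep B) (x : A ⊗[ℂ] B) :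
    ‖tau r s (tensorStar A B x)‖ = ‖tau r s x‖ :=
  le_antisymm (tau_norm_star_le r s x) (by simpa using tau_norm_star_le r s (tensorStar A B x))

lemma tau_cstar_le (r : CRep A) (s : CRep B) (x : A ⊗[ℂ] B) :
    ‖tau r s x‖ ^ 2 ≤ ‖tau r s (tensorStar A B x * x)‖ := by
  have : ‖tau r s x‖ ≤ √ ‖tau r s (tensorStar A B x * x)‖ := by
    refine ContinuousLinearMap.opNorm_le_bound _ (Real.sqrt_nonneg _) fun v => ?_
    have h3 := congrArg norm (tau_norm_sq r s x v)
    rw [Complex.norm_real, Real.norm_of_nonneg (by positivity)] at h3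
    rw [← sq_le_sq₀ (by positivity) (by positivity), h3, mul_pow, Real.sq_sqrt (norm_nonneg _)]
    refine (norm_inner_le_norm _ _).trans ?_
    have := (tau r s (tensorStar A B x * x)).le_opNorm v
    nlinarith [norm_nonneg v]
  calc _ ≤ (√ ‖tau r s (tensorStar A B x * x)‖) ^ 2 := by gcongr
    _ = _ := Real.sq_sqrt (norm_nonneg _)

lemma tau_tmul_norm_le (r : CRep A) (s : CRep B) (a : A) (b : B) :
    ‖tau r s (a ⊗ₜ b)‖ ≤ ‖a‖ * ‖b‖ := by
  rw [tau_tmul]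
  refine (HT.norm_map_le _ _).trans ?_
  gcongr
  · exact r.norm_le a
  · exact s.norm_le b

/-- A set of representations is jointly faithful. -/
def Faithful (F : Set (CRep A)) : Prop := ∀ a : A, (∀ r ∈ F, r.π a = 0) → a = 0

/-- The slice `(φ ⊗ id)(x)` by a linear functional `φ`. -/
def slice (φ : A →ₗ[ℂ] ℂ) : A ⊗[ℂ] B →ₗ[ℂ] B :=
  (TensorProduct.lid ℂ B).toLinearMap ∘ₗ φ.rTensor B

@[simp] lemma slice_tmul (φ : A →ₗ[ℂ] ℂ) (a : A) (b : B) : slice φ (a ⊗ₜ b) = φ a • b := by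
  simp [slice]

/-- The functional `a ↦ ⟨ξ, π(a) η⟩`. -/
def CRep.coeff (r : CRep A) (ξ η : r.H) : A →ₗ[ℂ] ℂ where
  toFun a := inner ℂ ξ (r.π a η)
  map_add' a b := by simp
  map_smul' c a := by simp

@[simp] lemma CRep.coeff_apply (r : CRep A) (ξ η : r.H) (a : A) :
    r.coeff ξ η a = inner ℂ ξ (r.π a η) := rfl

lemma inner_tau_slice (r : CRep A) (s : CRep B) (x : A ⊗[ℂ] B) (ξ η : r.H) (ξ' η' : s.H) :
    inner ℂ (tm ξ ξ') (tau r s x (tm η η')) = s.coeff ξ' η' (slice (r.coeff ξ η) x) := by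
  induction x using TensorProduct.induction_on with
  | zero => simp
  | add x x' h h' => simp only [map_add, add_apply, inner_add_right, h, h']
  | tmul a b => simp [inner_tm]

lemma CRep.eq_zero_of_coeff (r : CRep A) (a : A) (h : ∀ ξ η, r.coeff ξ η a = 0) : r.π a = 0 := by
  ext η
  exact inner_self_eq_zero.1 (h (r.π a η) η)

lemma eq_zero_of_tau {F : Set (CRep A)} {G : Set (CRep B)} (hF : Faithful F) (hG : Faithful G)
    (x : A ⊗[ℂ] B) (hx : ∀ r ∈ F, ∀ s ∈ G, tau r s x = 0) : x = 0 := by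
  have h1 : ∀ r ∈ F, ∀ ξ η, slice (r.coeff ξ η) x = 0 := by
    intro r hr ξ η
    apply hG
    intro s hs
    apply s.eq_zero_of_coeff
    intro ξ' η'
    rw [← inner_tau_slice, hx r hr s hs]
    simp
  classical
  let b := Module.Basis.ofVectorSpace ℂ B
  apply (TensorProduct.equivFinsuppOfBasisRight (M := A) b).injective
  rw [map_zero]
  ext k
  rw [Finsupp.zero_apply]
  apply hF
  intro r hr
  apply r.eq_zero_of_coeff
  intro ξ η
  -- slicing on the two legs commutes
  have key : ∀ y : A ⊗[ℂ] B, r.coeff ξ η (TensorProduct.equivFinsuppOfBasisRight (M := A) b y k)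
      = b.coord k (slice (r.coeff ξ η) y) := by
    intro y
    induction y using TensorProduct.induction_on with
    | zero => simp
    | add x x' h h' => simp only [map_add, Finsupp.add_apply, h, h']
    | tmul a c =>
      simp [TensorProduct.equivFinsuppOfBasisRight_apply_tmul_apply, mul_comm]
  rw [key, h1 r hr, map_zero]

lemma norm_tau_le_sum (x : A ⊗[ℂ] B) : ∃ M, ∀ (r : CRep A) (s : CRep B), ‖tau r s x‖ ≤ M := by
  induction x using TensorProduct.induction_on with
  | zero => exact ⟨0, by simp⟩
  | add x x' h h' =>
    obtain ⟨M, hM⟩ := h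
    obtain ⟨M', hM'⟩ := h'
    refine ⟨M + M', fun r s => ?_⟩
    rw [map_add]
    exact (norm_add_le _ _).trans (add_le_add (hM r s) (hM' r s))
  | tmul a b => exact ⟨_, fun r s => tau_tmul_norm_le r s a b⟩

/-- The spatial norm computed from two jointly faithful families of representations is a
C*-norm. -/
lemma isCStarNorm_sup {F : Set (CRep A)} {G : Set (CRep B)} (hF : Faithful F) (hG : Faithful G)
    (hF0 : F.Nonempty) (hG0 : G.Nonempty) :
    IsCStarNorm (fun x : A ⊗[ℂ] B => ⨆ p : F × G, ‖tau p.1.1 p.2.1 x‖) := by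
  have hne : Nonempty (F × G) := ⟨⟨⟨_, hF0.some_mem⟩, ⟨_, hG0.some_mem⟩⟩⟩
  have hbdd : ∀ x : A ⊗[ℂ] B, BddAbove (Set.range fun p : F × G => ‖tau p.1.1 p.2.1 x‖) := by
    intro x
    obtain ⟨M, hM⟩ := norm_tau_le_sum x
    exact ⟨M, by rintro _ ⟨p, rfl⟩; exact hM _ _⟩
  have hle : ∀ (x : A ⊗[ℂ] B) (p : F × G), ‖tau p.1.1 p.2.1 x‖ ≤
      ⨆ p : F × G, ‖tau p.1.1 p.2.1 x‖ := fun x p => le_ciSup (hbdd x) p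
  have hnn : ∀ x : A ⊗[ℂ] B, 0 ≤ ⨆ p : F × G, ‖tau p.1.1 p.2.1 x‖ := fun x =>
    Real.iSup_nonneg fun p => norm_nonneg _
  have hmul : ∀ x y : A ⊗[ℂ] B, (⨆ p : F × G, ‖tau p.1.1 p.2.1 (x * y)‖) ≤
      (⨆ p : F × G, ‖tau p.1.1 p.2.1 x‖) * (⨆ p : F × G, ‖tau p.1.1 p.2.1 y‖) := by
    intro x y
    refine ciSup_le fun p => ?_
    rw [tau_mul]
    refine (norm_mul_le _ _).trans ?_
    gcongr
    · exact hnn x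
    · exact hle x p
    · exact hle y p
  have hstar : ∀ x : A ⊗[ℂ] B, (⨆ p : F × G, ‖tau p.1.1 p.2.1 (tensorStar A B x)‖) =
      ⨆ p : F × G, ‖tau p.1.1 p.2.1 x‖ := by
    intro x
    simp only [tau_norm_star]
  refine ⟨?_, hnn, ?_, ?_, hmul, hstar, ?_⟩
  · intro x
    constructor
    · intro h
      refine eq_zero_of_tau hF hG x fun r hr s hs => ?_
      have := hle x ⟨⟨r, hr⟩, ⟨s, hs⟩⟩
      rw [h] at this
      exact norm_le_zero_iff.1 this
    · rintro rfl
      simp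
  · intro x y
    refine ciSup_le fun p => ?_
    rw [map_add]
    exact (norm_add_le _ _).trans (add_le_add (hle x p) (hle y p))
  · intro c x
    simp only [map_smul, norm_smul]
    rw [Real.mul_iSup_of_nonneg (norm_nonneg c)]
  · intro x
    apply le_antisymm
    · refine (hmul _ _).trans ?_
      rw [hstar, sq]
    · have : (⨆ p : F × G, ‖tau p.1.1 p.2.1 x‖) ≤
          √ (⨆ p : F × G, ‖tau p.1.1 p.2.1 (tensorStar A B x * x)‖) := by
        refine ciSup_le fun p => ?_
        apply Real.le_sqrt_of_sq_le
        exact (tau_cstar_le _ _ x).trans (hle _ p)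
      calc _ ≤ (√ (⨆ p : F × G, ‖tau p.1.1 p.2.1 (tensorStar A B x * x)‖)) ^ 2 := by
            gcongr; exact hnn x
        _ = _ := Real.sq_sqrt (hnn _)

lemma minNorm_le {nu : A ⊗[ℂ] B → ℝ} (h : IsCStarNorm nu) (x : A ⊗[ℂ] B) :
    minNorm A B x ≤ nu x :=
  csInf_le ⟨0, by rintro _ ⟨nu, h, rfl⟩; exact h.nonneg x⟩ ⟨nu, h, rfl⟩

lemma minNorm_le_of_faithful {F : Set (CRep A)} {G : Set (CRep B)} (hF : Faithful F)
    (hG : Faithful G) (hF0 : F.Nonempty) (hG0 : G.Nonempty) (x : A ⊗[ℂ] B) (M : ℝ)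
    (hM : ∀ r ∈ F, ∀ s ∈ G, ‖tau r s x‖ ≤ M) : minNorm A B x ≤ M := by
  have hne : Nonempty (F × G) := ⟨⟨⟨_, hF0.some_mem⟩, ⟨_, hG0.some_mem⟩⟩⟩
  exact (minNorm_le (isCStarNorm_sup hF hG hF0 hG0) x).trans
    (ciSup_le fun p => hM _ p.1.2 _ p.2.2)

/-- The irreducible representations are jointly faithful. -/
lemma faithful_irred : Faithful {r : CRep A | r.Irred} := by
  intro a ha
  rcases subsingleton_or_nontrivial A with h | h
  · exact Subsingleton.elim _ _
  obtain ⟨r, ξ, hr, hξ, hn⟩ := exists_irred a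
  rw [ha r hr] at hn
  simpa using hn.symm

lemma nonempty_irred [Nontrivial A] : {r : CRep A | r.Irred}.Nonempty := by
  obtain ⟨r, ξ, hr, hξ, hn⟩ := exists_irred (1 : A)
  exact ⟨r, hr⟩

end TensorReps

/-! ### Takesaki's theorem: every C*-norm dominates the spatial norms -/

section CStarNorms

variable {A B : Type} [CStarAlgebra A] [CStarAlgebra B]

/-- A C*-seminorm on a C*-algebra is dominated by the norm. -/
lemma cstar_seminorm_le (p : A → ℝ) (h0 : ∀ a, 0 ≤ p a) (hadd : ∀ a b, p (a + b) ≤ p a + p b)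
    (hsmul : ∀ (c : ℂ) a, p (c • a) = ‖c‖ * p a) (h1 : p 1 ≤ 1)
    (hc : ∀ a, p (star a * a) = p a ^ 2) (a : A) : p a ≤ ‖a‖ := by
  let _ := CStarAlgebra.spectralOrder A
  have _ := CStarAlgebra.spectralOrderedRing A
  have hu : ∀ u : unitary A, p u ≤ 1 := by
    intro u
    have h2 := hc u
    rw [Unitary.coe_star_mul_self] at h2
    nlinarith [h0 u]
  have hsa1 : ∀ x : selfAdjoint A, ‖x‖ ≤ 1 → p x ≤ 1 := by
    intro x hx
    have h3 := congrArg Subtype.val (selfAdjoint.realPart_unitarySelfAddISMul x hx)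
    set u := selfAdjoint.unitarySelfAddISMul x hx
    rw [realPart_apply_coe] at h3
    have h4 : (x : A) = ((2⁻¹ : ℝ) : ℂ) • ((u : A) + ((star u : unitary A) : A)) := by
      rw [← h3]; exact (Complex.coe_smul _ _).symm
    rw [h4, hsmul]
    have := hadd u (star u : unitary A)
    have h5 := hu u
    have h6 := hu (star u)
    simp only [Complex.norm_real, norm_inv, Real.norm_ofNat]
    linarith
  have hsa : ∀ x : A, IsSelfAdjoint x → p x ≤ ‖x‖ := by
    intro x hx
    by_cases hx0 : x = 0
    · have := hsmul 0 x
      simp [hx0] at this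
      simp [hx0, this]
    have hn : 0 < ‖x‖ := norm_pos_iff.2 hx0
    have hy : IsSelfAdjoint (((‖x‖⁻¹ : ℝ) : ℂ) • x) := by
      rw [IsSelfAdjoint, star_smul, hx.star_eq]; simp
    have := hsa1 ⟨_, hy⟩ (by
      change ‖((‖x‖⁻¹ : ℝ) : ℂ) • x‖ ≤ 1
      rw [norm_smul]; simp; field_simp; exact le_rfl)
    change p (((‖x‖⁻¹ : ℝ) : ℂ) • x) ≤ 1 at this
    rw [hsmul] at this
    simp at this
    field_simp at this
    exact this
  have h2 := hsa _ (IsSelfAdjoint.star_mul_self a)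
  rw [hc, CStarRing.norm_star_mul_self, ← sq] at h2
  exact (sq_le_sq₀ (h0 a) (norm_nonneg a)).1 h2

variable {nu : A ⊗[ℂ] B → ℝ}

lemma IsCStarNorm.one_le (h : IsCStarNorm nu) : nu 1 ≤ 1 := by
  have h1 := h.cstar 1
  have h2 : tensorStar A B 1 = 1 := by simp [Algebra.TensorProduct.one_def]
  rw [h2, mul_one] at h1
  nlinarith [h.nonneg 1]

lemma IsCStarNorm.tmul_le (h : IsCStarNorm nu) (a : A) (b : B) :
    nu (a ⊗ₜ b) ≤ ‖a‖ * ‖b‖ := by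
  have h1 : nu (a ⊗ₜ 1) ≤ ‖a‖ := by
    refine cstar_seminorm_le (fun a => nu (a ⊗ₜ 1)) (fun _ => h.nonneg _) ?_ ?_ h.one_le ?_ a
    · intro a a'; rw [TensorProduct.add_tmul]; exact h.add_le _ _
    · intro c a; rw [← TensorProduct.smul_tmul']; exact h.smul_eq _ _
    · intro a; rw [← h.cstar]; simp
  have h2 : nu ((1 : A) ⊗ₜ b) ≤ ‖b‖ := by
    refine cstar_seminorm_le (fun b => nu ((1 : A) ⊗ₜ b)) (fun _ => h.nonneg _) ?_ ?_ h.one_le ?_ b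
    · intro a a'; rw [TensorProduct.tmul_add]; exact h.add_le _ _
    · intro c a; rw [TensorProduct.tmul_smul]; exact h.smul_eq _ _
    · intro a; rw [← h.cstar]; simp
  calc nu (a ⊗ₜ b) = nu ((a ⊗ₜ 1) * ((1 : A) ⊗ₜ b)) := by simp
    _ ≤ _ := h.mul_le _ _
    _ ≤ _ := by gcongr; exact h.nonneg _

lemma exists_norming [Nontrivial A] (a : A) : ∃ (r : CRep A) (ξ : r.H), ‖ξ‖ = 1 ∧
    ‖r.π a ξ‖ = ‖a‖ := by
  obtain ⟨r, ξ, _, h⟩ := exists_irred a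
  exact ⟨r, ξ, h⟩

lemma tmul_ne_zero' (a : A) (b : B) (ha : a ≠ 0) (hb : b ≠ 0) : a ⊗ₜ[ℂ] b ≠ 0 := by
  intro h
  have : Nontrivial A := ⟨a, 0, ha⟩
  have : Nontrivial B := ⟨b, 0, hb⟩
  obtain ⟨r, ξ, hξ, hr⟩ := exists_norming a
  obtain ⟨s, η, hη, hs⟩ := exists_norming b
  have h1 := congrArg norm (tau_tmul_tm r s a b ξ η)
  rw [norm_tm, hr, hs, h] at h1
  simp [ha, hb] at h1

/-- If `1` is in the spectrum of the self-adjoint `c`, there are `e, f` with `e c f = f ≠ 0` and `‖e‖`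
almost `1`. -/
lemma exists_local_unit (c : A) (hc : IsSelfAdjoint c) (h1 : (1 : ℝ) ∈ spectrum ℝ c) (δ : ℝ)
    (hδ : 0 < δ) (hδ1 : δ < 1) : ∃ e f : A, e * c * f = f ∧ ‖e‖ ≤ (1 - δ)⁻¹ ∧ f ≠ 0 := by
  have hδ' : 0 < 1 - δ := by linarith
  have hmax : ∀ t : ℝ, max t (1 - δ) ≠ 0 := fun t => (lt_max_of_lt_right hδ').ne'
  have he : Continuous fun t : ℝ => (max t (1 - δ))⁻¹ :=
    Continuous.inv₀ (by fun_prop) hmax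
  have hf : Continuous fun t : ℝ => max 0 (t - (1 - δ)) := by fun_prop
  refine ⟨cfc (fun t : ℝ => (max t (1 - δ))⁻¹) c, cfc (fun t : ℝ => max 0 (t - (1 - δ))) c,
    ?_, ?_, ?_⟩
  · have hid : cfc (fun t : ℝ => t) c = c := cfc_id' ℝ c
    calc _ = cfc (fun t : ℝ => (max t (1 - δ))⁻¹) c * cfc (fun t : ℝ => t) c *
          cfc (fun t : ℝ => max 0 (t - (1 - δ))) c := by rw [hid]
      _ = cfc (fun t : ℝ => (max t (1 - δ))⁻¹ * t * max 0 (t - (1 - δ))) c := by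
          rw [cfc_mul (fun t => (max t (1 - δ))⁻¹ * t) _ c (he.mul continuous_id).continuousOn
            hf.continuousOn, cfc_mul _ _ c he.continuousOn]
      _ = _ := by
          congr 1
          funext t
          rcases le_or_gt t (1 - δ) with h | h
          · rw [max_eq_left (by linarith : t - (1 - δ) ≤ 0)]; simp
          · rw [max_eq_left h.le, inv_mul_cancel₀ (by linarith), one_mul]
  · refine norm_cfc_le (by positivity) fun t _ => ?_
    rw [Real.norm_of_nonneg (by positivity)]
    gcongr
    exact le_max_right _ _
  · intro h0
    have := norm_apply_le_norm_cfc (fun t : ℝ => max 0 (t - (1 - δ))) c h1 hf.continuousOn hc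
    rw [h0, norm_zero] at this
    have h2 := norm_le_zero_iff.1 this
    simp at h2
    linarith

lemma IsCStarNorm.one_le_tmul (h : IsCStarNorm nu) (c : A) (d : B) (hc : IsSelfAdjoint c)
    (hd : IsSelfAdjoint d) (hc1 : (1 : ℝ) ∈ spectrum ℝ c) (hd1 : (1 : ℝ) ∈ spectrum ℝ d) :
    1 ≤ nu (c ⊗ₜ d) := by
  have key : ∀ δ : ℝ, 0 < δ → δ < 1 → (1 - δ) ^ 2 ≤ nu (c ⊗ₜ d) := by
    intro δ h0 h1
    have hδ' : 0 < 1 - δ := by linarith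
    obtain ⟨e, f, hef, he, hf⟩ := exists_local_unit c hc hc1 δ h0 h1
    obtain ⟨e', f', hef', he', hf'⟩ := exists_local_unit d hd hd1 δ h0 h1
    have h2 : (e ⊗ₜ[ℂ] e') * (c ⊗ₜ d) * (f ⊗ₜ f') = f ⊗ₜ f' := by simp [hef, hef']
    have h3 : 0 < nu (f ⊗ₜ f') := lt_of_le_of_ne (h.nonneg _) (by
      intro h4; exact tmul_ne_zero' f f' hf hf' ((h.eq_zero_iff _).1 h4.symm))
    have h4 : nu (f ⊗ₜ f') ≤ ((1 - δ)⁻¹ * (1 - δ)⁻¹) * nu (c ⊗ₜ d) * nu (f ⊗ₜ f') := by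
      conv_lhs => rw [← h2]
      refine (h.mul_le _ _).trans ?_
      gcongr
      refine (h.mul_le _ _).trans ?_
      gcongr
      · exact h.nonneg _
      · refine (h.tmul_le _ _).trans ?_
        gcongr
    have h5 : 1 ≤ ((1 - δ)⁻¹ * (1 - δ)⁻¹) * nu (c ⊗ₜ d) := by
      by_contra hlt; push Not at hlt
      nlinarith
    field_simp at h5
    exact h5
  have : Tendsto (fun δ : ℝ => (1 - δ) ^ 2) (𝓝[>] 0) (𝓝 1) := by
    have h1 : Continuous fun δ : ℝ => (1 - δ) ^ 2 := by fun_prop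
    simpa using (h1.tendsto 0).mono_left nhdsWithin_le_nhds
  refine le_of_tendsto this ?_
  filter_upwards [Ioo_mem_nhdsGT (show (0 : ℝ) < 1 by norm_num)] with δ hδ
  exact key δ hδ.1 hδ.2

/-- The norm is controlled by the numerical radius. -/
lemma norm_le_of_numerical (y : A) (N : ℝ) (hN : 0 ≤ N)
    (h : ∀ (r : CRep A) (ζ : r.H), ‖inner ℂ ζ (r.π y ζ)‖ ≤ N * ‖ζ‖ ^ 2) : ‖y‖ ≤ 2 * N := by
  by_cases hy : y = 0
  · rw [hy, norm_zero]; positivity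
  have : Nontrivial A := ⟨y, 0, hy⟩
  have hy0 : 0 < ‖y‖ := norm_pos_iff.2 hy
  obtain ⟨r, ξ, hξ, hr⟩ := exists_norming y
  set x : r.H := ((‖y‖⁻¹ : ℝ) : ℂ) • r.π y ξ with hx
  have hx1 : ‖x‖ = 1 := by
    rw [hx, norm_smul, hr]; simp; field_simp
  have h1 : ‖inner ℂ (r.π y ξ) x‖ = ‖y‖ := by
    rw [hx, inner_smul_right, inner_self_eq_norm_sq_to_K, hr]
    simp; field_simp
  have h2 := inner_map_polarization (r.π y : r.H →ₗ[ℂ] r.H) x ξ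
  simp only [ContinuousLinearMap.coe_coe] at h2
  rw [← h1, h2]
  have hb : ∀ ζ : r.H, ‖inner ℂ (r.π y ζ) ζ‖ ≤ N * ‖ζ‖ ^ 2 := by
    intro ζ; rw [norm_inner_symm]; exact h r ζ
  have par := parallelogram_law_with_norm ℂ x ξ
  have par2 := parallelogram_law_with_norm ℂ x (Complex.I • ξ)
  have hI : ‖Complex.I • ξ‖ = 1 := by rw [norm_smul, hξ]; simp
  rw [hx1, hξ] at par
  rw [hx1, hI] at par2
  have b1 := hb (x + ξ)
  have b2 := hb (x - ξ)
  have b3 := hb (x + Complex.I • ξ)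
  have b4 := hb (x - Complex.I • ξ)
  have tri : ∀ a b c d : ℂ, ‖(a - b + Complex.I * c - Complex.I * d) / 4‖ ≤
      (‖a‖ + ‖b‖ + ‖c‖ + ‖d‖) / 4 := by
    intro a b c d
    rw [norm_div]
    simp only [Complex.norm_ofNat]
    gcongr
    refine (norm_sub_le _ _).trans ?_
    refine add_le_add ((norm_add_le _ _).trans (add_le_add (norm_sub_le _ _) ?_)) ?_ <;> simp
  refine (tri _ _ _ _).trans ?_
  nlinarith

lemma exists_bump [Nontrivial A] (h : A) (hh : IsSelfAdjoint h) (η : ℝ) (hη : 0 < η) :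
    ∃ c : A, IsSelfAdjoint c ∧ ‖c‖ ≤ 1 ∧ (1 : ℝ) ∈ spectrum ℝ c ∧
      ∀ (r r' : CRep A) (ζ : r.H) (ξ : r'.H), ‖ξ‖ = 1 →
        ((inner ℂ ξ (r'.π h ξ) : ℂ).re - η) * ‖r.π c ζ‖ ^ 2 ≤
          (inner ℂ (r.π c ζ) (r.π h (r.π c ζ)) : ℂ).re := by
  let _ := CStarAlgebra.spectralOrder A
  have _ := CStarAlgebra.spectralOrderedRing A
  set K := ‖h‖ with hK
  set h' := h + algebraMap ℝ A K with hh'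
  have hsa' : IsSelfAdjoint h' := hh.add (IsSelfAdjoint.algebraMap A (IsSelfAdjoint.all K))
  have hpos : 0 ≤ h' := by
    have := IsSelfAdjoint.neg_algebraMap_norm_le_self (a := h) (ha := hh)
    rw [hh']; exact neg_le_iff_add_nonneg.1 this
  set M := ‖h'‖ with hM
  have hspec : M ∈ spectrum ℝ h' := CStarAlgebra.norm_mem_spectrum_of_nonneg hpos
  have hf : Continuous fun t : ℝ => max 0 (1 - (M - t) / η) := by fun_prop
  set c := cfc (fun t : ℝ => max 0 (1 - (M - t) / η)) h' with hc
  have hcsa : IsSelfAdjoint c := cfc_predicate _ _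
  refine ⟨c, hcsa, ?_, ?_, ?_⟩
  · refine norm_cfc_le (by norm_num) fun t ht => ?_
    have : t ≤ M := (le_abs_self t).trans (by simpa using spectrum.norm_le_norm_of_mem ht)
    rw [Real.norm_of_nonneg (by positivity)]
    refine max_le (by norm_num) ?_
    have : 0 ≤ (M - t) / η := div_nonneg (by linarith) hη.le
    linarith
  · rw [hc, cfc_map_spectrum _ h' hsa' hf.continuousOn]
    exact ⟨M, hspec, by simp⟩
  · intro r r' ζ ξ hξ
    have hg : Continuous fun t : ℝ => max 0 (1 - (M - t) / η) * (t - (M - η)) *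
      max 0 (1 - (M - t) / η) := by fun_prop
    have hpos2 : 0 ≤ c * (h' - algebraMap ℝ A (M - η)) * c := by
      have : c * (h' - algebraMap ℝ A (M - η)) * c = cfc (fun t : ℝ =>
          max 0 (1 - (M - t) / η) * (t - (M - η)) * max 0 (1 - (M - t) / η)) h' := by
        rw [cfc_mul (fun t : ℝ => max 0 (1 - (M - t) / η) * (t - (M - η))) _ h'
          (by fun_prop) hf.continuousOn, cfc_mul _ _ h' hf.continuousOn (by fun_prop),
          cfc_sub _ _ h' (by fun_prop) (by fun_prop), cfc_id' ℝ h', cfc_const _ h']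
      rw [this]
      refine cfc_nonneg fun t _ => ?_
      rcases le_or_gt t (M - η) with h1 | h1
      · have : 1 - (M - t) / η ≤ 0 := by
          rw [sub_nonpos, le_div_iff₀ hη]; linarith
        rw [max_eq_left this]; simp
      · have : 0 ≤ t - (M - η) := by linarith
        positivity
    obtain ⟨b, hb⟩ := CStarAlgebra.nonneg_iff_eq_star_mul_self.1 hpos2
    have h1 : (inner ℂ ζ (r.π (c * (h' - algebraMap ℝ A (M - η)) * c) ζ) : ℂ).re
        = ‖r.π b ζ‖ ^ 2 := by
      rw [hb, map_mul, mul_apply_eq_comp, ← r.inner_star', inner_self_eq_norm_sq_to_K]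
      norm_cast
    have h2 : (inner ℂ ζ (r.π (c * (h' - algebraMap ℝ A (M - η)) * c) ζ) : ℂ).re =
        (inner ℂ (r.π c ζ) (r.π h (r.π c ζ)) : ℂ).re + (K - (M - η)) * ‖r.π c ζ‖ ^ 2 := by
      have e1 : c * (h' - algebraMap ℝ A (M - η)) * c
          = star c * ((h + ((K - (M - η) : ℝ) : ℂ) • (1 : A)) * c) := by
        rw [hcsa.star_eq, hh', mul_assoc]
        congr 2
        rw [add_sub_assoc, ← map_sub, Algebra.algebraMap_eq_smul_one]
        congr 1
      rw [e1, map_mul, mul_apply_eq_comp, ← r.inner_star', map_mul, mul_apply_eq_comp, map_add,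
        map_smul, map_one, add_apply, inner_add_right]
      change (_ + inner ℂ (r.π c ζ) (((K - (M - η) : ℝ) : ℂ) • r.π c ζ) : ℂ).re = _
      rw [inner_smul_right, inner_self_eq_norm_sq_to_K]
      rw [Complex.add_re, Complex.re_ofReal_mul]
      congr 2
      norm_cast
    have h3 : (inner ℂ ξ (r'.π h ξ) : ℂ).re + K ≤ M := by
      have h4 := (isState_vector r' ξ hξ).le h'
      have h5 : (inner ℂ ξ (r'.π h' ξ) : ℂ) = inner ℂ ξ (r'.π h ξ) + (K : ℂ) := by
        have : h' = h + (K : ℂ) • (1 : A) := by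
          rw [hh', Algebra.algebraMap_eq_smul_one]
          congr 1
        rw [this, (isState_vector r' ξ hξ).add, (isState_vector r' ξ hξ).smul,
          (isState_vector r' ξ hξ).one, mul_one]
      rw [h5] at h4
      have := (Complex.re_le_norm _).trans h4
      rwa [Complex.add_re, Complex.ofReal_re] at this
    have h6 : 0 ≤ ‖r.π c ζ‖ ^ 2 := by positivity
    have h7 : 0 ≤ ‖r.π b ζ‖ ^ 2 := by positivity
    nlinarith

end CStarNorms

/-! ### Excision of vector states -/

section Excision

variable {A B : Type} [CStarAlgebra A] [CStarAlgebra B]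

lemma CRep.norm_inner_le (r : CRep A) (a : A) (ξ : r.H) :
    ‖inner ℂ ξ (r.π a ξ)‖ ≤ ‖a‖ * ‖ξ‖ ^ 2 := by
  refine (norm_inner_le_norm _ _).trans ?_
  have := r.norm_apply_le a ξ
  nlinarith [norm_nonneg ξ]

lemma re_conj_sub_sq (s p m : ℂ) (R : ℝ) : ‖s - p‖ ^ 2 =
    (‖s‖ ^ 2 + 2 * R * (m * s).re) - (‖p‖ ^ 2 + 2 * R * (m * p).re) +
      2 * (((starRingEnd ℂ p + R * m) * p).re - ((starRingEnd ℂ p + R * m) * s).re) := by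
  rw [Complex.sq_norm, Complex.sq_norm, Complex.sq_norm]
  simp [Complex.normSq_apply]
  ring

/-- Finitely many elements can be simultaneously compressed to scalars `lam k` by a self-adjoint
contraction `c` with `1` in its spectrum. The values come from vector states that nearly maximise a
strictly convex functional, and the linear part `mu` of that functional is arbitrary. -/
lemma excise [Nontrivial A] {ι : Type} [Fintype ι] (a : ι → A) (r₀ : CRep A) (ξ₀ : r₀.H)
    (hξ₀ : ‖ξ₀‖ = 1) (mu : ι → ℂ) (δ : ℝ) (hδ : 0 < δ) :
    ∃ (lam : ι → ℂ) (c : A), IsSelfAdjoint c ∧ ‖c‖ ≤ 1 ∧ (1 : ℝ) ∈ spectrum ℝ c ∧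
      (∀ k, ‖c * (a k - lam k • 1) * c‖ ≤ δ) ∧ (∀ k, ‖lam k‖ ≤ ‖a k‖) ∧
      (∑ k, mu k * inner ℂ ξ₀ (r₀.π (a k) ξ₀)).re - δ ≤ (∑ k, mu k * lam k).re := by
  set η : ℝ := δ ^ 2 / 12 with hη
  have hη0 : 0 < η := by positivity
  set S : ℝ := ∑ k, ‖a k‖ ^ 2 with hS
  have hS0 : 0 ≤ S := by positivity
  set R : ℝ := (S + η) / (2 * δ) with hR
  have hR0 : 0 < R := by positivity
  set v : ∀ (r : CRep A), r.H → ι → ℂ := fun r ξ k => inner ℂ ξ (r.π (a k) ξ) with hv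
  -- `p` below is a near-maximum of the convex functional `G`; since `G s - G p` differs from the
  -- squared distance to `p` by an affine functional `L`, near-maximality of `L` forces closeness to `p`
  set G : (ι → ℂ) → ℝ := fun p => ∑ k, (‖p k‖ ^ 2 + 2 * R * (mu k * p k).re) with hG
  set P : Set ℝ := {t | ∃ (r : CRep A) (ξ : r.H), ‖ξ‖ = 1 ∧ t = G (v r ξ)} with hP
  have hvle : ∀ (r : CRep A) (ξ : r.H), ‖ξ‖ = 1 → ∀ k, ‖v r ξ k‖ ≤ ‖a k‖ := by
    intro r ξ h k
    have := r.norm_inner_le (a k) ξ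
    rwa [h, one_pow, mul_one] at this
  have hbdd : BddAbove P := by
    refine ⟨∑ k, (‖a k‖ ^ 2 + 2 * R * (‖mu k‖ * ‖a k‖)), ?_⟩
    rintro t ⟨r, ξ, h, rfl⟩
    refine Finset.sum_le_sum fun k _ => ?_
    have h1 := hvle r ξ h k
    gcongr
    refine (Complex.re_le_norm _).trans ?_
    rw [norm_mul]
    gcongr
  have hne : P.Nonempty := ⟨_, r₀, ξ₀, hξ₀, rfl⟩
  obtain ⟨t, ⟨r1, ξ1, h1, rfl⟩, ht⟩ := exists_lt_of_lt_csSup hne (show sSup P - η < sSup P by linarith)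
  set p := v r1 ξ1 with hp
  have hmax : ∀ (r : CRep A) (ξ : r.H), ‖ξ‖ = 1 → G (v r ξ) ≤ G p + η := by
    intro r ξ h
    have := le_csSup hbdd ⟨r, ξ, h, rfl⟩
    linarith
  set w : ι → ℂ := fun k => starRingEnd ℂ (p k) + R * mu k with hw
  set L : (ι → ℂ) → ℝ := fun s => ∑ k, (w k * s k).re with hL
  have hdist : ∀ s : ι → ℂ, ∑ k, ‖s k - p k‖ ^ 2 = G s - G p + 2 * (L p - L s) := by
    intro s
    rw [hG, hL]
    simp only [← Finset.sum_sub_distrib, Finset.mul_sum, ← Finset.sum_add_distrib]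
    exact Finset.sum_congr rfl fun k _ => re_conj_sub_sq _ _ _ _
  set g : A := ∑ k, w k • a k with hg
  set h : A := (2⁻¹ : ℂ) • (g + star g) with hh
  have hsa : IsSelfAdjoint h := by
    rw [IsSelfAdjoint, hh, star_smul, star_add, star_star, add_comm]
    simp
  have hval : ∀ (r : CRep A) (ξ : r.H), (inner ℂ ξ (r.π h ξ) : ℂ).re = L (v r ξ) := by
    intro r ξ
    have e1 : (inner ℂ ξ (r.π (star g) ξ) : ℂ) = starRingEnd ℂ (inner ℂ ξ (r.π g ξ)) := by
      rw [← r.inner_star', inner_conj_symm]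
    have e2 : (inner ℂ ξ (r.π g ξ) : ℂ) = ∑ k, w k * v r ξ k := by
      rw [hg, map_sum, sum_apply, inner_sum]
      refine Finset.sum_congr rfl fun k _ => ?_
      rw [map_smul]
      exact inner_smul_right _ _ _
    have e3 : (inner ℂ ξ (r.π h ξ) : ℂ) = 2⁻¹ * (inner ℂ ξ (r.π g ξ) + inner ℂ ξ (r.π (star g) ξ)) := by
      rw [hh, map_smul, map_add, ← inner_add_right]
      exact inner_smul_right _ _ _
    rw [e3, e1, e2, Complex.add_conj, hL]
    simp
  -- vectors in the range of `c` nearly maximise `h`, so their values are close to `p`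
  obtain ⟨c, hc, hc1, hcs, hcb⟩ := exists_bump h hsa η hη0
  refine ⟨p, c, hc, hc1, hcs, ?_, hvle r1 ξ1 h1, ?_⟩
  · intro k
    have hnum : ∀ (r : CRep A) (ζ : r.H),
        ‖inner ℂ ζ (r.π (c * (a k - p k • 1) * c) ζ)‖ ≤ (δ / 2) * ‖ζ‖ ^ 2 := by
      intro r ζ
      set x := r.π c ζ with hx
      have e0 : (inner ℂ ζ (r.π (c * (a k - p k • 1) * c) ζ) : ℂ) =
          inner ℂ x (r.π (a k) x) - p k * inner ℂ x x := by
        have : c * (a k - p k • 1) * c = star c * ((a k - p k • 1) * c) := by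
          rw [hc.star_eq, mul_assoc]
        rw [this, map_mul, mul_apply_eq_comp, ← r.inner_star', map_mul, mul_apply_eq_comp,
          map_sub, map_smul, map_one, ← inner_smul_right, ← inner_sub_right]
        rfl
      rw [e0]
      have hxle : ‖x‖ ≤ ‖ζ‖ := by
        refine (r.norm_apply_le c ζ).trans ?_
        nlinarith [norm_nonneg ζ]
      by_cases hx0 : x = 0
      · rw [hx0]; simp; positivity
      have hxp : 0 < ‖x‖ := norm_pos_iff.2 hx0
      set u : r.H := ((‖x‖⁻¹ : ℝ) : ℂ) • x with hu
      have hu1 : ‖u‖ = 1 := by rw [hu, norm_smul]; simp; field_simp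
      have hxu : x = ((‖x‖ : ℝ) : ℂ) • u := by
        rw [hu, smul_smul]; norm_cast; rw [mul_inv_cancel₀ hxp.ne']; simp
      have b1 := hcb r r1 ζ ξ1 h1
      rw [hval, hval, ← hx] at b1
      have hvx : ∀ j, v r x j = (‖x‖ ^ 2 : ℝ) * v r u j := by
        intro j
        have : v r x j = inner ℂ (((‖x‖ : ℝ) : ℂ) • u) (r.π (a j) (((‖x‖ : ℝ) : ℂ) • u)) := by
          rw [← hxu]
        rw [this, map_smul, inner_smul_left, inner_smul_right]
        simp [hv]; ring
      have hLx : L (v r x) = ‖x‖ ^ 2 * L (v r u) := by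
        rw [hL]; simp only [hvx, Finset.mul_sum]
        refine Finset.sum_congr rfl fun j _ => ?_
        rw [mul_left_comm, Complex.re_ofReal_mul]
      rw [hLx] at b1
      have b2 : L p - η ≤ L (v r u) := by
        have : 0 < ‖x‖ ^ 2 := by positivity
        nlinarith
      have b3 := hdist (v r u)
      have b4 := hmax r u hu1
      have b5 : ‖v r u k - p k‖ ^ 2 ≤ ∑ k, ‖v r u k - p k‖ ^ 2 :=
        Finset.single_le_sum (f := fun k => ‖v r u k - p k‖ ^ 2) (fun _ _ => by positivity)
          (Finset.mem_univ k)
      have b6 : ‖v r u k - p k‖ ≤ δ / 2 := by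
        refine abs_le_of_sq_le_sq' ?_ (by positivity) |>.2
        rw [hη] at *
        nlinarith
      have e2 : (inner ℂ x (r.π (a k) x) : ℂ) - p k * inner ℂ x x =
          (‖x‖ ^ 2 : ℝ) * (v r u k - p k) := by
        have := hvx k
        rw [inner_self_eq_norm_sq_to_K]
        change v r x k - p k * ((‖x‖ : ℝ) : ℂ) ^ 2 = _
        rw [this]; push_cast; ring
      rw [e2, norm_mul, Complex.norm_real, Real.norm_of_nonneg (by positivity), mul_comm]
      gcongr
    have := norm_le_of_numerical _ (δ / 2) (by positivity) hnum
    linarith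
  · have b := hmax r₀ ξ₀ hξ₀
    have hp2 : ∑ k, ‖p k‖ ^ 2 ≤ S := Finset.sum_le_sum fun k _ => by
      have := hvle r1 ξ1 h1 k
      gcongr
    have hv2 : 0 ≤ ∑ k, ‖v r₀ ξ₀ k‖ ^ 2 := by positivity
    have hGe : ∀ s : ι → ℂ, G s = ∑ k, ‖s k‖ ^ 2 + 2 * R * (∑ k, mu k * s k).re := by
      intro s
      simp only [hG, Finset.sum_add_distrib, Complex.re_sum, Finset.mul_sum]
    rw [hGe, hGe] at b
    have h2 : 2 * R * ((∑ k, mu k * v r₀ ξ₀ k).re - (∑ k, mu k * p k).re) ≤ 2 * R * δ := by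
      have : 2 * R * δ = S + η := by rw [hR]; field_simp
      rw [this]; linarith
    have := le_of_mul_le_mul_left h2 (by positivity)
    linarith

end Excision

/-! ### The minimal norm as a supremum of spatial norms -/

section Takesaki

variable {A B : Type} [CStarAlgebra A] [CStarAlgebra B] {nu : A ⊗[ℂ] B → ℝ}

lemma IsCStarNorm.zero (h : IsCStarNorm nu) : nu 0 = 0 := (h.eq_zero_iff 0).2 rfl

lemma IsCStarNorm.sum_le (h : IsCStarNorm nu) {ι : Type} (s : Finset ι) (f : ι → A ⊗[ℂ] B) :
    nu (∑ i ∈ s, f i) ≤ ∑ i ∈ s, nu (f i) :=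
  Finset.le_sum_of_subadditive nu h.zero.le h.add_le s f

lemma exists_sum_tmul (x : A ⊗[ℂ] B) : ∃ (n : ℕ) (a : Fin n → A) (b : Fin n → B),
    x = ∑ k, a k ⊗ₜ[ℂ] b k := by
  induction x using TensorProduct.induction_on with
  | zero => exact ⟨0, finZeroElim, finZeroElim, by simp⟩
  | tmul a b => exact ⟨1, fun _ => a, fun _ => b, by simp⟩
  | add x y hx hy =>
    obtain ⟨n, a, b, rfl⟩ := hx
    obtain ⟨m, c, d, rfl⟩ := hy
    exact ⟨n + m, Fin.append a c, Fin.append b d, by simp [Fin.sum_univ_add]⟩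

lemma CRep.nontrivial (r : CRep A) (ξ : r.H) (h : ξ ≠ 0) : Nontrivial A := by
  by_contra hn
  rw [not_nontrivial_iff_subsingleton] at hn
  have h1 : r.π 1 ξ = ξ := by rw [map_one]; rfl
  rw [Subsingleton.elim (1 : A) 0, map_zero] at h1
  exact h h1.symm

/-- Product vector functionals are dominated by any C*-norm: both legs are excised to scalars. -/
lemma IsCStarNorm.product_vector_le (h : IsCStarNorm nu) (r : CRep A) (s : CRep B) (ξ : r.H)
    (η : s.H) (hξ : ‖ξ‖ = 1) (hη : ‖η‖ = 1) (x : A ⊗[ℂ] B) :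
    ‖(inner ℂ (tm ξ η) (tau r s x (tm ξ η)) : ℂ)‖ ≤ nu x := by
  have : Nontrivial A := r.nontrivial ξ (by rintro rfl; simp at hξ)
  have : Nontrivial B := s.nontrivial η (by rintro rfl; simp at hη)
  obtain ⟨n, a, b, rfl⟩ := exists_sum_tmul x
  set x := ∑ k, a k ⊗ₜ[ℂ] b k with hx
  set z : ℂ := inner ℂ (tm ξ η) (tau r s x (tm ξ η)) with hz
  have hz' : z = ∑ k, inner ℂ ξ (r.π (a k) ξ) * inner ℂ η (s.π (b k) η) := by
    rw [hz, hx, map_sum, sum_apply, inner_sum]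
    exact Finset.sum_congr rfl fun k _ => by rw [tau_tmul_tm, inner_tm]
  obtain ⟨θ, hθ, hθz⟩ : ∃ θ : ℂ, ‖θ‖ = 1 ∧ θ * z = ‖z‖ := by
    by_cases h0 : z = 0
    · exact ⟨1, by simp, by simp [h0]⟩
    · have : (‖z‖ : ℂ) ≠ 0 := by simpa using h0
      refine ⟨‖z‖ / z, by simp [h0], by field_simp⟩
  set M : ℝ := 2 + ∑ k, (‖a k‖ + ‖b k‖) with hM
  have hM0 : 0 < M := by positivity
  have key : ∀ δ : ℝ, 0 < δ → ‖z‖ ≤ nu x + δ * M := by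
    intro δ hδ
    -- replace the values of the `a k` by scalars that keep the functional large, then those of the `b k`
    obtain ⟨la, c, hc, hc1, hcs, hca, hla, hl⟩ := excise a r ξ hξ
      (fun k => θ * inner ℂ η (s.π (b k) η)) δ hδ
    obtain ⟨lb, d, hd, hd1, hds, hdb, hlb, hl'⟩ := excise b s η hη
      (fun k => θ * la k) δ hδ
    have e1 : (∑ k, θ * inner ℂ η (s.π (b k) η) * inner ℂ ξ (r.π (a k) ξ)).re = ‖z‖ := by
      have : (∑ k, θ * inner ℂ η (s.π (b k) η) * inner ℂ ξ (r.π (a k) ξ)) = θ * z := by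
        rw [hz', Finset.mul_sum]
        exact Finset.sum_congr rfl fun k _ => by ring
      rw [this, hθz, Complex.ofReal_re]
    have e2 : ∑ k, θ * la k * inner ℂ η (s.π (b k) η) =
        ∑ k, θ * inner ℂ η (s.π (b k) η) * la k := Finset.sum_congr rfl fun k _ => by ring
    rw [e1] at hl
    rw [e2] at hl'
    set Λ := ∑ k, la k * lb k with hΛ
    have e3 : (∑ k, θ * la k * lb k).re ≤ ‖Λ‖ := by
      have : ∑ k, θ * la k * lb k = θ * Λ := by
        rw [hΛ, Finset.mul_sum]
        exact Finset.sum_congr rfl fun k _ => by ring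
      rw [this]
      refine (Complex.re_le_norm _).trans ?_
      rw [norm_mul, hθ, one_mul]
    -- up to a small error, compressing `x` by `c ⊗ d` multiplies `c² ⊗ d²` by `Λ`
    have e4 : Λ • ((c * c) ⊗ₜ[ℂ] (d * d)) = (c ⊗ₜ d) * x * (c ⊗ₜ d) +
        ∑ k, (-1 : ℂ) • ((c * (a k - la k • 1) * c) ⊗ₜ[ℂ] (d * b k * d) +
          (la k • (c * c)) ⊗ₜ[ℂ] (d * (b k - lb k • 1) * d)) := by
      rw [hx, Finset.mul_sum, Finset.sum_mul, ← Finset.sum_add_distrib, hΛ, Finset.sum_smul]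
      refine Finset.sum_congr rfl fun k _ => ?_
      simp only [Algebra.TensorProduct.tmul_mul_tmul, mul_sub, sub_mul, TensorProduct.sub_tmul,
        TensorProduct.tmul_sub, mul_smul_comm, smul_mul_assoc, mul_one,
        ← TensorProduct.smul_tmul', TensorProduct.tmul_smul, smul_add, smul_sub, smul_smul]
      simp only [neg_mul, one_mul, neg_smul, one_smul]
      rw [mul_comm (lb k) (la k)]
      abel
    have e5 : 1 ≤ nu ((c * c) ⊗ₜ[ℂ] (d * d)) := by
      refine h.one_le_tmul _ _ (by simpa [hc.star_eq] using IsSelfAdjoint.star_mul_self c)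
        (by simpa [hd.star_eq] using IsSelfAdjoint.star_mul_self d) ?_ ?_
      · simpa [sq] using spectrum.pow_mem_pow c 2 hcs
      · simpa [sq] using spectrum.pow_mem_pow d 2 hds
    have hcd : nu (c ⊗ₜ d) ≤ 1 := (h.tmul_le c d).trans (mul_le_one₀ hc1 (norm_nonneg _) hd1)
    have e6 : nu ((c ⊗ₜ d) * x * (c ⊗ₜ d)) ≤ nu x := by
      have := h.nonneg x
      calc _ ≤ nu ((c ⊗ₜ d) * x) * nu (c ⊗ₜ d) := h.mul_le _ _
        _ ≤ (nu (c ⊗ₜ d) * nu x) * nu (c ⊗ₜ d) := by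
          gcongr
          · exact h.nonneg _
          · exact h.mul_le _ _
        _ ≤ (1 * nu x) * 1 := by gcongr; exact h.nonneg _
        _ = nu x := by ring
    have hdbd : ∀ k, ‖d * b k * d‖ ≤ ‖b k‖ := fun k => by
      calc _ ≤ ‖d‖ * ‖b k‖ * ‖d‖ := (norm_mul_le _ _).trans (by gcongr; exact norm_mul_le _ _)
        _ ≤ 1 * ‖b k‖ * 1 := by gcongr
        _ = _ := by ring
    have hcc : ∀ k, ‖la k • (c * c)‖ ≤ ‖a k‖ := fun k => by
      calc _ ≤ ‖la k‖ * (‖c‖ * ‖c‖) := by rw [norm_smul]; gcongr; exact norm_mul_le _ _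
        _ ≤ ‖a k‖ * (1 * 1) := by gcongr; exact hla k
        _ = _ := by ring
    have e7 : nu (∑ k, (-1 : ℂ) • ((c * (a k - la k • 1) * c) ⊗ₜ[ℂ] (d * b k * d) +
          (la k • (c * c)) ⊗ₜ[ℂ] (d * (b k - lb k • 1) * d))) ≤ δ * ∑ k, (‖a k‖ + ‖b k‖) := by
      rw [Finset.mul_sum]
      refine (h.sum_le _ _).trans (Finset.sum_le_sum fun k _ => ?_)
      rw [h.smul_eq, norm_neg, norm_one, one_mul]
      refine (h.add_le _ _).trans ?_
      have t1 : nu ((c * (a k - la k • 1) * c) ⊗ₜ[ℂ] (d * b k * d)) ≤ δ * ‖b k‖ :=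
        (h.tmul_le _ _).trans (mul_le_mul (hca k) (hdbd k) (norm_nonneg _) hδ.le)
      have t2 : nu ((la k • (c * c)) ⊗ₜ[ℂ] (d * (b k - lb k • 1) * d)) ≤ ‖a k‖ * δ :=
        (h.tmul_le _ _).trans (mul_le_mul (hcc k) (hdb k) (norm_nonneg _) (norm_nonneg _))
      linarith
    have e8 : ‖Λ‖ ≤ nu x + δ * ∑ k, (‖a k‖ + ‖b k‖) := by
      calc ‖Λ‖ ≤ ‖Λ‖ * nu ((c * c) ⊗ₜ[ℂ] (d * d)) := le_mul_of_one_le_right (norm_nonneg _) e5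
        _ = nu (Λ • ((c * c) ⊗ₜ[ℂ] (d * d))) := (h.smul_eq _ _).symm
        _ ≤ _ := by rw [e4]; exact (h.add_le _ _).trans (add_le_add e6 e7)
    rw [hM]
    linarith
  refine le_of_forall_pos_le_add fun e he => ?_
  have := key (e / M) (by positivity)
  rwa [div_mul_cancel₀ _ hM0.ne'] at this

/-- Comparison of growth along the powers `2 ^ n`. -/
lemma le_of_pow_two_pow_le (u v C : ℝ) (hv : 0 ≤ v)
    (h : ∀ n : ℕ, u ^ 2 ^ n ≤ C * v ^ 2 ^ n) : u ≤ v := by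
  by_contra hlt
  push Not at hlt
  have hu : 0 < u := hv.trans_lt hlt
  have h1 : v / u < 1 := (div_lt_one hu).2 hlt
  have h2 : Tendsto (fun n : ℕ => C * (v / u) ^ 2 ^ n) atTop (𝓝 (C * 0)) := by
    refine ((tendsto_pow_atTop_nhds_zero_of_lt_one (by positivity) h1).comp ?_).const_mul C
    exact tendsto_pow_atTop_atTop_of_one_lt one_lt_two
  have h3 : (1 : ℝ) ≤ C * 0 := ge_of_tendsto' h2 fun n => by
    have := h n
    rw [div_pow, ← mul_div_assoc, le_div_iff₀ (by positivity)]
    linarith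
  norm_num at h3

lemma norm_inner_le_polarization {E : Type} [NormedAddCommGroup E] [InnerProductSpace ℂ E]
    (T : E →L[ℂ] E) (a b : E) : ‖(inner ℂ a (T b) : ℂ)‖ ≤
      (‖(inner ℂ (a + b) (T (a + b)) : ℂ)‖ + ‖(inner ℂ (a - b) (T (a - b)) : ℂ)‖ +
        ‖(inner ℂ (a + Complex.I • b) (T (a + Complex.I • b)) : ℂ)‖ +
        ‖(inner ℂ (a - Complex.I • b) (T (a - Complex.I • b)) : ℂ)‖) / 4 := by
  have pol : (inner ℂ a (T b) : ℂ) =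
      (inner ℂ (a + b) (T (a + b)) - inner ℂ (a - b) (T (a - b))
        - Complex.I * inner ℂ (a + Complex.I • b) (T (a + Complex.I • b))
        + Complex.I * inner ℂ (a - Complex.I • b) (T (a - Complex.I • b))) / 4 := by
    simp only [map_add, map_sub, map_smul, inner_add_left, inner_add_right, inner_sub_left,
      inner_sub_right, inner_smul_left, inner_smul_right, Complex.conj_I]
    ring_nf
    simp only [Complex.I_sq]
    ring
  have tri : ∀ a b c d : ℂ, ‖(a - b - Complex.I * c + Complex.I * d) / 4‖ ≤
      (‖a‖ + ‖b‖ + ‖c‖ + ‖d‖) / 4 := by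
    intro a b c d
    rw [norm_div]
    simp only [Complex.norm_ofNat]
    gcongr
    refine (norm_add_le _ _).trans ?_
    refine add_le_add ((norm_sub_le _ _).trans (add_le_add (norm_sub_le _ _) ?_)) ?_ <;> simp
  rw [pol]
  exact tri _ _ _ _

lemma IsCStarNorm.product_vector_bound (h : IsCStarNorm nu) (r : CRep A) (s : CRep B) (ξ : r.H)
    (η : s.H) : ∃ C : ℝ, ∀ x, ‖(inner ℂ (tm ξ η) (tau r s x (tm ξ η)) : ℂ)‖ ≤ C * nu x := by
  refine ⟨(‖ξ‖ * ‖η‖) ^ 2, fun x => ?_⟩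
  by_cases h1 : ξ = 0
  · simp [h1]
  by_cases h2 : η = 0
  · simp [h2]
  have h1' : 0 < ‖ξ‖ := norm_pos_iff.2 h1
  have h2' : 0 < ‖η‖ := norm_pos_iff.2 h2
  set u : r.H := ((‖ξ‖⁻¹ : ℝ) : ℂ) • ξ with hu
  set w : s.H := ((‖η‖⁻¹ : ℝ) : ℂ) • η with hw
  have hu1 : ‖u‖ = 1 := by rw [hu, norm_smul]; simp; field_simp
  have hw1 : ‖w‖ = 1 := by rw [hw, norm_smul]; simp; field_simp
  have e : tm ξ η = ((‖ξ‖ * ‖η‖ : ℝ) : ℂ) • tm u w := by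
    have : ((‖ξ‖ : ℝ) : ℂ) ≠ 0 := by simpa using h1
    have : ((‖η‖ : ℝ) : ℂ) ≠ 0 := by simpa using h2
    rw [hu, hw, map_smul, map_smul, LinearMap.smul_apply, smul_smul, smul_smul]
    push_cast
    field_simp
    simp
  clear_value u w
  have key := h.product_vector_le r s u w hu1 hw1 x
  rw [e, map_smul, inner_smul_left, inner_smul_right, norm_mul, norm_mul, Complex.conj_ofReal,
    Complex.norm_real, Real.norm_of_nonneg (by positivity), ← mul_assoc, ← sq]
  gcongr

lemma IsCStarNorm.matrix_bound (h : IsCStarNorm nu) (r : CRep A) (s : CRep B) (ζ ζ' : HT r.H s.H) :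
    ∃ C : ℝ, ∀ x, ‖(inner ℂ ζ (tau r s x ζ') : ℂ)‖ ≤ C * nu x := by
  have step1 : ∀ (ξ ξ' : r.H) (η : s.H),
      ∃ C : ℝ, ∀ x, ‖(inner ℂ (tm ξ η) (tau r s x (tm ξ' η)) : ℂ)‖ ≤ C * nu x := by
    intro ξ ξ' η
    obtain ⟨C1, h1⟩ := h.product_vector_bound r s (ξ + ξ') η
    obtain ⟨C2, h2⟩ := h.product_vector_bound r s (ξ - ξ') η
    obtain ⟨C3, h3⟩ := h.product_vector_bound r s (ξ + Complex.I • ξ') η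
    obtain ⟨C4, h4⟩ := h.product_vector_bound r s (ξ - Complex.I • ξ') η
    refine ⟨(C1 + C2 + C3 + C4) / 4, fun x => ?_⟩
    refine (norm_inner_le_polarization (tau r s x) (tm ξ η) (tm ξ' η)).trans ?_
    have k1 := h1 x
    have k2 := h2 x
    have k3 := h3 x
    have k4 := h4 x
    rw [map_add, LinearMap.add_apply] at k1
    rw [map_sub, LinearMap.sub_apply] at k2
    rw [map_add, map_smul, LinearMap.add_apply, LinearMap.smul_apply] at k3
    rw [map_sub, map_smul, LinearMap.sub_apply, LinearMap.smul_apply] at k4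
    linarith
  have step2 : ∀ (ξ ξ' : r.H) (η η' : s.H),
      ∃ C : ℝ, ∀ x, ‖(inner ℂ (tm ξ η) (tau r s x (tm ξ' η')) : ℂ)‖ ≤ C * nu x := by
    intro ξ ξ' η η'
    obtain ⟨C1, h1⟩ := step1 ξ ξ' (η + η')
    obtain ⟨C2, h2⟩ := step1 ξ ξ' (η - η')
    obtain ⟨C3, h3⟩ := step1 ξ ξ' (η + Complex.I • η')
    obtain ⟨C4, h4⟩ := step1 ξ ξ' (η - Complex.I • η')
    refine ⟨(C1 + C2 + C3 + C4) / 4, fun x => ?_⟩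
    simp only [inner_tau_slice, CRep.coeff_apply] at h1 h2 h3 h4 ⊢
    refine (norm_inner_le_polarization (s.π _) η η').trans ?_
    linarith [h1 x, h2 x, h3 x, h4 x]
  have hν := h.nonneg
  induction ζ using HT.induction with
  | h0 => exact ⟨0, by simp⟩
  | ha a b iha ihb =>
    obtain ⟨C, hC⟩ := iha
    obtain ⟨D, hD⟩ := ihb
    refine ⟨C + D, fun x => ?_⟩
    rw [inner_add_left, add_mul]
    exact (norm_add_le _ _).trans (add_le_add (hC x) (hD x))
  | ht ξ η =>
    induction ζ' using HT.induction with
    | h0 => exact ⟨0, by simp⟩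
    | ha a b iha ihb =>
      obtain ⟨C, hC⟩ := iha
      obtain ⟨D, hD⟩ := ihb
      refine ⟨C + D, fun x => ?_⟩
      rw [map_add, inner_add_right, add_mul]
      exact (norm_add_le _ _).trans (add_le_add (hC x) (hD x))
    | ht ξ' η' => exact step2 ξ ξ' η η'

/-- The iterates `z ↦ z⋆ z`. -/
def sqIter (x : A ⊗[ℂ] B) : ℕ → A ⊗[ℂ] B
  | 0 => x
  | n + 1 => tensorStar A B (sqIter x n) * sqIter x n

lemma IsCStarNorm.sqIter_eq (h : IsCStarNorm nu) (x : A ⊗[ℂ] B) (n : ℕ) :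
    nu (sqIter x n) = nu x ^ 2 ^ n := by
  induction n with
  | zero => simp [sqIter]
  | succ n ih => rw [sqIter, h.cstar, ih, ← pow_mul, pow_succ]

lemma IsCStarNorm.tau_le (h : IsCStarNorm nu) (r : CRep A) (s : CRep B) (x : A ⊗[ℂ] B) :
    ‖tau r s x‖ ≤ nu x := by
  have hu : ∀ ζ : HT r.H s.H, ‖ζ‖ = 1 → ‖tau r s x ζ‖ ≤ nu x := by
    intro ζ hζ
    obtain ⟨C, hC⟩ := h.matrix_bound r s ζ ζ
    have hsq : ∀ n, ((‖tau r s (sqIter x n) ζ‖ ^ 2 : ℝ) : ℂ) =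
        inner ℂ ζ (tau r s (sqIter x (n + 1)) ζ) := fun n => tau_norm_sq _ _ _ _
    have hstep : ∀ n, ‖tau r s (sqIter x n) ζ‖ ^ 2 ≤ ‖tau r s (sqIter x (n + 1)) ζ‖ := by
      intro n
      have h1 := norm_inner_le_norm (𝕜 := ℂ) ζ (tau r s (sqIter x (n + 1)) ζ)
      rw [← hsq, Complex.norm_real, Real.norm_of_nonneg (by positivity), hζ, one_mul] at h1
      exact h1
    have hpow : ∀ n, ‖tau r s x ζ‖ ^ 2 ^ n ≤ ‖tau r s (sqIter x n) ζ‖ := by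
      intro n
      induction n with
      | zero => simp [sqIter]
      | succ n ih =>
        rw [pow_succ, pow_mul]
        exact (pow_le_pow_left₀ (by positivity) ih 2).trans (hstep n)
    have key : ‖tau r s x ζ‖ ^ 2 ≤ nu x ^ 2 := by
      refine le_of_pow_two_pow_le _ _ C (by positivity) fun n => ?_
      have h1 := hC (sqIter x (n + 1))
      rw [← hsq, Complex.norm_real, Real.norm_of_nonneg (by positivity), h.sqIter_eq] at h1
      have h2 := pow_le_pow_left₀ (by positivity) (hpow n) 2
      rw [← pow_mul, mul_comm, ← pow_succ]
      rw [← pow_mul, mul_comm 2, ← pow_succ]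
      rw [← pow_mul, ← pow_succ] at h2
      linarith
    exact (sq_le_sq₀ (norm_nonneg _) (h.nonneg x)).1 key
  refine ContinuousLinearMap.opNorm_le_bound _ (h.nonneg x) fun ζ => ?_
  by_cases h0 : ζ = 0
  · simp [h0]
  have hp : 0 < ‖ζ‖ := norm_pos_iff.2 h0
  have := hu (((‖ζ‖⁻¹ : ℝ) : ℂ) • ζ) (by rw [norm_smul]; simp; field_simp)
  rw [map_smul, norm_smul] at this
  simp at this
  field_simp at this
  linarith

lemma exists_isCStarNorm (A B : Type) [CStarAlgebra A] [CStarAlgebra B] :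
    ∃ nu : A ⊗[ℂ] B → ℝ, IsCStarNorm nu := by
  rcases subsingleton_or_nontrivial (A ⊗[ℂ] B) with h | h
  · exact ⟨fun _ => 0, fun x => ⟨fun _ => Subsingleton.elim _ _, fun _ => rfl⟩, by simp, by simp,
      by simp, by simp, by simp, by simp⟩
  · have : Nontrivial A := by
      by_contra hn
      rw [not_nontrivial_iff_subsingleton] at hn
      exact not_subsingleton (A ⊗[ℂ] B) inferInstance
    have : Nontrivial B := by
      by_contra hn
      rw [not_nontrivial_iff_subsingleton] at hn
      exact not_subsingleton (A ⊗[ℂ] B) inferInstance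
    exact ⟨_, isCStarNorm_sup (A := A) (B := B) faithful_irred faithful_irred nonempty_irred
      nonempty_irred⟩

/-- Spatial norms are dominated by the minimal norm. -/
lemma tau_le_minNorm (r : CRep A) (s : CRep B) (x : A ⊗[ℂ] B) : ‖tau r s x‖ ≤ minNorm A B x := by
  obtain ⟨nu, h⟩ := exists_isCStarNorm A B
  refine le_csInf ⟨_, nu, h, rfl⟩ ?_
  rintro _ ⟨nu, h, rfl⟩
  exact h.tau_le r s x

lemma minNorm_nonneg (x : A ⊗[ℂ] B) : 0 ≤ minNorm A B x :=
  Real.sInf_nonneg (by rintro _ ⟨nu, h, rfl⟩; exact h.nonneg x)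

lemma minNorm_of_subsingleton [Subsingleton (A ⊗[ℂ] B)] (x : A ⊗[ℂ] B) : minNorm A B x = 0 := by
  obtain ⟨nu, h⟩ := exists_isCStarNorm A B
  refine le_antisymm ((minNorm_le h x).trans ?_) (minNorm_nonneg x)
  rw [Subsingleton.elim x 0, h.zero]

lemma minNorm_le_of_faithful' {F : Set (CRep A)} {G : Set (CRep B)} (hF : Faithful F)
    (hG : Faithful G) (x : A ⊗[ℂ] B) (M : ℝ) (hM0 : 0 ≤ M)
    (hM : ∀ r ∈ F, ∀ s ∈ G, ‖tau r s x‖ ≤ M) : minNorm A B x ≤ M := by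
  rcases F.eq_empty_or_nonempty with rfl | hF0
  · have : Subsingleton A := ⟨fun a b => by
      have ha := hF a (by simp)
      have hb := hF b (by simp)
      rw [ha, hb]⟩
    rw [minNorm_of_subsingleton]; exact hM0
  rcases G.eq_empty_or_nonempty with rfl | hG0
  · have : Subsingleton B := ⟨fun a b => by
      have ha := hG a (by simp)
      have hb := hG b (by simp)
      rw [ha, hb]⟩
    rw [minNorm_of_subsingleton]; exact hM0
  exact minNorm_le_of_faithful hF hG hF0 hG0 x M hM

lemma minNorm_le_of_irred (x : A ⊗[ℂ] B) (M : ℝ) (hM0 : 0 ≤ M)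
    (hM : ∀ (r : CRep A) (s : CRep B), r.Irred → s.Irred → ‖tau r s x‖ ≤ M) :
    minNorm A B x ≤ M :=
  minNorm_le_of_faithful' faithful_irred faithful_irred x M hM0
    fun r hr s hs => hM r s hr hs

lemma isCStarNorm_minNorm (A B : Type) [CStarAlgebra A] [CStarAlgebra B] :
    IsCStarNorm (minNorm A B) := by
  rcases subsingleton_or_nontrivial (A ⊗[ℂ] B) with h | h
  · have : minNorm A B = fun _ => 0 := funext fun x => minNorm_of_subsingleton x
    rw [this]
    exact ⟨fun x => ⟨fun _ => Subsingleton.elim _ _, fun _ => rfl⟩, by simp, by simp,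
      by simp, by simp, by simp, by simp⟩
  · have : Nontrivial A := by
      by_contra hn
      rw [not_nontrivial_iff_subsingleton] at hn
      exact not_subsingleton (A ⊗[ℂ] B) inferInstance
    have : Nontrivial B := by
      by_contra hn
      rw [not_nontrivial_iff_subsingleton] at hn
      exact not_subsingleton (A ⊗[ℂ] B) inferInstance
    have hs := isCStarNorm_sup (A := A) (B := B) faithful_irred faithful_irred nonempty_irred
      nonempty_irred
    have : minNorm A B = _ := funext fun x => le_antisymm (minNorm_le hs x)
      (Real.iSup_le (fun p => tau_le_minNorm _ _ x) (minNorm_nonneg x))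
    rw [this]
    exact hs

/-- Restriction of a representation along a *-homomorphism. -/
def CRep.comp {C : Type} [CStarAlgebra C] (r : CRep C) (j : A →⋆ₐ[ℂ] C) : CRep A :=
  { r with π := r.π.comp j }

/-- The minimal tensor norm is injective. -/
lemma minNorm_map {C D : Type} [CStarAlgebra C] [CStarAlgebra D] (j : A →⋆ₐ[ℂ] C)
    (k : B →⋆ₐ[ℂ] D) (hj : Injective j) (hk : Injective k) {n : ℕ} (a : Fin n → A)
    (b : Fin n → B) : minNorm C D (∑ i, j (a i) ⊗ₜ[ℂ] k (b i)) =
      minNorm A B (∑ i, a i ⊗ₜ[ℂ] b i) := by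
  have key : ∀ (r : CRep C) (s : CRep D), ‖tau r s (∑ i, j (a i) ⊗ₜ[ℂ] k (b i))‖ =
      ‖tau (r.comp j) (s.comp k) (∑ i, a i ⊗ₜ[ℂ] b i)‖ := by
    intro r s
    rw [map_sum, map_sum]
    simp only [tau_tmul]
    rfl
  apply le_antisymm
  · refine minNorm_le_of_irred _ _ (minNorm_nonneg _) fun r s _ _ => ?_
    rw [key]
    exact tau_le_minNorm _ _ _
  · have hF : Faithful {r : CRep A | ∃ r' : CRep C, r = r'.comp j} := by
      intro x hx
      refine hj ?_
      rw [map_zero]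
      exact faithful_irred _ fun r' _ => hx (r'.comp j) ⟨r', rfl⟩
    have hG : Faithful {r : CRep B | ∃ r' : CRep D, r = r'.comp k} := by
      intro x hx
      refine hk ?_
      rw [map_zero]
      exact faithful_irred _ fun r' _ => hx (r'.comp k) ⟨r', rfl⟩
    refine minNorm_le_of_faithful' hF hG _ _ (minNorm_nonneg _) ?_
    rintro _ ⟨r, rfl⟩ _ ⟨s, rfl⟩
    rw [← key]
    exact tau_le_minNorm _ _ _

end Takesaki

/-! ### Ultraproducts of C*-algebras -/

section Ultraproduct

lemma exists_tendsto_of_bdd {I : Type} (U : Ultrafilter I) (f : I → ℝ) (M : ℝ)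
    (h : ∀ᶠ i in (U : Filter I), |f i| ≤ M) : ∃ L, Tendsto f U (𝓝 L) := by
  obtain ⟨L, _, hL⟩ := (isCompact_Icc (a := -M) (b := M)).ultrafilter_le_nhds (U.map f)
    (by
      rw [le_principal_iff]
      change ∀ᶠ i in (U : Filter I), f i ∈ Set.Icc (-M) M
      filter_upwards [h] with i hi
      exact abs_le.1 hi)
  exact ⟨L, hL⟩

variable {I : Type} (U : Ultrafilter I) (A : I → Type) [∀ i, CStarAlgebra (A i)]

/-- The *-algebra of bounded families. -/
def bddAlg : StarSubalgebra ℂ (∀ i, A i) where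
  carrier := {f | Bdd f}
  mul_mem' := by
    rintro f g ⟨M, hM⟩ ⟨N, hN⟩
    exact ⟨M * N, fun i => (norm_mul_le _ _).trans
      (mul_le_mul (hM i) (hN i) (norm_nonneg _) ((norm_nonneg _).trans (hM i)))⟩
  add_mem' := by
    rintro f g ⟨M, hM⟩ ⟨N, hN⟩
    exact ⟨M + N, fun i => (norm_add_le _ _).trans (add_le_add (hM i) (hN i))⟩
  algebraMap_mem' := by
    intro c
    refine ⟨‖c‖, fun i => ?_⟩
    rw [Pi.algebraMap_apply, Algebra.algebraMap_eq_smul_one, norm_smul]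
    have : ‖(1 : A i)‖ ≤ 1 := by
      rcases subsingleton_or_nontrivial (A i) with h | h
      · rw [Subsingleton.elim (1 : A i) 0]; simp
      · simp
    nlinarith [norm_nonneg c]
  star_mem' := by
    rintro f ⟨M, hM⟩
    exact ⟨M, fun i => by rw [Pi.star_apply, norm_star]; exact hM i⟩

/-- Bounded families, seminormed by the limit of the norms along the ultrafilter. -/
def BF (_ : Ultrafilter I) (A : I → Type) [∀ i, CStarAlgebra (A i)] : Type := bddAlg A

instance : Ring (BF U A) := inferInstanceAs (Ring (bddAlg A))
instance : StarRing (BF U A) := inferInstanceAs (StarRing (bddAlg A))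
instance : Algebra ℂ (BF U A) := inferInstanceAs (Algebra ℂ (bddAlg A))
instance : StarModule ℂ (BF U A) := inferInstanceAs (StarModule ℂ (bddAlg A))

variable {U A}

/-- The underlying family. -/
def BF.val (f : BF U A) : ∀ i, A i := (show bddAlg A from f).1

lemma BF.bdd (f : BF U A) : Bdd f.val := (show bddAlg A from f).2

/-- A bounded family, as an element of `BF`. -/
def BF.mk (f : ∀ i, A i) (h : Bdd f) : BF U A := (⟨f, h⟩ : bddAlg A)

@[simp] lemma BF.val_mk (f : ∀ i, A i) (h : Bdd f) : (BF.mk f h : BF U A).val = f := rfl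
@[simp] lemma BF.val_add (f g : BF U A) : (f + g).val = f.val + g.val := rfl
@[simp] lemma BF.val_sub (f g : BF U A) : (f - g).val = f.val - g.val := rfl
@[simp] lemma BF.val_neg (f : BF U A) : (-f).val = -f.val := rfl
@[simp] lemma BF.val_mul (f g : BF U A) : (f * g).val = f.val * g.val := rfl
@[simp] lemma BF.val_zero : (0 : BF U A).val = 0 := rfl
@[simp] lemma BF.val_one : (1 : BF U A).val = 1 := rfl
@[simp] lemma BF.val_star (f : BF U A) : (star f).val = star f.val := rfl
@[simp] lemma BF.val_smul (c : ℂ) (f : BF U A) : (c • f).val = c • f.val := rfl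

lemma BF.exists_lim (f : BF U A) : ∃ L, Tendsto (fun i => ‖f.val i‖) U (𝓝 L) := by
  obtain ⟨M, hM⟩ := f.bdd
  exact exists_tendsto_of_bdd U _ M (Eventually.of_forall fun i => by
    rw [abs_of_nonneg (norm_nonneg _)]; exact hM i)

instance : Norm (BF U A) := ⟨fun f => f.exists_lim.choose⟩

lemma BF.tendsto (f : BF U A) : Tendsto (fun i => ‖f.val i‖) U (𝓝 ‖f‖) :=
  f.exists_lim.choose_spec

lemma BF.norm_le (f : BF U A) (M : ℝ) (h : ∀ᶠ i in (U : Filter I), ‖f.val i‖ ≤ M) : ‖f‖ ≤ M :=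
  le_of_tendsto f.tendsto h

instance : SeminormedRing (BF U A) :=
  { (inferInstance : Ring (BF U A)), SeminormedAddCommGroup.ofCore (𝕜 := ℂ) (E := BF U A)
      { norm_nonneg := fun f => ge_of_tendsto' f.tendsto fun i => norm_nonneg _
        norm_smul := fun c f => tendsto_nhds_unique (c • f).tendsto (by
          simp only [BF.val_smul, Pi.smul_apply, norm_smul]
          exact f.tendsto.const_mul _)
        norm_triangle := fun f g => le_of_tendsto_of_tendsto' (f + g).tendsto
          (f.tendsto.add g.tendsto) fun i => norm_add_le _ _ } with
    norm_mul_le := fun f g => le_of_tendsto_of_tendsto' (f * g).tendsto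
          (f.tendsto.mul g.tendsto) fun i => norm_mul_le _ _ }

instance : NormedAlgebra ℂ (BF U A) :=
  { norm_smul_le := fun c f => le_of_eq (tendsto_nhds_unique (c • f).tendsto (by
      simp only [BF.val_smul, Pi.smul_apply, norm_smul]
      exact f.tendsto.const_mul _)) }

lemma BF.norm_star (f : BF U A) : ‖star f‖ = ‖f‖ :=
  tendsto_nhds_unique (star f).tendsto (by simpa using f.tendsto)

lemma BF.norm_mul_self_le (f : BF U A) : ‖f‖ * ‖f‖ ≤ ‖star f * f‖ :=
  le_of_tendsto_of_tendsto' (f.tendsto.mul f.tendsto) (star f * f).tendsto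
    fun i => CStarRing.norm_mul_self_le (f.val i)

instance : CompleteSpace (BF U A) := by
  refine Metric.complete_of_convergent_controlled_sequences (fun n => (1 / 2) ^ n) (by simp) ?_
  intro u hu
  set d : ℕ → ∀ i, A i := fun n i =>
    if ‖(u (n + 1)).val i - (u n).val i‖ ≤ (1 / 2) ^ n then (u (n + 1)).val i - (u n).val i else 0
    with hd
  have hdn : ∀ n i, ‖d n i‖ ≤ (1 / 2) ^ n := by
    intro n i
    simp only [hd]
    split_ifs with h
    · exact h
    · simp
  have hsum : ∀ i, Summable fun n => d n i := fun i =>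
    Summable.of_norm_bounded summable_geometric_two (fun n => hdn n i)
  obtain ⟨M, hM⟩ := (u 0).bdd
  have hts : ∀ i, ‖∑' n, d n i‖ ≤ 2 := fun i =>
    tsum_of_norm_bounded hasSum_geometric_two (fun n => hdn n i)
  set x : BF U A := BF.mk (fun i => (u 0).val i + ∑' n, d n i)
    ⟨M + 2, fun i => (norm_add_le _ _).trans (add_le_add (hM i) (hts i))⟩ with hx
  have hxv : ∀ i, x.val i = (u 0).val i + ∑' n, d n i := fun _ => rfl
  have hev : ∀ n, ∀ᶠ i in (U : Filter I), d n i = (u (n + 1)).val i - (u n).val i := by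
    intro n
    have h1 := hu n (n + 1) n (by omega) le_rfl
    rw [dist_eq_norm] at h1
    have h2 := (u (n + 1) - u n).tendsto.eventually (gt_mem_nhds h1)
    filter_upwards [h2] with i hi
    simp only [hd]
    rw [if_pos]
    exact le_of_lt hi
  have hev2 : ∀ n, ∀ᶠ i in (U : Filter I), (u n).val i = (u 0).val i + ∑ k ∈ Finset.range n, d k i := by
    intro n
    have : ∀ᶠ i in (U : Filter I), ∀ k ∈ Finset.range n, d k i = (u (k + 1)).val i - (u k).val i :=
      (Finset.eventually_all _).2 fun k _ => hev k
    filter_upwards [this] with i hi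
    rw [Finset.sum_congr rfl hi, Finset.sum_range_sub (fun k => (u k).val i)]
    abel
  refine ⟨x, ?_⟩
  rw [tendsto_iff_norm_sub_tendsto_zero]
  refine squeeze_zero (fun _ => norm_nonneg _) (g := fun n => 2 * (1 / 2) ^ n) ?_ ?_
  · intro n
    refine BF.norm_le _ _ ?_
    filter_upwards [hev2 n] with i hi
    have e : (u n - x).val i = - ∑' k, d (k + n) i := by
      rw [BF.val_sub, Pi.sub_apply, hi, hxv, ← (hsum i).sum_add_tsum_nat_add n]
      abel
    rw [e, norm_neg]
    refine tsum_of_norm_bounded (f := fun k => d (k + n) i) ?_ (fun k => hdn (k + n) i)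
    simp only [pow_add]
    exact hasSum_geometric_two.mul_right _
  · have := (tendsto_pow_atTop_nhds_zero_of_lt_one (r := (1 / 2 : ℝ)) (by norm_num)
      (by norm_num)).const_mul 2
    simpa using this

variable (U A)

/-- The C*-algebra ultraproduct. -/
def UProd : Type := SeparationQuotient (BF U A)

instance : NormedRing (UProd U A) :=
  { (inferInstance : NonUnitalNormedRing (SeparationQuotient (BF U A))),
    (inferInstance : Ring (SeparationQuotient (BF U A))) with }

instance : NormedAlgebra ℂ (UProd U A) :=
  inferInstanceAs (NormedAlgebra ℂ (SeparationQuotient (BF U A)))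

instance : CompleteSpace (UProd U A) :=
  inferInstanceAs (CompleteSpace (SeparationQuotient (BF U A)))

variable {U A}

/-- The quotient map. -/
def UProd.mk (f : BF U A) : UProd U A := SeparationQuotient.mk f

lemma UProd.mk_surj : Surjective (UProd.mk : BF U A → UProd U A) := SeparationQuotient.surjective_mk
lemma UProd.norm_mk (f : BF U A) : ‖UProd.mk f‖ = ‖f‖ := rfl
lemma UProd.mk_add (f g : BF U A) : UProd.mk (f + g) = UProd.mk f + UProd.mk g := rfl
lemma UProd.mk_sub (f g : BF U A) : UProd.mk (f - g) = UProd.mk f - UProd.mk g := rfl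
lemma UProd.mk_mul (f g : BF U A) : UProd.mk (f * g) = UProd.mk f * UProd.mk g := rfl
lemma UProd.mk_one : UProd.mk (1 : BF U A) = 1 := rfl
lemma UProd.mk_smul (c : ℂ) (f : BF U A) : UProd.mk (c • f) = c • UProd.mk f := rfl
lemma UProd.mk_eq {f g : BF U A} : UProd.mk f = UProd.mk g ↔ ‖f - g‖ = 0 := by
  rw [← UProd.norm_mk, norm_eq_zero, UProd.mk_sub, sub_eq_zero]

instance : Star (UProd U A) where
  star x := Quotient.liftOn x (fun f => UProd.mk (star f)) fun f g h => by
    have h1 : UProd.mk f = UProd.mk g := Quotient.sound h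
    rw [UProd.mk_eq] at h1
    change UProd.mk (star f) = UProd.mk (star g)
    rw [UProd.mk_eq, ← star_sub, BF.norm_star, h1]

lemma UProd.mk_star (f : BF U A) : UProd.mk (star f) = star (UProd.mk f) := rfl

instance : StarRing (UProd U A) where
  star_involutive x := by
    obtain ⟨f, rfl⟩ := UProd.mk_surj x
    rw [← UProd.mk_star, ← UProd.mk_star, star_star]
  star_mul x y := by
    obtain ⟨f, rfl⟩ := UProd.mk_surj x
    obtain ⟨g, rfl⟩ := UProd.mk_surj y
    rw [← UProd.mk_mul, ← UProd.mk_star, star_mul, UProd.mk_mul, UProd.mk_star, UProd.mk_star]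
  star_add x y := by
    obtain ⟨f, rfl⟩ := UProd.mk_surj x
    obtain ⟨g, rfl⟩ := UProd.mk_surj y
    rw [← UProd.mk_add, ← UProd.mk_star, star_add, UProd.mk_add, UProd.mk_star, UProd.mk_star]

instance : StarModule ℂ (UProd U A) where
  star_smul c x := by
    obtain ⟨f, rfl⟩ := UProd.mk_surj x
    rw [← UProd.mk_smul, ← UProd.mk_star, star_smul, UProd.mk_smul, UProd.mk_star]

instance : CStarRing (UProd U A) where
  norm_mul_self_le x := by
    obtain ⟨f, rfl⟩ := UProd.mk_surj x
    rw [← UProd.mk_star, ← UProd.mk_mul, UProd.norm_mk, UProd.norm_mk]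
    exact f.norm_mul_self_le

instance : CStarAlgebra (UProd U A) where

/-- The class of a bounded family, and `0` for an unbounded one. -/
def UProd.π (f : ∀ i, A i) : UProd U A :=
  open Classical in if h : Bdd f then UProd.mk (BF.mk f h) else 0

lemma UProd.π_of (f : ∀ i, A i) (h : Bdd f) : (UProd.π f : UProd U A) = UProd.mk (BF.mk f h) :=
  dif_pos h

lemma UProd.π_val (f : BF U A) : (UProd.π f.val : UProd U A) = UProd.mk f :=
  dif_pos f.bdd

lemma UProd.isCStarUltraproduct : IsCStarUltraproduct U A (UProd U A) UProd.π where
  map_one := by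
    have := UProd.π_val (1 : BF U A)
    exact this
  map_add f g hf hg := by
    rw [π_of f hf, π_of g hg, ← mk_add]; exact UProd.π_val (BF.mk f hf + BF.mk g hg)
  map_mul f g hf hg := by
    rw [π_of f hf, π_of g hg, ← mk_mul]; exact UProd.π_val (BF.mk f hf * BF.mk g hg)
  map_star f hf := by
    rw [π_of f hf, ← mk_star]; exact UProd.π_val (star (BF.mk f hf))
  map_smul c f hf := by
    rw [π_of f hf, ← mk_smul]; exact UProd.π_val (c • (BF.mk f hf))
  norm_eq f hf := by
    rw [π_of f hf, norm_mk]; exact (BF.mk f hf : BF U A).tendsto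
  surj b := by
    obtain ⟨f, rfl⟩ := UProd.mk_surj b
    rw [norm_mk]
    by_cases h0 : ‖f‖ = 0
    · refine ⟨0, by simp, ?_⟩
      have := UProd.π_val (0 : BF U A)
      refine this.trans ?_
      rw [UProd.mk_eq, zero_sub, norm_neg, h0]
    have hp : 0 < ‖f‖ := lt_of_le_of_ne (norm_nonneg _) (Ne.symm h0)
    set g : ∀ i, A i := fun i => ((‖f‖ / max ‖f‖ ‖f.val i‖ : ℝ) : ℂ) • f.val i with hg
    have hgn : ∀ i, ‖g i‖ ≤ ‖f‖ := by
      intro i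
      have hm : 0 < max ‖f‖ ‖f.val i‖ := lt_max_of_lt_left hp
      rw [hg, norm_smul, Complex.norm_real, Real.norm_of_nonneg (by positivity), div_mul_eq_mul_div,
        div_le_iff₀ hm]
      gcongr
      exact le_max_right _ _
    refine ⟨g, hgn, ?_⟩
    rw [π_of g ⟨_, hgn⟩, UProd.mk_eq]
    have h1 : Tendsto (fun i => |‖f‖ / max ‖f‖ ‖f.val i‖ - 1| * ‖f.val i‖) U
        (𝓝 (|‖f‖ / max ‖f‖ ‖f‖ - 1| * ‖f‖)) := by
      have hm : Tendsto (fun i => max ‖f‖ ‖f.val i‖) U (𝓝 (max ‖f‖ ‖f‖)) :=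
        tendsto_const_nhds.max f.tendsto
      refine Tendsto.mul (Tendsto.abs (Tendsto.sub_const (tendsto_const_nhds.div hm ?_) 1)) f.tendsto
      rw [max_self]; exact h0
    rw [max_self, div_self h0] at h1
    simp only [sub_self, abs_zero, zero_mul] at h1
    refine tendsto_nhds_unique (BF.tendsto _) (h1.congr fun i => ?_)
    have : (BF.mk g ⟨_, hgn⟩ - f).val i = ((‖f‖ / max ‖f‖ ‖f.val i‖ - 1 : ℝ) : ℂ) • f.val i := by
      rw [BF.val_sub]
      change g i - f.val i = _
      rw [hg, Complex.ofReal_sub, sub_smul]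
      simp
    rw [this, norm_smul, Complex.norm_real, Real.norm_eq_abs]

end Ultraproduct

/-! ### Łoś's theorem -/

section Los

lemma CTerm.exists_bound {n : ℕ} (t : CTerm n) : ∃ M : ℝ, ∀ (A : Type) [CStarAlgebra A]
    (a : Fin n → A), (∀ k, ‖a k‖ ≤ 1) → ‖t.eval a‖ ≤ M := by
  induction t with
  | var i =>
    refine ⟨1, fun A _ a h => ?_⟩
    rw [CTerm.eval]
    exact h i
  | one =>
    refine ⟨1, fun A _ a h => ?_⟩
    rw [CTerm.eval]
    rcases subsingleton_or_nontrivial A with h | h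
    · rw [Subsingleton.elim (1 : A) 0]; simp
    · simp
  | add s t hs ht =>
    obtain ⟨M, hM⟩ := hs
    obtain ⟨N, hN⟩ := ht
    refine ⟨M + N, fun A _ a h => ?_⟩
    rw [CTerm.eval]
    exact (norm_add_le _ _).trans (add_le_add (hM A a h) (hN A a h))
  | mul s t hs ht =>
    obtain ⟨M, hM⟩ := hs
    obtain ⟨N, hN⟩ := ht
    refine ⟨M * N, fun A _ a h => ?_⟩
    rw [CTerm.eval]
    exact (norm_mul_le _ _).trans (mul_le_mul (hM A a h) (hN A a h)
      (norm_nonneg _) ((norm_nonneg _).trans (hM A a h)))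
  | star t ht =>
    obtain ⟨M, hM⟩ := ht
    refine ⟨M, fun A _ a h => ?_⟩
    rw [CTerm.eval]
    exact (norm_star _).trans_le (hM A a h)
  | smul c t ht =>
    obtain ⟨M, hM⟩ := ht
    refine ⟨‖c‖ * M, fun A _ a h => ?_⟩
    rw [CTerm.eval, norm_smul]
    exact mul_le_mul_of_nonneg_left (hM A a h) (norm_nonneg _)

instance unitBall_nonempty (A : Type) [CStarAlgebra A] : Nonempty {x : A // ‖x‖ ≤ 1} :=
  ⟨⟨0, by simp⟩⟩

lemma norm_snoc_le {A : Type} [CStarAlgebra A] {n : ℕ} (a : Fin n → A) (b : A)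
    (ha : ∀ k, ‖a k‖ ≤ 1) (hb : ‖b‖ ≤ 1) :
    ∀ k, ‖(Fin.snoc a b : Fin (n + 1) → A) k‖ ≤ 1 := by
  intro k
  refine Fin.lastCases ?_ (fun k => ?_) k
  · simpa using hb
  · simpa using ha k

lemma Formula.exists_bound {n : ℕ} (phi : Formula n) : ∃ M : ℝ, ∀ (A : Type) [CStarAlgebra A]
    (a : Fin n → A), (∀ k, ‖a k‖ ≤ 1) → |phi.interp A a| ≤ M := by
  induction phi with
  | atom t =>
    obtain ⟨M, hM⟩ := t.exists_bound
    exact ⟨M, fun A _ a h => by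
      change |‖t.eval a‖| ≤ M
      rw [abs_norm]; exact hM A a h⟩
  | comb u hu phis ih =>
    choose M hM using ih
    obtain ⟨N, hN⟩ := (isCompact_univ_pi fun j => isCompact_Icc (a := -M j) (b := M j)).exists_bound_of_continuousOn
      hu.continuousOn
    exact ⟨N, fun A _ a h => hN _ fun j _ => abs_le.1 (hM j A a h)⟩
  | sup phi ih =>
    obtain ⟨M, hM⟩ := ih
    refine ⟨M, fun A _ a h => ?_⟩
    have hb : ∀ b : {x : A // ‖x‖ ≤ 1}, |phi.interp A (Fin.snoc a b.1)| ≤ M := fun b =>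
      hM A _ (norm_snoc_le a b.1 h b.2)
    refine abs_le.2 ⟨?_, ciSup_le fun b => (abs_le.1 (hb b)).2⟩
    exact le_ciSup_of_le ⟨M, by rintro _ ⟨b, rfl⟩; exact (abs_le.1 (hb b)).2⟩ ⟨0, by simp⟩
      (abs_le.1 (hb _)).1
  | inf phi ih =>
    obtain ⟨M, hM⟩ := ih
    refine ⟨M, fun A _ a h => ?_⟩
    have hb : ∀ b : {x : A // ‖x‖ ≤ 1}, |phi.interp A (Fin.snoc a b.1)| ≤ M := fun b =>
      hM A _ (norm_snoc_le a b.1 h b.2)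
    refine abs_le.2 ⟨le_ciInf fun b => (abs_le.1 (hb b)).1, ?_⟩
    exact ciInf_le_of_le ⟨-M, by rintro _ ⟨b, rfl⟩; exact (abs_le.1 (hb b)).1⟩ ⟨0, by simp⟩
      (abs_le.1 (hb _)).2

variable {I : Type} {U : Ultrafilter I} {A : I → Type} [∀ i, CStarAlgebra (A i)]

lemma UProd.lift_unit (b : UProd U A) (hb : ‖b‖ ≤ 1) :
    ∃ f : BF U A, (∀ i, ‖f.val i‖ ≤ 1) ∧ UProd.mk f = b := by
  obtain ⟨f, h1, h2⟩ := UProd.isCStarUltraproduct.surj b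
  have hf : Bdd f := ⟨_, h1⟩
  exact ⟨BF.mk f hf, fun i => (h1 i).trans hb, by rw [← h2, UProd.π_of f hf]⟩

/-- Suprema over unit balls commute with ultraproducts. -/
lemma tendsto_iSup_ball (p : ∀ i, A i → ℝ) (q : UProd U A → ℝ) (M : ℝ)
    (hp : ∀ i x, ‖x‖ ≤ 1 → |p i x| ≤ M) (hq : ∀ x, ‖x‖ ≤ 1 → |q x| ≤ M)
    (h : ∀ f : BF U A, (∀ i, ‖f.val i‖ ≤ 1) →
      Tendsto (fun i => p i (f.val i)) U (𝓝 (q (UProd.mk f)))) :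
    Tendsto (fun i => ⨆ b : {x : A i // ‖x‖ ≤ 1}, p i b.1) U
      (𝓝 (⨆ b : {x : UProd U A // ‖x‖ ≤ 1}, q b.1)) := by
  have hbp : ∀ i, BddAbove (Set.range fun b : {x : A i // ‖x‖ ≤ 1} => p i b.1) := fun i =>
    ⟨M, by rintro _ ⟨b, rfl⟩; exact (abs_le.1 (hp i b.1 b.2)).2⟩
  have hbq : BddAbove (Set.range fun b : {x : UProd U A // ‖x‖ ≤ 1} => q b.1) :=
    ⟨M, by rintro _ ⟨b, rfl⟩; exact (abs_le.1 (hq b.1 b.2)).2⟩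
  rw [tendsto_order]
  constructor
  · intro c hc
    obtain ⟨b, hb⟩ := exists_lt_of_lt_ciSup hc
    obtain ⟨f, hf, hfb⟩ := UProd.lift_unit b.1 b.2
    have := h f hf
    rw [hfb] at this
    filter_upwards [this.eventually (lt_mem_nhds hb)] with i hi
    exact hi.trans_le (le_ciSup (hbp i) ⟨f.val i, hf i⟩)
  · intro c hc
    obtain ⟨c', hc', hc''⟩ := exists_between hc
    have : ∀ i, ∃ b : {x : A i // ‖x‖ ≤ 1}, (⨆ b : {x : A i // ‖x‖ ≤ 1}, p i b.1) - (c - c') < p i b.1 :=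
      fun i => exists_lt_of_lt_ciSup (by linarith)
    choose b hb using this
    set f : BF U A := BF.mk (fun i => (b i).1) ⟨1, fun i => (b i).2⟩ with hf
    have hf1 : ∀ i, ‖f.val i‖ ≤ 1 := fun i => (b i).2
    have hle : q (UProd.mk f) < c' := by
      refine lt_of_le_of_lt (le_ciSup hbq ⟨UProd.mk f, ?_⟩) hc'
      exact BF.norm_le f 1 (Eventually.of_forall hf1)
    filter_upwards [(h f hf1).eventually (gt_mem_nhds hle)] with i hi
    have h1 : p i (b i).1 < c' := hi
    linarith [hb i]

lemma CTerm.eval_UProd {n : ℕ} (t : CTerm n) (a : Fin n → BF U A) :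
    ∃ f : BF U A, (∀ i, f.val i = t.eval fun k => (a k).val i) ∧
      UProd.mk f = t.eval fun k => UProd.mk (a k) := by
  induction t with
  | var k => exact ⟨a k, fun i => by simp only [CTerm.eval], by simp only [CTerm.eval]⟩
  | one =>
    refine ⟨1, fun i => ?_, ?_⟩
    · rw [CTerm.eval]; rfl
    · rw [CTerm.eval]; rfl
  | add s t hs ht =>
    obtain ⟨f, hf, hf'⟩ := hs
    obtain ⟨g, hg, hg'⟩ := ht
    refine ⟨f + g, fun i => ?_, ?_⟩
    · rw [BF.val_add, Pi.add_apply, hf, hg, CTerm.eval]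
    · rw [UProd.mk_add, hf', hg', CTerm.eval]
  | mul s t hs ht =>
    obtain ⟨f, hf, hf'⟩ := hs
    obtain ⟨g, hg, hg'⟩ := ht
    refine ⟨f * g, fun i => ?_, ?_⟩
    · rw [BF.val_mul, Pi.mul_apply, hf, hg, CTerm.eval]
    · rw [UProd.mk_mul, hf', hg', CTerm.eval]
  | star t ht =>
    obtain ⟨f, hf, hf'⟩ := ht
    refine ⟨Star.star f, fun i => ?_, ?_⟩
    · rw [BF.val_star, Pi.star_apply, hf, CTerm.eval]
    · rw [UProd.mk_star, hf', CTerm.eval]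
  | smul c t ht =>
    obtain ⟨f, hf, hf'⟩ := ht
    refine ⟨c • f, fun i => ?_, ?_⟩
    · rw [BF.val_smul, Pi.smul_apply, hf, CTerm.eval]
    · rw [UProd.mk_smul, hf', CTerm.eval]

/-- **Łoś's theorem** for the interpretation of formulas. -/
lemma Formula.los {n : ℕ} (phi : Formula n) (a : Fin n → BF U A)
    (ha : ∀ k i, ‖(a k).val i‖ ≤ 1) :
    Tendsto (fun i => phi.interp (A i) fun k => (a k).val i) U
      (𝓝 (phi.interp (UProd U A) fun k => UProd.mk (a k))) := by
  have hmk : ∀ f : BF U A, (∀ i, ‖f.val i‖ ≤ 1) → ‖UProd.mk f‖ ≤ 1 := fun f hf =>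
    BF.norm_le f 1 (Eventually.of_forall hf)
  have snoc1 : ∀ {n : ℕ} (a : Fin n → BF U A) (f : BF U A) (i : I),
      (fun k => ((Fin.snoc a f : Fin (n + 1) → BF U A) k).val i) =
        (Fin.snoc (fun k => (a k).val i) (f.val i) : Fin (n + 1) → A i) := by
    intro n a f i
    funext k
    refine Fin.lastCases ?_ (fun k => ?_) k <;> simp
  have snoc2 : ∀ {n : ℕ} (a : Fin n → BF U A) (f : BF U A),
      (fun k => UProd.mk ((Fin.snoc a f : Fin (n + 1) → BF U A) k)) =
        (Fin.snoc (fun k => UProd.mk (a k)) (UProd.mk f) : Fin (n + 1) → UProd U A) := by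
    intro n a f
    funext k
    refine Fin.lastCases ?_ (fun k => ?_) k <;> simp
  have snoc3 : ∀ {n : ℕ} (a : Fin n → BF U A) (f : BF U A), (∀ k i, ‖(a k).val i‖ ≤ 1) →
      (∀ i, ‖f.val i‖ ≤ 1) → ∀ k i, ‖((Fin.snoc a f : Fin (n + 1) → BF U A) k).val i‖ ≤ 1 := by
    intro n a f h1 h2 k i
    refine Fin.lastCases ?_ (fun k => ?_) k
    · simpa using h2 i
    · simpa using h1 k i
  induction phi with
  | atom t =>
    obtain ⟨f, hf, hf'⟩ := t.eval_UProd a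
    simp only [Formula.interp]
    rw [← hf']
    exact f.tendsto.congr fun i => by rw [hf]
  | comb u hu phis ih =>
    simp only [Formula.interp]
    exact (hu.tendsto _).comp (tendsto_pi_nhds.2 fun j => ih j a ha)
  | sup phi ih =>
    obtain ⟨M, hM⟩ := phi.exists_bound
    simp only [Formula.interp]
    refine tendsto_iSup_ball (fun i x => phi.interp (A i) (Fin.snoc (fun k => (a k).val i) x))
      (fun x => phi.interp (UProd U A) (Fin.snoc (fun k => UProd.mk (a k)) x)) M
      (fun i x hx => hM _ _ (norm_snoc_le _ _ (fun k => ha k i) hx))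
      (fun x hx => hM _ _ (norm_snoc_le _ _ (fun k => hmk _ (ha k)) hx)) fun f hf => ?_
    have := ih (Fin.snoc a f) (snoc3 a f ha hf)
    simpa only [snoc1, snoc2] using this
  | inf phi ih =>
    obtain ⟨M, hM⟩ := phi.exists_bound
    simp only [Formula.interp]
    have key := tendsto_iSup_ball
      (fun i x => - phi.interp (A i) (Fin.snoc (fun k => (a k).val i) x))
      (fun x => - phi.interp (UProd U A) (Fin.snoc (fun k => UProd.mk (a k)) x)) M
      (fun i x hx => by rw [abs_neg]; exact hM _ _ (norm_snoc_le _ _ (fun k => ha k i) hx))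
      (fun x hx => by rw [abs_neg]; exact hM _ _ (norm_snoc_le _ _ (fun k => hmk _ (ha k)) hx))
      fun f hf => (by
        have := ih (Fin.snoc a f) (snoc3 a f ha hf)
        simpa only [snoc1, snoc2] using this.neg)
    have inf_eq : ∀ {ι : Type} (f : ι → ℝ), ⨅ x, f x = - ⨆ x, - f x := by
      intro ι f
      rw [iInf, Real.sInf_def, iSup]
      congr 2
      ext t
      simp only [Set.mem_neg, Set.mem_range]
      exact exists_congr fun x => ⟨fun h => by linarith, fun h => by linarith⟩
    simp only [inf_eq]
    exact key.neg

lemma Models.uprod {T : CStarTheory} (h : ∀ i, Models (A i) T) : Models (UProd U A) T := by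
  intro σ hσ
  have := σ.los (U := U) (A := A) finZeroElim (fun k => k.elim0)
  have e : (fun k => UProd.mk ((finZeroElim : Fin 0 → BF U A) k)) = finZeroElim := Subsingleton.elim _ _
  rw [e] at this
  refine tendsto_nhds_unique this (tendsto_const_nhds.congr fun i => ?_)
  rw [← h i σ hσ]
  congr 1
  exact Subsingleton.elim _ _

/-- The *-homomorphism of ultrapowers induced by a map of index sets. -/
def UProd.reindex {I J D : Type} [CStarAlgebra D] (U : Ultrafilter I) (V : Ultrafilter J) (g : J → I)
    (h : Tendsto g V U) : UProd U (fun _ : I => D) →⋆ₐ[ℂ] UProd V (fun _ : J => D) := by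
  have hb : ∀ f : BF U (fun _ : I => D), Bdd (A := fun _ : J => D) fun j => f.val (g j) := fun f => by
    obtain ⟨M, hM⟩ := f.bdd
    exact ⟨M, fun j => hM (g j)⟩
  have hn : ∀ f : BF U (fun _ : I => D), ‖(BF.mk (fun j => f.val (g j)) (hb f) : BF V _)‖ = ‖f‖ :=
    fun f => tendsto_nhds_unique (BF.tendsto _) (f.tendsto.comp h)
  exact
  { toFun := fun x => Quotient.liftOn x
      (fun f => (UProd.mk (BF.mk (fun j => f.val (g j)) (hb f)) : UProd V (fun _ : J => D)))
      fun f f' hff => by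
        have h1 : UProd.mk f = UProd.mk f' := Quotient.sound hff
        rw [UProd.mk_eq] at h1
        rw [UProd.mk_eq, ← h1]
        exact hn (f - f')
    map_one' := rfl
    map_mul' := fun x y => by
      obtain ⟨f, rfl⟩ := UProd.mk_surj x
      obtain ⟨f', rfl⟩ := UProd.mk_surj y
      rfl
    map_zero' := rfl
    map_add' := fun x y => by
      obtain ⟨f, rfl⟩ := UProd.mk_surj x
      obtain ⟨f', rfl⟩ := UProd.mk_surj y
      rfl
    commutes' := fun c => rfl
    map_star' := fun x => by
      obtain ⟨f, rfl⟩ := UProd.mk_surj x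
      rfl }

lemma UProd.reindex_injective {I J D : Type} [CStarAlgebra D] (U : Ultrafilter I)
    (V : Ultrafilter J) (g : J → I) (h : Tendsto g V U) :
    Injective (UProd.reindex (D := D) U V g h) := by
  rw [injective_iff_map_eq_zero]
  intro x hx
  obtain ⟨f, rfl⟩ := UProd.mk_surj x
  rw [← norm_eq_zero] at hx ⊢
  rw [← hx]
  refine tendsto_nhds_unique (f.tendsto.comp h) ?_
  exact BF.tendsto (BF.mk (fun j => f.val (g j)) _)

end Los

/-! ### Irreducible representations of large dimension -/

section Large

variable {A : Type} [CStarAlgebra A]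

/-- `m` mutually orthogonal nonzero projections in the range of a representation. -/
structure CRep.IsFam (r : CRep A) {m : ℕ} (p : Fin m → (r.H →L[ℂ] r.H)) : Prop where
  mem : ∀ i, p i ∈ StarAlgHom.range r.π
  sa : ∀ i, star (p i) = p i
  idem : ∀ i, p i * p i = p i
  orth : ∀ i j, i ≠ j → p i * p j = 0
  ne : ∀ i, p i ≠ 0

lemma CRep.exists_sa (r : CRep A) (T : r.H →L[ℂ] r.H) (hT : star T = T)
    (hm : T ∈ StarAlgHom.range r.π) : ∃ a : A, IsSelfAdjoint a ∧ r.π a = T := by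
  obtain ⟨x, hx⟩ := hm
  have hx : r.π x = T := hx
  refine ⟨(1 / 2 : ℂ) • (x + star x), ?_, ?_⟩
  · rw [isSelfAdjoint_iff, star_smul, star_add, star_star, add_comm]
    congr 1
    simp
  · rw [map_smul, map_add, map_star, hx, hT, ← two_smul ℂ, smul_smul]
    norm_num

/-- Sums `∑ i • p i` have at least `m` spectral values. -/
lemma CRep.IsFam.le {r : CRep A} {m N : ℕ} {p : Fin m → (r.H →L[ℂ] r.H)} (hp : r.IsFam p)
    (hN : ∀ a : A, IsSelfAdjoint a → ∀ S : Finset ℝ, (S : Set ℝ) ⊆ spectrum ℝ (r.π a) →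
      S.card ≤ N) : m ≤ N := by
  set T : r.H →L[ℂ] r.H := ∑ i : Fin m, ((i : ℕ) : ℂ) • p i with hT
  have hTs : star T = T := by
    rw [hT, star_sum]
    refine Finset.sum_congr rfl fun i _ => ?_
    rw [star_smul, hp.sa]
    simp
  obtain ⟨a, ha, haT⟩ := r.exists_sa T hTs
    (sum_mem fun i _ => (StarAlgHom.range r.π).smul_mem (hp.mem i) _)
  have := hN a ha (Finset.univ.map ⟨fun i : Fin m => ((i : ℕ) : ℝ), fun i j h => by
    simpa [Fin.ext_iff] using h⟩) (by
    intro t ht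
    simp only [Finset.coe_map, Finset.coe_univ, Set.image_univ,
      Set.mem_range] at ht
    obtain ⟨i, rfl⟩ := ht
    rw [haT, spectrum.mem_iff]
    intro hu
    have h0 : (algebraMap ℝ (r.H →L[ℂ] r.H) ((i : ℕ) : ℝ) - T) * p i = 0 := by
      rw [sub_mul, hT, Finset.sum_mul, Finset.sum_eq_single i]
      · rw [smul_mul_assoc, hp.idem, Algebra.algebraMap_eq_smul_one, smul_mul_assoc, one_mul,
          ← Complex.coe_smul, Complex.ofReal_natCast, sub_self]
      · intro j _ hj
        rw [smul_mul_assoc, hp.orth j i hj, smul_zero]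
      · simp
    exact hp.ne i (hu.mul_right_eq_zero.1 h0))
  simpa using this

lemma CRep.cfc_mem (r : CRep A) (T : r.H →L[ℂ] r.H) (hT : IsSelfAdjoint T)
    (hm : T ∈ StarAlgHom.range r.π) (hf : (spectrum ℝ T).Finite) (g : ℝ → ℝ) :
    cfc g T ∈ StarAlgHom.range r.π := by
  classical
  have h1 : cfc g T = cfc (fun x => (Lagrange.interpolate hf.toFinset id g).eval x) T := by
    refine cfc_congr fun x hx => ?_
    exact (Lagrange.eval_interpolate_at_node (v := id) g (by simp [Set.InjOn])
      (hf.mem_toFinset.2 hx)).symm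
  obtain ⟨a, rfl⟩ := hm
  rw [h1, cfc_polynomial _ _ hT]
  exact ⟨Polynomial.aeval a _, (Polynomial.aeval_algHom_apply
    ((r.π : A →ₐ[ℂ] (r.H →L[ℂ] r.H)).restrictScalars ℝ) a _).symm⟩

/-- If self-adjoint elements have at most `N` spectral values in an irreducible representation, then
its dimension is at most `N`: a maximal family of orthogonal projections in the range consists of
rank one projections with sum `1`. -/
lemma CRep.finrank_le (r : CRep A) (hr : r.Irred) (N : ℕ)
    (hN : ∀ a : A, IsSelfAdjoint a → ∀ S : Finset ℝ, (S : Set ℝ) ⊆ spectrum ℝ (r.π a) →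
      S.card ≤ N) : FiniteDimensional ℂ r.H ∧ Module.finrank ℂ r.H ≤ N := by
  classical
  set R := StarAlgHom.range r.π with hR
  obtain ⟨m, ⟨p, hp⟩, hmax⟩ : ∃ m : ℕ, (∃ p : Fin m → (r.H →L[ℂ] r.H), r.IsFam p) ∧
      ∀ p : Fin (m + 1) → (r.H →L[ℂ] r.H), ¬ r.IsFam p := by
    set P : ℕ → Prop := fun m => ∃ p : Fin m → (r.H →L[ℂ] r.H), r.IsFam p with hP
    have h0 : P 0 := ⟨finZeroElim, ⟨fun i => i.elim0, fun i => i.elim0, fun i => i.elim0,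
      fun i => i.elim0, fun i => i.elim0⟩⟩
    refine ⟨Nat.findGreatest P N, Nat.findGreatest_spec (Nat.zero_le N) h0, fun p hp => ?_⟩
    have h1 := Nat.le_findGreatest (P := P) (hp.le hN) ⟨p, hp⟩
    omega
  have hmN := hp.le hN
  have hfin : ∀ T : r.H →L[ℂ] r.H, star T = T → T ∈ R → (spectrum ℝ T).Finite := by
    intro T hT hm
    obtain ⟨a, ha, rfl⟩ := r.exists_sa T hT hm
    by_contra hinf
    obtain ⟨S, hS, hc⟩ := (show (spectrum ℝ (r.π a)).Infinite from hinf).exists_subset_card_eq (N + 1)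
    have := hN a ha S hS
    omega
  -- otherwise `1 - ∑ p i` could be added to the family
  have hsum : ∑ i, p i = 1 := by
    by_contra hne
    have hpe : ∀ i, p i * (1 - ∑ i, p i) = 0 := fun i => by
      rw [mul_sub, mul_one, Finset.mul_sum, Finset.sum_eq_single i, hp.idem, sub_self]
      · intro j _ hj; exact hp.orth i j hj.symm
      · simp
    have hep : ∀ i, (1 - ∑ i, p i) * p i = 0 := fun i => by
      rw [sub_mul, one_mul, Finset.sum_mul, Finset.sum_eq_single i, hp.idem, sub_self]
      · intro j _ hj; exact hp.orth j i hj
      · simp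
    have hmem : (1 - ∑ i, p i) ∈ R := sub_mem (one_mem _) (sum_mem fun i _ => hp.mem i)
    refine hmax (Fin.snoc p (1 - ∑ i, p i)) ⟨?_, ?_, ?_, ?_, ?_⟩
    · refine Fin.lastCases (by simpa using hmem) fun i => by simpa using hp.mem i
    · refine Fin.lastCases ?_ fun i => by simpa using hp.sa i
      simp only [Fin.snoc_last, star_sub, star_one, star_sum, hp.sa]
    · refine Fin.lastCases ?_ fun i => by simpa using hp.idem i
      simp only [Fin.snoc_last]
      rw [sub_mul, one_mul, Finset.sum_mul, Finset.sum_eq_zero (fun i _ => hpe i), sub_zero]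
    · refine Fin.lastCases (Fin.lastCases (fun h => absurd rfl h) fun j _ => ?_)
        fun i => Fin.lastCases (fun _ => ?_) fun j hij => ?_
      · simpa using hep j
      · simpa using hpe i
      · simpa using hp.orth i j (fun h => hij (by rw [h]))
    · refine Fin.lastCases ?_ fun i => by simpa using hp.ne i
      simp only [Fin.snoc_last]
      exact fun h => hne (sub_eq_zero.1 h).symm
  -- otherwise `p i` could be split into `q` and `p i - q`
  have hmin : ∀ (i : Fin m) (q : r.H →L[ℂ] r.H), q ∈ R → star q = q → q * q = q →
      q * p i = q → p i * q = q → q = 0 ∨ q = p i := by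
    intro i q hq hqs hqq hqp hpq
    by_contra hne
    push Not at hne
    have hqj : ∀ j, j ≠ i → q * p j = 0 := fun j hj => by
      rw [← hqp, mul_assoc, hp.orth i j hj.symm, mul_zero]
    have hjq : ∀ j, j ≠ i → p j * q = 0 := fun j hj => by
      rw [← hpq, ← mul_assoc, hp.orth j i hj, zero_mul]
    refine hmax (Fin.snoc (update p i q) (p i - q)) ⟨?_, ?_, ?_, ?_, ?_⟩
    · refine Fin.lastCases (by simpa using sub_mem (hp.mem i) hq) fun j => ?_
      rcases eq_or_ne j i with rfl | hj
      · simpa using hq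
      · simpa [hj] using hp.mem j
    · refine Fin.lastCases (by simp [hp.sa, hqs]) fun j => ?_
      rcases eq_or_ne j i with rfl | hj
      · simpa using hqs
      · simpa [hj] using hp.sa j
    · refine Fin.lastCases (by simp [mul_sub, sub_mul, hp.idem, hqp, hpq, hqq]) fun j => ?_
      rcases eq_or_ne j i with rfl | hj
      · simpa using hqq
      · simpa [hj] using hp.idem j
    · refine Fin.lastCases (Fin.lastCases (fun h => absurd rfl h) fun j _ => ?_)
        fun j => Fin.lastCases (fun _ => ?_) fun k hjk => ?_
      · rcases eq_or_ne j i with rfl | hj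
        · simp [sub_mul, hpq, hqq]
        · simp [sub_mul, hj, hqj j hj, hp.orth i j hj.symm]
      · rcases eq_or_ne j i with rfl | hj
        · simp [mul_sub, hqp, hqq]
        · simp [mul_sub, hj, hjq j hj, hp.orth j i hj]
      · have hjk' : j ≠ k := fun h => hjk (by rw [h])
        rcases eq_or_ne j i with rfl | hj
        · simpa [hjk'.symm] using hqj k hjk'.symm
        · rcases eq_or_ne k i with rfl | hk
          · simpa [hj] using hjq j hj
          · simpa [hj, hk] using hp.orth j k hjk'
    · refine Fin.lastCases ?_ fun j => ?_
      · simp only [Fin.snoc_last]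
        exact fun h => hne.2 (sub_eq_zero.1 h).symm
      · rcases eq_or_ne j i with rfl | hj
        · simpa using hne.1
        · simpa [hj] using hp.ne j
  -- the spectral projections of `b` commute with `p i`, so by minimality only one of them survives
  have hscal : ∀ (i : Fin m) (b : r.H →L[ℂ] r.H), b ∈ R → star b = b → b * p i = b →
      p i * b = b → ∃ t : ℝ, b = (t : ℂ) • p i := by
    intro i b hb hbs hbp hpb
    have hsa : IsSelfAdjoint b := hbs
    have hf := hfin b hbs hb
    have hcont : ∀ g : ℝ → ℝ, ContinuousOn g (spectrum ℝ b) := fun g => hf.continuousOn g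
    set e : ℝ → (r.H →L[ℂ] r.H) := fun t => cfc (fun x => if x = t then (1 : ℝ) else 0) b with he
    have heb : ∀ t, b * e t = t • e t := by
      intro t
      conv_lhs => rw [← cfc_id ℝ b]
      rw [he]
      simp only
      rw [← cfc_mul _ _ b (hcont _) (hcont _), ← cfc_smul t _ b (hcont _)]
      refine cfc_congr fun x _ => ?_
      by_cases h : x = t <;> simp [h]
    have hesum : ∑ t ∈ hf.toFinset, e t = 1 := by
      rw [he]
      simp only
      rw [← cfc_sum _ _ _ (fun t _ => hcont _), ← cfc_one ℝ b]
      refine cfc_congr fun x hx => ?_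
      simp [hx]
    have hcomm : ∀ t, Commute (e t) (p i) := fun t =>
      Commute.cfc_real (show Commute b (p i) by rw [commute_iff_eq, hbp, hpb]) _
    have hee : ∀ t, e t * e t = e t := fun t => by
      rw [he]
      simp only
      rw [← cfc_mul _ _ b (hcont _) (hcont _)]
      refine cfc_congr fun x _ => ?_
      by_cases h : x = t <;> simp [h]
    have hes : ∀ t, star (e t) = e t := fun t => cfc_predicate (R := ℝ) _ b
    have hor : ∀ t, e t * p i = 0 ∨ e t * p i = p i := fun t => by
      refine hmin i _ (mul_mem (r.cfc_mem b hsa hb hf _) (hp.mem i)) ?_ ?_ ?_ ?_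
      · rw [star_mul, hes, hp.sa, (hcomm t).eq]
      · rw [mul_assoc, ← mul_assoc (p i), ← (hcomm t).eq, mul_assoc (e t), hp.idem, ← mul_assoc,
          hee]
      · rw [mul_assoc, hp.idem]
      · rw [(hcomm t).eq, ← mul_assoc, hp.idem]
    obtain ⟨t, ht⟩ : ∃ t, e t * p i ≠ 0 := by
      by_contra hall
      push Not at hall
      apply hp.ne i
      rw [← one_mul (p i), ← hesum, Finset.sum_mul]
      exact Finset.sum_eq_zero fun t _ => hall t
    refine ⟨t, ?_⟩
    have h1 := (hor t).resolve_left ht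
    calc b = b * p i := hbp.symm
      _ = b * e t * p i := by rw [mul_assoc, h1]
      _ = (t : ℂ) • p i := by rw [heb, smul_mul_assoc, h1, Complex.coe_smul]
  have hscal' : ∀ (i : Fin m) (a : A), ∃ z : ℂ, p i * r.π a * p i = z • p i := by
    intro i a
    have key : ∀ a : A, IsSelfAdjoint a → ∃ t : ℝ, p i * r.π a * p i = (t : ℂ) • p i := by
      intro a ha
      refine hscal i _ (mul_mem (mul_mem (hp.mem i) ⟨a, rfl⟩) (hp.mem i)) ?_ ?_ ?_
      · rw [star_mul, star_mul, hp.sa, ← map_star, ha.star_eq, mul_assoc]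
      · rw [mul_assoc, hp.idem]
      · rw [← mul_assoc, ← mul_assoc, hp.idem]
    obtain ⟨s, hs⟩ := key (realPart a) (realPart a).2
    obtain ⟨t, ht⟩ := key (imaginaryPart a) (imaginaryPart a).2
    refine ⟨s + Complex.I * t, ?_⟩
    conv_lhs => rw [← realPart_add_I_smul_imaginaryPart a]
    rw [map_add, map_smul, mul_add, add_mul, hs, mul_smul_comm, smul_mul_assoc, ht, add_smul,
      smul_smul]
  have hξ : ∀ i, ∃ ξ : r.H, ξ ≠ 0 ∧ p i ξ = ξ := by
    intro i
    obtain ⟨v, hv⟩ : ∃ v, p i v ≠ 0 := by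
      by_contra hall
      push Not at hall
      exact hp.ne i (ContinuousLinearMap.ext hall)
    exact ⟨p i v, hv, congrArg (fun T : r.H →L[ℂ] r.H => T v) (hp.idem i)⟩
  choose ξ hξ0 hξp using hξ
  -- the vectors `v` with every `p i (π a v)` in the line of `ξ i` form a closed invariant subspace
  have hrank : ∀ i v, p i v ∈ Submodule.span ℂ {ξ i} := by
    intro i
    set K : Submodule ℂ r.H := ⨅ a : A,
      (Submodule.span ℂ {ξ i}).comap ((p i * r.π a : r.H →L[ℂ] r.H) : r.H →ₗ[ℂ] r.H) with hK
    have hKm : ∀ v, v ∈ K ↔ ∀ a : A, p i (r.π a v) ∈ Submodule.span ℂ {ξ i} := fun v => by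
      simp only [hK, Submodule.mem_iInf]
      rfl
    have hKc : IsClosed (K : Set r.H) := by
      have : (K : Set r.H) = ⋂ a : A, (fun v => p i (r.π a v)) ⁻¹' (Submodule.span ℂ {ξ i} : Set r.H) := by
        ext v
        simp only [SetLike.mem_coe, hKm, Set.mem_iInter, Set.mem_preimage]
      rw [this]
      exact isClosed_iInter fun a => (Submodule.closed_of_finiteDimensional _).preimage (by fun_prop)
    have hKi : ∀ a : A, ∀ v ∈ K, r.π a v ∈ K := fun a v hv => by
      rw [hKm] at hv ⊢
      intro b
      have := hv (b * a)
      rwa [map_mul] at this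
    have hξK : ξ i ∈ K := by
      rw [hKm]
      intro a
      obtain ⟨z, hz⟩ := hscal' i a
      have := congrArg (fun T : r.H →L[ℂ] r.H => T (ξ i)) hz
      have h2 : p i (r.π a (p i (ξ i))) = z • p i (ξ i) := this
      rw [hξp] at h2
      rw [h2]
      exact Submodule.smul_mem _ _ (Submodule.mem_span_singleton_self _)
    rcases hr K hKc hKi with h | h
    · rw [h] at hξK
      exact absurd hξK (hξ0 i)
    · intro v
      have : v ∈ K := h ▸ Submodule.mem_top
      rw [hKm] at this
      simpa using this 1
  have hspan : Submodule.span ℂ (Set.range ξ) = ⊤ := by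
    rw [eq_top_iff]
    intro v _
    have : v = ∑ i, p i v := by
      have := congrArg (fun T : r.H →L[ℂ] r.H => T v) hsum
      simpa using this.symm
    rw [this]
    exact sum_mem fun i _ => Submodule.span_mono (by rintro _ rfl; exact ⟨i, rfl⟩) (hrank i v)
  refine ⟨Module.finite_def.2 (hspan ▸ Submodule.fg_span (Set.finite_range ξ)), ?_⟩
  have h1 : (Set.range ξ).finrank ℂ ≤ Fintype.card (Fin m) := finrank_range_le_card ξ
  rw [Set.finrank, hspan, finrank_top, Fintype.card_fin] at h1
  exact h1.trans hmN

end Large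

/-! ### Matrix systems in algebras that are not subhomogeneous -/

section Systems

variable {A : Type} [CStarAlgebra A]

lemma CRep.Irred.exists_mul_ne {r : CRep A} (hr : r.Irred) {f w : A} (hf : r.π f ≠ 0)
    (hw : r.π w ≠ 0) : ∃ a, r.π (f * (a * w)) ≠ 0 := by
  by_contra hall
  push Not at hall
  obtain ⟨v, hv⟩ : ∃ v, r.π w v ≠ 0 := by
    by_contra h
    push Not at h
    exact hw (ContinuousLinearMap.ext h)
  set K : Submodule ℂ r.H := ⨅ a : A,
    LinearMap.ker ((r.π f * r.π a : r.H →L[ℂ] r.H) : r.H →ₗ[ℂ] r.H) with hK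
  have hKm : ∀ x, x ∈ K ↔ ∀ a : A, r.π f (r.π a x) = 0 := fun x => by
    simp only [hK, Submodule.mem_iInf]
    rfl
  have hKc : IsClosed (K : Set r.H) := by
    have : (K : Set r.H) = ⋂ a : A, (fun v => r.π f (r.π a v)) ⁻¹' {0} := by
      ext v
      simp only [SetLike.mem_coe, hKm, Set.mem_iInter, Set.mem_preimage, Set.mem_singleton_iff]
    rw [this]
    exact isClosed_iInter fun a => isClosed_singleton.preimage (by fun_prop)
  rcases hr K hKc (fun a x hx => by
    rw [hKm] at hx ⊢
    intro b
    have := hx (b * a)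
    rwa [map_mul] at this) with h | h
  · apply hv
    rw [← Submodule.mem_bot ℂ, ← h, hKm]
    intro a
    have := hall a
    rw [map_mul, map_mul] at this
    exact congrArg (fun T : r.H →L[ℂ] r.H => T v) this
  · apply hf
    ext x
    have : x ∈ K := h ▸ Submodule.mem_top
    rw [hKm] at this
    simpa using this 1

/-- The tails of a nonzero product `f 0 * a 0 * f 1 * a 1 * ⋯`. -/
lemma CRep.Irred.exists_chain {r : CRep A} (hr : r.Irred) [Nontrivial r.H] :
    ∀ (n : ℕ) (f : Fin n → A), (∀ i, r.π (f i) ≠ 0) →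
      ∃ (w : A) (u x : Fin n → A), r.π w ≠ 0 ∧ ∀ i, w = u i * (f i * x i) := by
  intro n
  induction n with
  | zero =>
    intro f _
    exact ⟨1, finZeroElim, finZeroElim, by rw [map_one]; exact one_ne_zero, fun i => i.elim0⟩
  | succ n ih =>
    intro f hf
    obtain ⟨w, u, x, hw, h⟩ := ih (fun i => f i.succ) fun i => hf _
    obtain ⟨a, ha⟩ := hr.exists_mul_ne (hf 0) hw
    refine ⟨f 0 * (a * w), Fin.cons 1 fun i => f 0 * a * u i, Fin.cons (a * w) x, ha, ?_⟩
    refine Fin.cases (by simp) fun i => ?_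
    simp only [Fin.cons_succ]
    conv_lhs => rw [h i]
    simp only [mul_assoc]

/-- Bump functions of an element with many spectral values. -/
lemma CRep.exists_orth (r : CRep A) (a : A) (ha : IsSelfAdjoint a) (n : ℕ) (t : Fin n → ℝ)
    (ht : Injective t) (hs : ∀ i, t i ∈ spectrum ℝ (r.π a)) :
    ∃ f : Fin n → A, (∀ i, star (f i) = f i) ∧ (∀ i j, i ≠ j → f i * f j = 0) ∧
      ∀ i, r.π (f i) ≠ 0 := by
  obtain ⟨d, hd, hd0⟩ : ∃ d : ℝ, (∀ i j, i ≠ j → d < |t i - t j|) ∧ 0 < d := by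
    have h1 : ∀ᶠ d : ℝ in 𝓝[>] 0, ∀ i j, i ≠ j → d < |t i - t j| := by
      refine eventually_all.2 fun i => eventually_all.2 fun j => ?_
      by_cases hij : i = j
      · simp [hij]
      · have : 0 < |t i - t j| := abs_pos.2 (sub_ne_zero.2 fun h => hij (ht h))
        filter_upwards [nhdsWithin_le_nhds (gt_mem_nhds this)] with d hd _ using hd
    exact (h1.and self_mem_nhdsWithin).exists
  set g : Fin n → ℝ → ℝ := fun i x => max 0 (d / 2 - |x - t i|) with hg
  have hc : ∀ i, Continuous (g i) := fun i => by rw [hg]; fun_prop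
  refine ⟨fun i => cfc (g i) a, fun i => cfc_predicate (R := ℝ) _ a, fun i j hij => ?_, fun i => ?_⟩
  · rw [← cfc_mul _ _ a (hc i).continuousOn (hc j).continuousOn]
    convert cfc_zero ℝ a using 2
    funext x
    simp only [Pi.zero_apply, hg, mul_eq_zero, max_eq_left_iff]
    by_contra! h
    have h1 := hd i j hij
    have h2 := abs_sub_le (t i) x (t j)
    rw [abs_sub_comm (t i) x] at h2
    linarith [h.1, h.2]
  · rw [StarAlgHomClass.map_cfc r.π (g i) a (hc i).continuousOn
      (AddMonoidHomClass.continuous_of_bound r.π 1 fun x => by simpa using r.norm_le x) ha (ha.map r.π)]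
    intro h0
    have := norm_apply_le_norm_cfc (g i) (r.π a) (hs i) (hc i).continuousOn (ha.map r.π)
    rw [h0, norm_zero] at this
    have h2 : g i (t i) = d / 2 := by
      simp only [hg, sub_self, abs_zero, sub_zero]
      exact max_eq_right (by linarith)
    rw [h2, Real.norm_eq_abs, abs_of_pos (by linarith)] at this
    linarith

/-- Approximate matrix systems: partial isometries up to a common factor `c`, with orthogonal
ranges. -/
lemma exists_approx_system (N : ℕ) (h : ¬ IsSubhomogeneous N A) (ε : ℝ) (hε : 0 < ε) :
    ∃ (y : Fin (N + 1) → A) (c : A), ‖c‖ = 1 ∧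
      ∀ i j, ‖star (y i) * y j - if i = j then c else 0‖ ≤ ε := by
  obtain ⟨r, hr, hdim⟩ : ∃ r : CRep A, r.Irred ∧
      ¬ (FiniteDimensional ℂ r.H ∧ Module.finrank ℂ r.H ≤ N) := by
    unfold IsSubhomogeneous at h
    push Not at h
    obtain ⟨H, i1, i2, i3, π, h1, h2⟩ := h
    exact ⟨⟨H, π⟩, h1, fun h => absurd h.2 (not_le.2 (h2 h.1))⟩
  have hnt : Nontrivial r.H := by
    by_contra hn
    rw [not_nontrivial_iff_subsingleton] at hn
    exact hdim ⟨inferInstance, by rw [Module.finrank_zero_of_subsingleton]; exact Nat.zero_le _⟩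
  have hA : Nontrivial A := ⟨1, 0, fun h => by
    have := congrArg r.π h
    rw [map_one, map_zero] at this
    exact one_ne_zero this⟩
  obtain ⟨a, ha, S, hS, hcard⟩ : ∃ a : A, IsSelfAdjoint a ∧ ∃ S : Finset ℝ,
      (S : Set ℝ) ⊆ spectrum ℝ (r.π a) ∧ N + 1 ≤ S.card := by
    by_contra! hall
    exact hdim (r.finrank_le hr N fun a ha S hS => Nat.lt_succ_iff.1 (hall a ha S hS))
  obtain ⟨S', hS', hcard'⟩ := Finset.exists_subset_card_eq hcard
  obtain ⟨f, hfs, hfo, hf0⟩ := r.exists_orth a ha (N + 1) (S'.orderEmbOfFin hcard')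
    (S'.orderEmbOfFin hcard').injective fun i => hS (hS' (Finset.orderEmbOfFin_mem _ _ _))
  -- the orthogonal elements `f i` are linked by irreducibility: the same `w` factors through each of them
  obtain ⟨w, u, x, hw, hwu⟩ := hr.exists_chain (N + 1) f hf0
  obtain ⟨ξ₀, hξ₀, hwξ⟩ : ∃ ξ : r.H, ‖ξ‖ = 1 ∧ r.π w ξ ≠ 0 := by
    obtain ⟨v, hv⟩ : ∃ v, r.π w v ≠ 0 := by
      by_contra h
      push Not at h
      exact hw (ContinuousLinearMap.ext h)
    have hv0 : v ≠ 0 := fun h => hv (by rw [h, map_zero])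
    refine ⟨((‖v‖⁻¹ : ℝ) : ℂ) • v, ?_, ?_⟩
    · rw [norm_smul, Complex.norm_real, norm_inv, norm_norm, inv_mul_cancel₀ (norm_ne_zero_iff.2 hv0)]
    · rw [map_smul]
      exact smul_ne_zero (by simpa using hv0) hv
  set ρ := ‖r.π w ξ₀‖ ^ 2 with hρ
  have hρ0 : 0 < ρ := by have := norm_pos_iff.2 hwξ; positivity
  set C := 1 + ∑ i, ‖u i‖ with hC
  have hu : ∀ i, ‖u i‖ ≤ C := fun i => by
    have := Finset.single_le_sum (f := fun i => ‖u i‖) (fun i _ => norm_nonneg _) (Finset.mem_univ i)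
    linarith
  have hC1 : 1 ≤ C := by
    have : 0 ≤ ∑ i, ‖u i‖ := by positivity
    linarith
  set κ := ρ / (4 * C ^ 2) with hκ
  have hκ0 : 0 < κ := by positivity
  set y : Fin (N + 1) → A := fun i => f i * x i with hy
  set δ := min κ (ε * κ) with hδ
  have hδ0 : 0 < δ := lt_min hκ0 (by positivity)
  have hδκ : δ ≤ κ := min_le_left _ _
  have hκρ : κ ≤ ρ / 4 := by
    rw [hκ]
    apply div_le_div_of_nonneg_left hρ0.le (by norm_num)
    nlinarith
  -- excision makes each `star (y i) * y i` nearly scalar, and the scalar is bounded below since `w`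
  -- factors through `y i`
  obtain ⟨lam, c, hcs, hc1, hsp, hlam, -, hmu⟩ := excise
    (fun k : Option (Fin (N + 1)) => k.elim (star w * w) fun i => star (y i) * y i) r ξ₀ hξ₀
    (fun k => k.elim 1 fun _ => 0) δ hδ0
  simp only [Fintype.sum_option, Option.elim, one_mul, zero_mul, Finset.sum_const_zero,
    add_zero] at hmu
  have hcn : ‖c‖ = 1 := le_antisymm hc1 (by simpa using spectrum.norm_le_norm_of_mem hsp)
  obtain ⟨r₁, η, -, hη, hcη⟩ := exists_irred c
  rw [hcn] at hcη
  set ζ := r₁.π c η with hζ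
  have hval : ∀ (b : A) (l : ℂ), ‖c * (star b * b - l • 1) * c‖ ≤ δ →
      |‖r₁.π b ζ‖ ^ 2 - l.re| ≤ δ := by
    intro b l hb
    have h1 := r₁.norm_inner_le (c * (star b * b - l • 1) * c) η
    rw [hη, one_pow, mul_one] at h1
    have h2 : (inner ℂ η (r₁.π (c * (star b * b - l • 1) * c) η) : ℂ) =
        ((‖r₁.π b ζ‖ ^ 2 : ℝ) : ℂ) - l := by
      have e1 : r₁.π (c * (star b * b - l • 1) * c) η =
          r₁.π c (r₁.π (star b) (r₁.π b ζ) - l • ζ) := by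
        rw [map_mul, map_mul, map_sub, map_smul, map_one, map_mul]
        rfl
      rw [e1, ← hcs.star_eq, ← r₁.inner_star', ← hζ, inner_sub_right, inner_smul_right,
        ← r₁.inner_star', inner_self_eq_norm_sq_to_K, inner_self_eq_norm_sq_to_K, hcη]
      simp
    rw [h2] at h1
    refine le_trans ?_ (h1.trans hb)
    have := Complex.abs_re_le_norm (((‖r₁.π b ζ‖ ^ 2 : ℝ) : ℂ) - l)
    rwa [Complex.sub_re, Complex.ofReal_re] at this
  have hν : ∀ i, κ ≤ (lam (some i)).re := by
    intro i
    have h1 := abs_le.1 (hval w _ (hlam none))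
    have h2 := abs_le.1 (hval (y i) _ (hlam (some i)))
    have h3 : (inner ℂ ξ₀ (r.π (star w * w) ξ₀) : ℂ).re = ρ := by
      have : r.π (star w * w) ξ₀ = r.π (star w) (r.π w ξ₀) := by rw [map_mul]; rfl
      rw [this, ← r.inner_star', inner_self_eq_norm_sq_to_K, hρ]
      norm_cast
    rw [h3] at hmu
    have h4 : ‖r₁.π w ζ‖ ≤ C * ‖r₁.π (y i) ζ‖ := by
      have : r₁.π w ζ = r₁.π (u i) (r₁.π (y i) ζ) := by
        conv_lhs => rw [hwu i, map_mul]
        rfl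
      rw [this]
      exact (r₁.norm_apply_le _ _).trans (by gcongr; exact hu i)
    have h5 : ‖r₁.π w ζ‖ ^ 2 ≤ C ^ 2 * ‖r₁.π (y i) ζ‖ ^ 2 := by
      rw [← mul_pow]; gcongr
    have h6 : 4 * C ^ 2 * κ = ρ := by rw [hκ]; field_simp
    have h7 : C ^ 2 * (2 * κ) ≤ C ^ 2 * ‖r₁.π (y i) ζ‖ ^ 2 := by linarith
    have h8 := le_of_mul_le_mul_left h7 (by positivity)
    linarith
  set ν : Fin (N + 1) → ℝ := fun i => (lam (some i)).re with hνdef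
  have hν0 : ∀ i, 0 < ν i := fun i => hκ0.trans_le (hν i)
  have hre : ∀ i, ‖c * (star (y i) * y i - ((ν i : ℝ) : ℂ) • 1) * c‖ ≤ δ := by
    intro i
    set X := c * (star (y i) * y i - lam (some i) • 1) * c with hX
    have hX1 : ‖X‖ ≤ δ := hlam (some i)
    have e : c * (star (y i) * y i - ((ν i : ℝ) : ℂ) • 1) * c = (1 / 2 : ℂ) • (X + star X) := by
      have hl : ((ν i : ℝ) : ℂ) = (1 / 2 : ℂ) * (lam (some i) + star (lam (some i))) := by
        have := Complex.add_conj (lam (some i))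
        rw [Complex.star_def, this]
        push_cast
        ring
      rw [hl, hX]
      simp only [star_mul, star_sub, star_smul, star_star, hcs.star_eq, mul_sub, sub_mul,
        mul_smul_comm, smul_mul_assoc, mul_one, ← mul_assoc]
      module
    rw [e, norm_smul]
    have := norm_add_le X (star X)
    rw [norm_star] at this
    norm_num
    linarith
  refine ⟨fun i => (((Real.sqrt (ν i))⁻¹ : ℝ) : ℂ) • (y i * c), c * c, ?_, fun i j => ?_⟩
  · have := CStarRing.norm_star_mul_self (x := c)
    rw [hcs.star_eq, hcn] at this
    rw [this, one_mul]
  · rcases eq_or_ne i j with rfl | hij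
    · rw [if_pos rfl]
      have e : star ((((Real.sqrt (ν i))⁻¹ : ℝ) : ℂ) • (y i * c)) *
          ((((Real.sqrt (ν i))⁻¹ : ℝ) : ℂ) • (y i * c)) - c * c =
          (((ν i)⁻¹ : ℝ) : ℂ) • (c * (star (y i) * y i - ((ν i : ℝ) : ℂ) • 1) * c) := by
        rw [star_smul, star_mul, hcs.star_eq, smul_mul_smul_comm, Complex.star_def,
          Complex.conj_ofReal, ← Complex.ofReal_mul, ← mul_inv, Real.mul_self_sqrt (hν0 i).le,
          mul_sub, sub_mul, smul_sub, mul_smul_comm, smul_mul_assoc, smul_smul, mul_one,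
          ← Complex.ofReal_mul, inv_mul_cancel₀ (hν0 i).ne', Complex.ofReal_one, one_smul]
        simp only [mul_assoc]
      rw [e, norm_smul, Complex.norm_real, Real.norm_eq_abs, abs_of_pos (inv_pos.2 (hν0 i))]
      rw [inv_mul_le_iff₀ (hν0 i)]
      refine (hre i).trans ((min_le_right _ _).trans ?_)
      rw [mul_comm]
      exact mul_le_mul_of_nonneg_right (hν i) hε.le
    · rw [if_neg hij]
      have : star (y i) * y j = 0 := by
        rw [hy]
        simp only [star_mul, hfs]
        rw [mul_assoc, ← mul_assoc (f i), hfo i j hij, zero_mul, mul_zero]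
      rw [star_smul, star_mul, smul_mul_smul_comm, mul_assoc, ← mul_assoc (star (y i)), this]
      simpa using hε.le

/-- A matrix system forces irreducible representations of large dimension. -/
lemma not_isSubhomogeneous_of_system (N : ℕ) (y : Fin (N + 1) → A) (c : A) (hc : ‖c‖ = 1)
    (h : ∀ i j, star (y i) * y j = if i = j then c else 0) : ¬ IsSubhomogeneous N A := by
  intro hN
  have hA : Nontrivial A := ⟨c, 0, fun h => by rw [h, norm_zero] at hc; exact zero_ne_one hc⟩
  obtain ⟨r, ξ, hr, -, hcξ⟩ := exists_irred c
  obtain ⟨h1, h2⟩ := hN r.H r.π hr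
  have hin : ∀ i j, (inner ℂ (r.π (y i) ξ) (r.π (y j) ξ) : ℂ) =
      inner ℂ ξ (r.π (star (y i) * y j) ξ) := fun i j => by
    rw [r.inner_star', map_mul]; rfl
  have hne : ∀ i, r.π (y i) ξ ≠ 0 := by
    intro i h0
    have : r.π c ξ = r.π (star (y i)) (r.π (y i) ξ) := by
      have := h i i
      rw [if_pos rfl] at this
      rw [← this, map_mul]; rfl
    rw [h0, map_zero] at this
    rw [this, norm_zero, hc] at hcξ
    exact zero_ne_one hcξ
  have hli := linearIndependent_of_ne_zero_of_inner_eq_zero (𝕜 := ℂ) hne fun i j hij => by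
    change (inner ℂ (r.π (y i) ξ) (r.π (y j) ξ) : ℂ) = 0
    rw [hin, h, if_neg hij, map_zero]
    simp
  have := hli.fintype_card_le_finrank
  rw [Fintype.card_fin] at this
  omega

/-- Ultraproducts turn approximate matrix systems into exact ones, of every size at once. -/
lemma exists_system (A : ℕ → Type) [∀ k, CStarAlgebra (A k)] (h : ∀ k, ¬ IsSubhomogeneous k (A k))
    (U : Ultrafilter ℕ) (hU : (U : Filter ℕ) ≤ atTop) :
    ∃ (y : ℕ → UProd U A) (c : UProd U A), ‖c‖ = 1 ∧
      ∀ i j, star (y i) * y j = if i = j then c else 0 := by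
  have hpos : ∀ k : ℕ, (0 : ℝ) < 1 / (k + 1) := fun k => Nat.one_div_pos_of_nat
  choose y c hc hy using fun k => exists_approx_system k (h k) (1 / (k + 1)) (hpos k)
  have hyb : ∀ k i, ‖y k i‖ ≤ 2 := by
    intro k i
    have h1 := hy k i i
    rw [if_pos rfl] at h1
    have h2 := norm_add_le (star (y k i) * y k i - c k) (c k)
    rw [sub_add_cancel, CStarRing.norm_star_mul_self, hc] at h2
    have h3 : (1 : ℝ) / (k + 1) ≤ 1 := by
      rw [div_le_one (by positivity)]
      have : (0 : ℝ) ≤ k := Nat.cast_nonneg k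
      linarith
    nlinarith [norm_nonneg (y k i)]
  set f : ℕ → ∀ k, A k := fun i k => if h : i < k + 1 then y k ⟨i, h⟩ else 0 with hf
  have hfb : ∀ i, Bdd (f i) := fun i => ⟨2, fun k => by
    rw [hf]
    by_cases h : i < k + 1
    · simp only [h, dif_pos]; exact hyb k _
    · simp [h]⟩
  have hcb : Bdd c := ⟨1, fun k => (hc k).le⟩
  refine ⟨fun i => UProd.mk (BF.mk (f i) (hfb i)), UProd.mk (BF.mk c hcb), ?_, fun i j => ?_⟩
  · rw [UProd.norm_mk]
    exact tendsto_nhds_unique (BF.tendsto _) (by simp [hc])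
  · rw [← UProd.mk_star, ← UProd.mk_mul]
    have key : ∀ g : BF U A, (∀ᶠ k in atTop, ‖(star (BF.mk (f i) (hfb i)) * BF.mk (f j) (hfb j) - g : BF U A).val k‖
        ≤ 1 / ((k : ℝ) + 1)) → UProd.mk (star (BF.mk (f i) (hfb i)) * BF.mk (f j) (hfb j)) = UProd.mk g := by
      intro g hg
      rw [UProd.mk_eq]
      refine tendsto_nhds_unique (BF.tendsto _) ?_
      exact squeeze_zero' (Eventually.of_forall fun k => norm_nonneg _) (hU hg)
        (tendsto_one_div_add_atTop_nhds_zero_nat.mono_left hU)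
    have hlt : ∀ᶠ k in atTop, i < k + 1 ∧ j < k + 1 := by
      filter_upwards [eventually_ge_atTop i, eventually_ge_atTop j] with k h1 h2
      omega
    rcases eq_or_ne i j with rfl | hij
    · rw [if_pos rfl]
      refine key _ (hlt.mono fun k hk => ?_)
      have := hy k ⟨i, hk.1⟩ ⟨i, hk.1⟩
      rw [if_pos rfl] at this
      change ‖star (f i k) * f i k - c k‖ ≤ _
      rwa [show f i k = y k ⟨i, hk.1⟩ from dif_pos hk.1]
    · rw [if_neg hij]
      refine key 0 (hlt.mono fun k hk => ?_)
      have := hy k ⟨i, hk.1⟩ ⟨j, hk.2⟩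
      rw [if_neg (by simpa using hij)] at this
      change ‖star (f i k) * f j k - 0‖ ≤ _
      rwa [show f i k = y k ⟨i, hk.1⟩ from dif_pos hk.1,
        show f j k = y k ⟨j, hk.2⟩ from dif_pos hk.2]

end Systems

/-! ### A spectral gap for shears of the torus -/

section Gap

variable {P : Type}

/-- If two permutations move the part of `W` outside a small set into disjoint subsets of `W`, then
an almost invariant mass distribution gives little mass to `W`. -/
lemma paradox (μ : P → ℝ) (hμ : ∀ p, 0 ≤ μ p) (S S' : Equiv.Perm P) (W Q D : Set P) (β δ : ℝ)
    (hQ : ∀ V : Finset P, (∀ p ∈ V, p ∉ Q) → ∑ p ∈ V, μ p ≤ β)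
    (hS : ∀ V : Finset P, ∑ p ∈ V, μ p ≤ ∑ p ∈ V, μ (S p) + δ)
    (hS' : ∀ V : Finset P, ∑ p ∈ V, μ p ≤ ∑ p ∈ V, μ (S' p) + δ)
    (h : ∀ p ∈ W, p ∈ Q → S p ∈ W ∧ S p ∈ D) (h' : ∀ p ∈ W, p ∈ Q → S' p ∈ W ∧ S' p ∉ D)
    (V : Finset P) (hV : ∀ p, p ∈ V ↔ p ∈ W) : ∑ p ∈ V, μ p ≤ 2 * β + 2 * δ := by
  classical
  set V₁ := V.filter (· ∈ Q) with hV₁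
  set V₂ := V.filter (· ∉ Q) with hV₂
  have h1 : ∑ p ∈ V, μ p = ∑ p ∈ V₁, μ p + ∑ p ∈ V₂, μ p :=
    (Finset.sum_filter_add_sum_filter_not V _ _).symm
  have h2 : ∑ p ∈ V₂, μ p ≤ β := hQ V₂ fun p hp => (Finset.mem_filter.1 hp).2
  have e1 : ∑ p ∈ V₁, μ (S p) = ∑ p ∈ V₁.map S.toEmbedding, μ p := by simp
  have e2 : ∑ p ∈ V₁, μ (S' p) = ∑ p ∈ V₁.map S'.toEmbedding, μ p := by simp
  have hd : Disjoint (V₁.map S.toEmbedding) (V₁.map S'.toEmbedding) := by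
    rw [Finset.disjoint_left]
    intro q hq hq'
    obtain ⟨p, hp, rfl⟩ := Finset.mem_map.1 hq
    obtain ⟨p', hp', hpp⟩ := Finset.mem_map.1 hq'
    have a1 := Finset.mem_filter.1 hp
    have a2 := Finset.mem_filter.1 hp'
    have b1 := (h p ((hV p).1 a1.1) a1.2).2
    have b2 := (h' p' ((hV p').1 a2.1) a2.2).2
    exact b2 (by rw [show S' p' = S p from hpp]; exact b1)
  have hsub : V₁.map S.toEmbedding ∪ V₁.map S'.toEmbedding ⊆ V := by
    intro q hq
    rcases Finset.mem_union.1 hq with hq | hq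
    · obtain ⟨p, hp, rfl⟩ := Finset.mem_map.1 hq
      have a1 := Finset.mem_filter.1 hp
      exact (hV _).2 (h p ((hV p).1 a1.1) a1.2).1
    · obtain ⟨p, hp, rfl⟩ := Finset.mem_map.1 hq
      have a1 := Finset.mem_filter.1 hp
      exact (hV _).2 (h' p ((hV p).1 a1.1) a1.2).1
  have h3 := Finset.sum_le_sum_of_subset_of_nonneg hsub fun p _ _ => hμ p
  rw [Finset.sum_union hd, ← e1, ← e2] at h3
  have h4 := hS V₁
  have h5 := hS' V₁
  linarith

/-- If `f + f ∘ R` has nearly maximal norm, then the mass distribution `f²` is almost invariant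
under the permutation `R`. -/
lemma mass_almost_invariant [Fintype P] (f : P → ℝ) (R : Equiv.Perm P)
    (hR : (2 - 1 / 1024) ^ 2 * ∑ p, f p ^ 2 ≤ ∑ p, (f p + f (R p)) ^ 2) (V : Finset P) :
    |∑ p ∈ V, (f p ^ 2 - f (R p) ^ 2)| ≤ 1 / 8 * ∑ p, f p ^ 2 := by
  set s := ∑ p, f p ^ 2 with hs
  have a1 := hR
  have hfR : ∑ p, f (R p) ^ 2 = s := Equiv.sum_comp R fun p => f p ^ 2
  have a2 : ∑ p, (f p - f (R p)) ^ 2 = 4 * s - ∑ p, (f p + f (R p)) ^ 2 := by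
    have : 4 * s = ∑ p, (2 * f p ^ 2 + 2 * f (R p) ^ 2) := by
      rw [Finset.sum_add_distrib, ← Finset.mul_sum, ← Finset.mul_sum, hfR]; ring
    rw [this, ← Finset.sum_sub_distrib]
    exact Finset.sum_congr rfl fun p _ => by ring
  have a3 : ∑ p, (f p + f (R p)) ^ 2 ≤ 4 * s := by
    have : 0 ≤ ∑ p, (f p - f (R p)) ^ 2 := Finset.sum_nonneg fun p _ => sq_nonneg _
    linarith
  have a4 : ∀ p, |f p ^ 2 - f (R p) ^ 2| ≤ 16 * (f p - f (R p)) ^ 2 + 1 / 64 * (f p + f (R p)) ^ 2 := by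
    intro p
    rw [abs_le]
    constructor
    · nlinarith [sq_nonneg (4 * (f p - f (R p)) + 1 / 8 * (f p + f (R p)))]
    · nlinarith [sq_nonneg (4 * (f p - f (R p)) - 1 / 8 * (f p + f (R p)))]
  calc |∑ p ∈ V, (f p ^ 2 - f (R p) ^ 2)| ≤ ∑ p ∈ V, |f p ^ 2 - f (R p) ^ 2| :=
        Finset.abs_sum_le_sum_abs _ _
    _ ≤ ∑ p, |f p ^ 2 - f (R p) ^ 2| :=
        Finset.sum_le_sum_of_subset_of_nonneg (Finset.subset_univ _) fun p _ _ => abs_nonneg _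
    _ ≤ ∑ p, (16 * (f p - f (R p)) ^ 2 + 1 / 64 * (f p + f (R p)) ^ 2) :=
        Finset.sum_le_sum fun p _ => a4 p
    _ = 16 * ∑ p, (f p - f (R p)) ^ 2 + 1 / 64 * ∑ p, (f p + f (R p)) ^ 2 := by
        rw [Finset.sum_add_distrib, Finset.mul_sum, Finset.mul_sum]
    _ ≤ 1 / 8 * s := by
        rw [a2]
        linarith

/-- A multiplier bounded by `3`, and by `57 / 20` on `V`, loses norm on the mass carried by `V`. -/
lemma mult_loss [Fintype P] (m f : P → ℝ) (hm0 : ∀ p, 0 ≤ m p) (hm3 : ∀ p, m p ≤ 3) (V : Finset P)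
    (hV : ∀ p ∈ V, m p ≤ 57 / 20) :
    ∑ p, (m p * f p) ^ 2 ≤ 9 * ∑ p, f p ^ 2 - 87 / 100 * ∑ p ∈ V, f p ^ 2 := by
  classical
  have c1 : ∑ p ∈ V, f p ^ 2 = ∑ p, if p ∈ V then f p ^ 2 else 0 := by simp
  rw [c1, Finset.mul_sum, Finset.mul_sum, ← Finset.sum_sub_distrib]
  refine Finset.sum_le_sum fun p _ => ?_
  rw [mul_pow]
  by_cases hp : p ∈ V
  · rw [if_pos hp]
    have := hV p hp
    have := hm0 p
    have : m p ^ 2 ≤ (57 / 20) ^ 2 := by gcongr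
    nlinarith [sq_nonneg (f p)]
  · rw [if_neg hp]
    have := hm3 p
    have := hm0 p
    have : m p ^ 2 ≤ 3 ^ 2 := by gcongr
    nlinarith [sq_nonneg (f p)]

/-- The elementary inequalities for the shear `(a, b) ↦ (a + b, b)` of a region of the plane. -/
lemma shear_ineq (a b : ℝ) (h : 0 < a * b ∨ (b = 0 ∧ a ≠ 0)) :
    (0 < (a + b) * b ∨ (b = 0 ∧ a + b ≠ 0)) ∧ b ^ 2 < (a + b) ^ 2 := by
  rcases h with h | ⟨rfl, h⟩
  · have := mul_self_pos.2 (left_ne_zero_of_mul h.ne')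
    exact ⟨Or.inl (by nlinarith [sq_nonneg b]), by nlinarith⟩
  · have := mul_self_pos.2 h
    exact ⟨Or.inr ⟨rfl, by simpa using h⟩, by nlinarith⟩

/-- The elementary inequalities for the shear `(a, b) ↦ (a, a + b)` of a region of the plane. -/
lemma shear_ineq' (a b : ℝ) (h : 0 < a * b ∨ (b = 0 ∧ a ≠ 0)) :
    0 < a * (a + b) ∧ a ^ 2 ≤ (a + b) ^ 2 := by
  rcases h with h | ⟨rfl, h⟩
  · exact ⟨by nlinarith [sq_nonneg a], by nlinarith [sq_nonneg b]⟩
  · have := mul_self_pos.2 h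
    exact ⟨by nlinarith, by nlinarith⟩

/-- The shears `(s, t) ↦ (s + t, t)` and `(s, t) ↦ (s, s + t)` have no almost invariant functions
concentrated near but not at the origin; here `r₁` and `r₂` are the coordinates, and the multiplier
`m` is close to its maximal value `3` only near the origin. -/
lemma gap_real [Fintype P] (r₁ r₂ m f : P → ℝ) (S S' : Equiv.Perm P) (hm0 : ∀ p, 0 ≤ m p) (hm3 : ∀ p, m p ≤ 3)
    (hm : ∀ p, ¬ (|r₁ p| < 1 / 8 ∧ |r₂ p| < 1 / 8) → m p ≤ 57 / 20)
    (hne : ∀ p, r₁ p ≠ 0 ∨ r₂ p ≠ 0)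
    (hS : ∀ p, |r₁ p| < 1 / 8 → |r₂ p| < 1 / 8 → r₁ (S p) = r₁ p + r₂ p ∧ r₂ (S p) = r₂ p ∧
      r₁ (S.symm p) = r₁ p - r₂ p ∧ r₂ (S.symm p) = r₂ p)
    (hS' : ∀ p, |r₁ p| < 1 / 8 → |r₂ p| < 1 / 8 → r₁ (S' p) = r₁ p ∧ r₂ (S' p) = r₁ p + r₂ p ∧
      r₁ (S'.symm p) = r₁ p ∧ r₂ (S'.symm p) = r₂ p - r₁ p)
    (hf : ∀ p, 0 ≤ f p) :
    ∑ p, (m p * f p + f (S.symm p) + f (S'.symm p)) ^ 2 ≤ (5 - 1 / 1024) ^ 2 * ∑ p, f p ^ 2 := by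
  classical
  by_contra! hlt
  set s := ∑ p, f p ^ 2 with hs
  have hs0 : 0 ≤ s := Finset.sum_nonneg fun p _ => sq_nonneg _
  set nf := Real.sqrt s with hnf
  have hnf2 : nf ^ 2 = s := Real.sq_sqrt hs0
  have hnf0 : 0 ≤ nf := Real.sqrt_nonneg _
  let v : (P → ℝ) → EuclideanSpace ℝ P := fun g => WithLp.toLp 2 g
  have hv : ∀ g, ‖v g‖ ^ 2 = ∑ p, g p ^ 2 := fun g => by
    rw [EuclideanSpace.real_norm_sq_eq]
  have hvadd : ∀ g h, v (fun p => g p + h p) = v g + v h := fun g h => rfl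
  have hvle : ∀ g (t : ℝ), 0 ≤ t → ∑ p, g p ^ 2 ≤ t ^ 2 → ‖v g‖ ≤ t := fun g t ht h => by
    rw [← hv] at h
    exact (pow_le_pow_iff_left₀ (norm_nonneg _) ht two_ne_zero).1 h
  have hfS : ∑ p, f (S.symm p) ^ 2 = s := Equiv.sum_comp S.symm fun p => f p ^ 2
  have hfS' : ∑ p, f (S'.symm p) ^ 2 = s := Equiv.sum_comp S'.symm fun p => f p ^ 2
  have n0 : ‖v f‖ ≤ nf := hvle _ _ hnf0 (by rw [hnf2])
  have n1 : ‖v fun p => f (S.symm p)‖ ≤ nf := hvle _ _ hnf0 (by rw [hnf2, hfS])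
  have n2 : ‖v fun p => f (S'.symm p)‖ ≤ nf := hvle _ _ hnf0 (by rw [hnf2, hfS'])
  have hbig : (5 - 1 / 1024) * nf < ‖v fun p => m p * f p + f (S.symm p) + f (S'.symm p)‖ := by
    by_contra! h
    have := pow_le_pow_left₀ (norm_nonneg _) h 2
    rw [hv, mul_pow, hnf2] at this
    linarith
  have hmono : ∀ g h : P → ℝ, (∀ p, 0 ≤ g p) → (∀ p, g p ≤ h p) → ‖v g‖ ≤ ‖v h‖ := fun g h h0 hgh =>
    hvle _ _ (norm_nonneg _) (by
      rw [hv]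
      exact Finset.sum_le_sum fun p _ => pow_le_pow_left₀ (h0 p) (hgh p) 2)
  -- the multiplier is nearly maximal on most of the mass
  have hmf : (3 - 1 / 1024) * nf ≤ ‖v fun p => m p * f p‖ := by
    have h1 := norm_add_le (v fun p => m p * f p + f (S.symm p)) (v fun p => f (S'.symm p))
    have h2 := norm_add_le (v fun p => m p * f p) (v fun p => f (S.symm p))
    rw [← hvadd] at h1 h2
    linarith
  have hle3 : ‖v fun p => m p * f p + f (S.symm p) + f (S'.symm p)‖ ≤
      ‖v fun p => (f p + f (S.symm p)) + (f p + (f p + f (S'.symm p)))‖ :=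
    hmono _ _ (fun p => by have := mul_nonneg (hm0 p) (hf p); linarith [hf (S.symm p), hf (S'.symm p)])
      fun p => by have := mul_le_mul_of_nonneg_right (hm3 p) (hf p); linarith
  have h4 : ‖v fun p => (f p + f (S.symm p)) + (f p + (f p + f (S'.symm p)))‖ ≤
      ‖v fun p => f p + f (S.symm p)‖ + (‖v f‖ + ‖v fun p => f p + f (S'.symm p)‖) :=
    (norm_add_le (v fun p => f p + f (S.symm p)) (v fun p => f p + (f p + f (S'.symm p)))).trans
      (add_le_add_right (norm_add_le (v f) (v fun p => f p + f (S'.symm p))) _)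
  have h5 : ‖v fun p => f p + f (S.symm p)‖ ≤ ‖v f‖ + ‖v fun p => f (S.symm p)‖ :=
    norm_add_le (v f) (v fun p => f (S.symm p))
  have h6 : ‖v fun p => f p + f (S'.symm p)‖ ≤ ‖v f‖ + ‖v fun p => f (S'.symm p)‖ :=
    norm_add_le (v f) (v fun p => f (S'.symm p))
  -- the mass distribution of `f` is almost invariant under both shears
  have hinv : ∀ R : Equiv.Perm P, (2 - 1 / 1024) * nf ≤ ‖v fun p => f p + f (R p)‖ →
      ∀ V : Finset P, |∑ p ∈ V, (f p ^ 2 - f (R p) ^ 2)| ≤ 1 / 8 * s := by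
    intro R hR V
    have a1 := pow_le_pow_left₀ (by positivity) hR 2
    rw [hv, mul_pow, hnf2] at a1
    exact mass_almost_invariant f R a1 V
  have hI : ∀ V : Finset P, |∑ p ∈ V, (f p ^ 2 - f (S.symm p) ^ 2)| ≤ 1 / 8 * s :=
    hinv S.symm (by linarith)
  have hI' : ∀ V : Finset P, |∑ p ∈ V, (f p ^ 2 - f (S'.symm p) ^ 2)| ≤ 1 / 8 * s :=
    hinv S'.symm (by linarith)
  have hback : ∀ R : Equiv.Perm P, (∀ V : Finset P, |∑ p ∈ V, (f p ^ 2 - f (R.symm p) ^ 2)| ≤ 1 / 8 * s) →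
      (∀ V : Finset P, ∑ p ∈ V, f p ^ 2 ≤ ∑ p ∈ V, f (R.symm p) ^ 2 + 1 / 8 * s) ∧
      (∀ V : Finset P, ∑ p ∈ V, f p ^ 2 ≤ ∑ p ∈ V, f (R p) ^ 2 + 1 / 8 * s) := by
    intro R hR
    refine ⟨fun V => ?_, fun V => ?_⟩
    · have := (abs_le.1 (hR V)).2
      rw [Finset.sum_sub_distrib] at this
      linarith
    · have := (abs_le.1 (hR (V.map R.toEmbedding))).1
      rw [Finset.sum_map] at this
      simp only [Equiv.coe_toEmbedding, Equiv.symm_apply_apply] at this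
      rw [Finset.sum_sub_distrib] at this
      linarith
  set Q : Set P := {p | |r₁ p| < 1 / 8 ∧ |r₂ p| < 1 / 8} with hQdef
  have hQ : ∀ V : Finset P, (∀ p ∈ V, p ∉ Q) → ∑ p ∈ V, f p ^ 2 ≤ 7 / 1024 * s := by
    intro V hV
    have b1 := pow_le_pow_left₀ (by positivity) hmf 2
    rw [hv, mul_pow, hnf2] at b1
    have b2 := mult_loss m f hm0 hm3 V fun p hp => hm p (hV p hp)
    linarith
  -- the plane minus the origin is cut into two pairs of opposite quadrants
  set W₁ : Set P := {p | 0 < r₁ p * r₂ p ∨ (r₂ p = 0 ∧ r₁ p ≠ 0)} with hW₁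
  set W₂ : Set P := {p | 0 < r₂ p * -r₁ p ∨ (-r₁ p = 0 ∧ r₂ p ≠ 0)} with hW₂
  have hW : ∀ p, p ∈ W₁ ∨ p ∈ W₂ := by
    intro p
    rcases lt_trichotomy (r₁ p * r₂ p) 0 with h | h | h
    · exact Or.inr (Or.inl (by linarith [mul_neg (r₂ p) (r₁ p), mul_comm (r₁ p) (r₂ p)]))
    · rcases mul_eq_zero.1 h with h | h
      · exact Or.inr (Or.inr ⟨by rw [h, neg_zero], (hne p).resolve_left (fun k => k h)⟩)
      · exact Or.inl (Or.inr ⟨h, (hne p).resolve_right (fun k => k h)⟩)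
    · exact Or.inl (Or.inl h)
  have p1 := paradox (fun p => f p ^ 2) (fun p => sq_nonneg _) S S' W₁ Q {p | r₂ p ^ 2 < r₁ p ^ 2}
    (7 / 1024 * s) (1 / 8 * s) hQ (hback S hI).2 (hback S' hI').2 (by
      intro p hp hq
      obtain ⟨e1, e2, -, -⟩ := hS p hq.1 hq.2
      simp only [hW₁, Set.mem_ofPred_eq] at hp ⊢
      rw [e1, e2]
      exact shear_ineq _ _ hp) (by
      intro p hp hq
      obtain ⟨e1, e2, -, -⟩ := hS' p hq.1 hq.2
      simp only [hW₁, Set.mem_ofPred_eq] at hp ⊢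
      rw [e1, e2]
      have := shear_ineq' _ _ hp
      exact ⟨Or.inl this.1, this.2.not_gt⟩)
    (Finset.univ.filter (· ∈ W₁)) (by simp)
  -- the quadrants of `W₂` are those of `W₁` after the rotation `(r₁, r₂) ↦ (r₂, -r₁)`
  have p2 := paradox (fun p => f p ^ 2) (fun p => sq_nonneg _) S'.symm S.symm W₂ Q
    {p | (-r₁ p) ^ 2 < r₂ p ^ 2}
    (7 / 1024 * s) (1 / 8 * s) hQ (hback S' hI').1 (hback S hI).1 (by
      intro p hp hq
      obtain ⟨-, -, e1, e2⟩ := hS' p hq.1 hq.2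
      simp only [hW₂, Set.mem_ofPred_eq] at hp ⊢
      rw [e1, e2, sub_eq_add_neg]
      exact shear_ineq _ _ hp) (by
      intro p hp hq
      obtain ⟨-, -, e1, e2⟩ := hS p hq.1 hq.2
      simp only [hW₂, Set.mem_ofPred_eq] at hp ⊢
      have e : -(r₁ p - r₂ p) = r₂ p + -r₁ p := by ring
      rw [e1, e2, e]
      have := shear_ineq' _ _ hp
      exact ⟨Or.inl this.1, this.2.not_gt⟩)
    (Finset.univ.filter (· ∈ W₂)) (by simp)
  have hcover : s ≤ ∑ p ∈ Finset.univ.filter (· ∈ W₁), f p ^ 2 +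
      ∑ p ∈ Finset.univ.filter (· ∈ W₂), f p ^ 2 := by
    rw [hs, Finset.sum_filter, Finset.sum_filter, ← Finset.sum_add_distrib]
    refine Finset.sum_le_sum fun p _ => ?_
    have := sq_nonneg (f p)
    rcases hW p with h | h
    · rw [if_pos h]; split_ifs <;> linarith
    · rw [if_pos h]; split_ifs <;> linarith
  have hspos : s ≤ 0 := by linarith
  have hs00 : s = 0 := le_antisymm hspos hs0
  have hf0 : ∀ p, f p = 0 := by
    intro p
    have := (Finset.sum_eq_zero_iff_of_nonneg fun p _ => sq_nonneg (f p)).1 (hs.symm.trans hs00) p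
      (Finset.mem_univ p)
    exact pow_eq_zero_iff (two_ne_zero) |>.1 this
  simp [hf0, hs00] at hlt

end Gap

/-! ### Torsion points of the torus -/

section Torus

instance : Fact ((0 : ℝ) < 1) := ⟨one_pos⟩

/-- The representative in `(-1/2, 1/2]` of a point of the circle `ℝ/ℤ`. -/
def circRep (t : UnitAddCircle) : ℝ := AddCircle.equivIoc 1 (-1 / 2) t

lemma circRep_mem (t : UnitAddCircle) : circRep t ∈ Set.Ioc (-1 / 2 : ℝ) (1 / 2) := by
  have := (AddCircle.equivIoc (1 : ℝ) (-1 / 2) t).2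
  norm_num at this ⊢
  exact this

lemma coe_circRep (t : UnitAddCircle) : ((circRep t : ℝ) : UnitAddCircle) = t :=
  AddCircle.coe_equivIoc

lemma circRep_coe {r : ℝ} (h : r ∈ Set.Ioc (-1 / 2 : ℝ) (1 / 2)) :
    circRep (r : UnitAddCircle) = r :=
  AddCircle.equivIoc_coe_of_mem (by norm_num at h ⊢; exact h)

lemma circRep_add {s t : UnitAddCircle} (hs : |circRep s| < 1 / 8) (ht : |circRep t| < 1 / 8) :
    circRep (s + t) = circRep s + circRep t := by
  have h1 := abs_lt.1 hs
  have h2 := abs_lt.1 ht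
  conv_lhs => rw [← coe_circRep s, ← coe_circRep t, ← AddCircle.coe_add]
  exact circRep_coe ⟨by linarith, by linarith⟩

lemma circRep_sub {s t : UnitAddCircle} (hs : |circRep s| < 1 / 8) (ht : |circRep t| < 1 / 8) :
    circRep (s - t) = circRep s - circRep t := by
  have h1 := abs_lt.1 hs
  have h2 := abs_lt.1 ht
  conv_lhs => rw [← coe_circRep s, ← coe_circRep t, ← AddCircle.coe_sub]
  exact circRep_coe ⟨by linarith, by linarith⟩

lemma eq_zero_of_circRep {t : UnitAddCircle} (h : circRep t = 0) : t = 0 := by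
  rw [← coe_circRep t, h, AddCircle.coe_zero]

/-- The character `t ↦ exp (2πit)` of the circle `ℝ/ℤ`. -/
def ephase (t : UnitAddCircle) : ℂ := AddCircle.toCircle t

@[simp] lemma norm_ephase (t : UnitAddCircle) : ‖ephase t‖ = 1 := Circle.norm_coe _

lemma ephase_sub (s t : UnitAddCircle) :
    ephase (s - t) = ephase s * (starRingEnd ℂ) (ephase t) := by
  rw [ephase, ephase, ephase, sub_eq_add_neg, AddCircle.toCircle_add, AddCircle.toCircle_neg,
    Circle.coe_mul, Circle.coe_inv_eq_conj]

lemma norm_one_add_ephase_le {t : UnitAddCircle} (h : 1 / 8 ≤ |circRep t|) :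
    ‖1 + ephase t‖ ≤ 37 / 20 := by
  set r := circRep t with hr
  have e : ephase t = Complex.exp ((2 * Real.pi * r : ℝ) * Complex.I) := by
    rw [ephase, ← coe_circRep t, AddCircle.toCircle_apply_mk, Circle.coe_exp, div_one]
  have h1 : ‖1 + ephase t‖ ^ 2 = 2 + 2 * Real.cos (2 * Real.pi * r) := by
    rw [e, ← Complex.normSq_eq_norm_sq, Complex.normSq_apply]
    simp only [Complex.add_re, Complex.one_re, Complex.add_im, Complex.one_im,
      Complex.exp_ofReal_mul_I_re, Complex.exp_ofReal_mul_I_im]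
    nlinarith [Real.sin_sq_add_cos_sq (2 * Real.pi * r)]
  have h2 : Real.cos (2 * Real.pi * r) ≤ Real.sqrt 2 / 2 := by
    rw [← Real.cos_pi_div_four, ← Real.cos_abs (2 * Real.pi * r), abs_mul,
      abs_of_pos Real.two_pi_pos]
    have hm := circRep_mem t
    rw [← hr] at hm
    have hle : |r| ≤ 1 / 2 := abs_le.2 ⟨by linarith [hm.1], hm.2⟩
    exact Real.cos_le_cos_of_nonneg_of_le_pi (by positivity) (by nlinarith [Real.pi_pos])
      (by nlinarith [Real.pi_pos])
  have h3 : Real.sqrt 2 ≤ 1.4143 := Real.sqrt_le_sqrt (by norm_num : (2 : ℝ) ≤ 1.4143 ^ 2) |>.trans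
    (by rw [Real.sqrt_sq (by norm_num)])
  refine (pow_le_pow_iff_left₀ (norm_nonneg _) (by norm_num) two_ne_zero).1 ?_
  rw [h1]
  linarith

/-- The points of order `n + 1` of the torus `(ℝ/ℤ)²`. -/
def TorPt (n : ℕ) : Type := {x : UnitAddCircle × UnitAddCircle // addOrderOf x = n + 1}

instance (n : ℕ) : Finite (TorPt n) := by
  have h := AddCircle.finite_torsion (1 : ℝ) (n := n + 1) n.succ_pos
  refine Set.Finite.to_subtype (s := {x | addOrderOf x = n + 1})
    (Set.Finite.subset (h.prod h) fun x hx => ?_)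
  have h1 := addOrderOf_nsmul_eq_zero x
  replace hx : addOrderOf x = n + 1 := hx
  rw [hx] at h1
  exact ⟨congrArg Prod.fst h1, congrArg Prod.snd h1⟩

noncomputable instance (n : ℕ) : Fintype (TorPt n) := Fintype.ofFinite _

instance (n : ℕ) : Nonempty (TorPt n) :=
  ⟨⟨(((1 / (n + 1 : ℕ) : ℝ) : UnitAddCircle), 0), by
    rw [Prod.addOrderOf, addOrderOf_zero, Nat.lcm_one_right]
    exact AddCircle.addOrderOf_period_div n.succ_pos⟩⟩

/-- The shear `(s, t) ↦ (s + t, t)` of the torus. -/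
def shearAut : UnitAddCircle × UnitAddCircle ≃+ UnitAddCircle × UnitAddCircle where
  toFun x := (x.1 + x.2, x.2)
  invFun x := (x.1 - x.2, x.2)
  left_inv x := by simp
  right_inv x := by simp
  map_add' x y := by
    refine Prod.ext ?_ rfl
    simp only [Prod.fst_add, Prod.snd_add]
    abel

/-- The shear `(s, t) ↦ (s, s + t)` of the torus. -/
def shearAut' : UnitAddCircle × UnitAddCircle ≃+ UnitAddCircle × UnitAddCircle where
  toFun x := (x.1, x.1 + x.2)
  invFun x := (x.1, x.2 - x.1)
  left_inv x := by simp
  right_inv x := by simp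
  map_add' x y := by
    refine Prod.ext rfl ?_
    simp only [Prod.fst_add, Prod.snd_add]
    abel

/-- The permutation of the points of order `n + 1` induced by an automorphism of the torus. -/
def torPerm (e : UnitAddCircle × UnitAddCircle ≃+ UnitAddCircle × UnitAddCircle) (n : ℕ) :
    Equiv.Perm (TorPt n) where
  toFun x := ⟨e x.1, by rw [e.addOrderOf_eq]; exact x.2⟩
  invFun x := ⟨e.symm x.1, by rw [e.symm.addOrderOf_eq]; exact x.2⟩
  left_inv x := Subtype.ext (e.symm_apply_apply _)
  right_inv x := Subtype.ext (e.apply_symm_apply _)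

/-- The five permutations `1, 1, 1, S, S'` of the points of order `n + 1`. -/
def torSigma (n : ℕ) : Fin 5 → Equiv.Perm (TorPt n) :=
  ![1, 1, 1, torPerm shearAut n, torPerm shearAut' n]

/-- The five functions `1, e(t₁), e(t₂), 1, 1` on the points of order `n + 1`. -/
def torChi (n : ℕ) : Fin 5 → TorPt n → ℂ :=
  ![fun _ => 1, fun x => ephase x.1.1, fun x => ephase x.1.2, fun _ => 1, fun _ => 1]

lemma norm_torChi (n : ℕ) (k : Fin 5) (x : TorPt n) : ‖torChi n k x‖ = 1 := by
  fin_cases k <;> simp [torChi]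

/-- The spectral gap: a point of order `n + 1` never equals a point of order `m + 1`, so that the
difference of the two stays away from the origin, the only point fixed by both shears. -/
lemma torus_gap {n m : ℕ} (hnm : n ≠ m) {L : Type} [NormedAddCommGroup L] [NormedSpace ℂ L]
    (F : TorPt n × TorPt m → L) :
    ∑ p : TorPt n × TorPt m, ‖∑ k, (torChi n k ((torSigma n k).symm p.1) *
      (starRingEnd ℂ) (torChi m k ((torSigma m k).symm p.2))) •
        F ((torSigma n k).symm p.1, (torSigma m k).symm p.2)‖ ^ 2 ≤
      (5 - 1 / 1024) ^ 2 * ∑ p, ‖F p‖ ^ 2 := by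
  set θ : TorPt n × TorPt m → UnitAddCircle × UnitAddCircle := fun p => p.1.1 - p.2.1 with hθ
  have hθ0 : ∀ p, θ p ≠ 0 := by
    intro p hp
    have := congrArg addOrderOf (sub_eq_zero.1 hp)
    rw [p.1.2, p.2.2] at this
    exact hnm (Nat.succ_injective this)
  set S : Equiv.Perm (TorPt n × TorPt m) := (torPerm shearAut n).prodCongr (torPerm shearAut m) with hS
  set S' : Equiv.Perm (TorPt n × TorPt m) := (torPerm shearAut' n).prodCongr (torPerm shearAut' m) with hS'
  have e1 : ∀ p, θ (S p) = shearAut (θ p) := fun p => (map_sub shearAut _ _).symm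
  have e2 : ∀ p, θ (S' p) = shearAut' (θ p) := fun p => (map_sub shearAut' _ _).symm
  have e3 : ∀ p, θ (S.symm p) = shearAut.symm (θ p) := fun p => (map_sub shearAut.symm _ _).symm
  have e4 : ∀ p, θ (S'.symm p) = shearAut'.symm (θ p) := fun p => (map_sub shearAut'.symm _ _).symm
  set M : TorPt n × TorPt m → ℝ := fun p => ‖1 + ephase (θ p).1 + ephase (θ p).2‖ with hM
  have key := gap_real (fun p => circRep (θ p).1) (fun p => circRep (θ p).2) M (fun p => ‖F p‖) S S'
    (fun p => norm_nonneg _)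
    (fun p => by
      refine (norm_add₃_le).trans ?_
      rw [norm_ephase, norm_ephase, norm_one]
      norm_num)
    (fun p hp => by
      by_cases h1 : |circRep (θ p).1| < 1 / 8
      · have h2 := norm_one_add_ephase_le (not_lt.1 fun h2 => hp ⟨h1, h2⟩)
        have h3 := norm_add_le (1 + ephase (θ p).2) (ephase (θ p).1)
        rw [norm_ephase] at h3
        simp only [hM]
        rw [add_right_comm]
        linarith
      · have h2 := norm_one_add_ephase_le (not_lt.1 h1)
        have h3 := norm_add_le (1 + ephase (θ p).1) (ephase (θ p).2)
        rw [norm_ephase] at h3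
        simp only [hM]
        linarith)
    (fun p => by
      by_contra! h
      exact hθ0 p (Prod.ext (eq_zero_of_circRep h.1) (eq_zero_of_circRep h.2)))
    (fun p h1 h2 => by
      simp only [e1, e3]
      exact ⟨circRep_add h1 h2, rfl, circRep_sub h1 h2, rfl⟩)
    (fun p h1 h2 => by
      simp only [e2, e4]
      exact ⟨rfl, circRep_add h1 h2, rfl, circRep_sub h2 h1⟩)
    (fun p => norm_nonneg _)
  refine le_trans (Finset.sum_le_sum fun p _ => ?_) key
  refine pow_le_pow_left₀ (norm_nonneg _) ?_ 2
  have hsum : ∑ k, (torChi n k ((torSigma n k).symm p.1) *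
      (starRingEnd ℂ) (torChi m k ((torSigma m k).symm p.2))) •
        F ((torSigma n k).symm p.1, (torSigma m k).symm p.2) =
      (1 + ephase (θ p).1 + ephase (θ p).2) • F p + F (S.symm p) + F (S'.symm p) := by
    rw [Fin.sum_univ_five]
    have f1 : ephase (θ p).1 = ephase p.1.1.1 * (starRingEnd ℂ) (ephase p.2.1.1) :=
      ephase_sub _ _
    have f2 : ephase (θ p).2 = ephase p.1.1.2 * (starRingEnd ℂ) (ephase p.2.1.2) :=
      ephase_sub _ _
    rw [f1, f2, add_smul, add_smul, one_smul]
    simp [torChi, torSigma, hS, hS', Equiv.Perm.one_def]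
    rfl
  rw [hsum]
  refine (norm_add₃_le).trans ?_
  rw [norm_smul]

end Torus

/-! ### Definability of the minimal norm forces subhomogeneity -/

section Bessel

variable {V : Type} [NormedAddCommGroup V] [InnerProductSpace ℂ V] {X : Type} [Fintype X]
  [DecidableEq X] {Y Z : X → V →L[ℂ] V} {C : V →L[ℂ] V}

lemma bessel_sum (hC : ‖C‖ ≤ 1)
    (hY : ∀ p q u v, (inner ℂ (Y p u) (Y q v) : ℂ) = if p = q then inner ℂ u (C v) else 0)
    (G : X → V) : ‖∑ p, Y p (G p)‖ ^ 2 ≤ ∑ p, ‖G p‖ ^ 2 := by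
  have h1 : (inner ℂ (∑ p, Y p (G p)) (∑ p, Y p (G p)) : ℂ) = ∑ p, inner ℂ (G p) (C (G p)) := by
    rw [sum_inner]
    refine Finset.sum_congr rfl fun p _ => ?_
    rw [inner_sum]
    simp [hY]
  have h2 : ‖∑ p, Y p (G p)‖ ^ 2 = ‖(inner ℂ (∑ p, Y p (G p)) (∑ p, Y p (G p)) : ℂ)‖ := by
    rw [inner_self_eq_norm_sq_to_K]
    simp
  rw [h2, h1]
  refine (norm_sum_le _ _).trans (Finset.sum_le_sum fun p _ => ?_)
  refine (norm_inner_le_norm _ _).trans ?_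
  rw [sq]
  exact mul_le_mul_of_nonneg_left (C.le_of_opNorm_le hC _ |>.trans (one_mul _).le) (norm_nonneg _)

lemma bessel_adjoint (hC : ‖C‖ ≤ 1)
    (hY : ∀ p q u v, (inner ℂ (Y p u) (Y q v) : ℂ) = if p = q then inner ℂ u (C v) else 0)
    (hZ : ∀ p u v, (inner ℂ (Y p u) v : ℂ) = inner ℂ u (Z p v)) (v : V) :
    ∑ p, ‖Z p v‖ ^ 2 ≤ ‖v‖ ^ 2 := by
  set s := ∑ p, ‖Z p v‖ ^ 2 with hs
  have hs0 : 0 ≤ s := Finset.sum_nonneg fun p _ => sq_nonneg _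
  have h1 : (inner ℂ (∑ p, Y p (Z p v)) v : ℂ) = (s : ℂ) := by
    rw [sum_inner, hs, Complex.ofReal_sum]
    refine Finset.sum_congr rfl fun p _ => ?_
    rw [hZ, inner_self_eq_norm_sq_to_K]
    simp
  have h2 : s ≤ ‖∑ p, Y p (Z p v)‖ * ‖v‖ := by
    have := norm_inner_le_norm (𝕜 := ℂ) (∑ p, Y p (Z p v)) v
    rwa [h1, Complex.norm_real, Real.norm_of_nonneg hs0] at this
  have h3 := bessel_sum hC hY fun p => Z p v
  have h4 : s ^ 2 ≤ s * ‖v‖ ^ 2 := by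
    calc s ^ 2 ≤ (‖∑ p, Y p (Z p v)‖ * ‖v‖) ^ 2 := pow_le_pow_left₀ hs0 h2 2
      _ = ‖∑ p, Y p (Z p v)‖ ^ 2 * ‖v‖ ^ 2 := mul_pow _ _ _
      _ ≤ s * ‖v‖ ^ 2 := mul_le_mul_of_nonneg_right h3 (sq_nonneg _)
  rcases hs0.eq_or_lt with h | h
  · rw [← h]; positivity
  · exact le_of_mul_le_mul_left (by rwa [← sq]) h

/-- A combination of weighted partial permutations of a system is bounded by its action on
`ℓ²(X)`. -/
lemma bessel_twist {κ : Type} [Fintype κ] (hC : ‖C‖ ≤ 1)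
    (hY : ∀ p q u v, (inner ℂ (Y p u) (Y q v) : ℂ) = if p = q then inner ℂ u (C v) else 0)
    (hZ : ∀ p u v, (inner ℂ (Y p u) v : ℂ) = inner ℂ u (Z p v))
    (σ : κ → Equiv.Perm X) (χ : κ → X → ℂ) (M : ℝ) (hM : 0 ≤ M)
    (h : ∀ F : X → V, ∑ p, ‖∑ k, χ k ((σ k).symm p) • F ((σ k).symm p)‖ ^ 2 ≤
      M ^ 2 * ∑ p, ‖F p‖ ^ 2) : ‖∑ k, ∑ p, χ k p • (Y (σ k p) * Z p)‖ ≤ M := by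
  refine ContinuousLinearMap.opNorm_le_bound _ hM fun v => ?_
  refine (pow_le_pow_iff_left₀ (norm_nonneg _) (by positivity) two_ne_zero).1 ?_
  have e : (∑ k, ∑ p, χ k p • (Y (σ k p) * Z p)) v =
      ∑ p, Y p (∑ k, χ k ((σ k).symm p) • Z ((σ k).symm p) v) := by
    rw [sum_apply]
    simp only [map_sum, map_smul]
    rw [Finset.sum_comm]
    refine Finset.sum_congr rfl fun k _ => ?_
    rw [sum_apply, ← Equiv.sum_comp (σ k) fun p => χ k ((σ k).symm p) • _]
    simp [mul_apply_eq_comp]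
  rw [e]
  refine (bessel_sum hC hY _).trans ((h fun p => Z p v).trans ?_)
  rw [mul_pow]
  exact mul_le_mul_of_nonneg_left (bessel_adjoint hC hY hZ v) (sq_nonneg _)

end Bessel

section Twist

variable {A : Type} [CStarAlgebra A] {X X' : Type} [Fintype X] [DecidableEq X] [Fintype X']
  [DecidableEq X']

/-- The weighted permutation `∑ₓ χ(x) y_{σ x} y_x*` carried by a family `y`. -/
def tw (y : X → A) (σ : Equiv.Perm X) (χ : X → ℂ) : A := ∑ x, χ x • (y (σ x) * star (y x))

variable {y : X → A} {y' : X' → A} {c : A}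

lemma norm_tw_le [Nontrivial A] (hc : ‖c‖ = 1)
    (hy : ∀ i j, star (y i) * y j = if i = j then c else 0) (σ : Equiv.Perm X) (χ : X → ℂ)
    (hχ : ∀ x, ‖χ x‖ = 1) : ‖tw y σ χ‖ ≤ 1 := by
  obtain ⟨r, ξ, -, hξ, hn⟩ := exists_irred (tw y σ χ)
  rw [← hn]
  have := bessel_twist (V := r.H) (Y := fun p => r.π (y p)) (Z := fun p => r.π (star (y p)))
    (C := r.π c) (κ := Unit) ((r.norm_le c).trans hc.le)
    (fun p q u v => by
      rw [CRep.inner_star', ← mul_apply_eq_comp, ← map_mul, hy]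
      split_ifs <;> simp)
    (fun p u v => CRep.inner_star' _ _ _ _) (fun _ => σ) (fun _ => χ) 1 zero_le_one
    (fun F => by
      simp only [Finset.univ_unique, Finset.sum_singleton, norm_smul, hχ, one_mul, one_pow]
      exact (Equiv.sum_comp σ.symm fun p => ‖F p‖ ^ 2).le)
  have e : r.π (tw y σ χ) = ∑ _k : Unit, ∑ p, χ p • (r.π (y (σ p)) * r.π (star (y p))) := by
    simp [tw]
  rw [e]
  refine (ContinuousLinearMap.le_of_opNorm_le _ this ξ).trans ?_
  rw [hξ, one_mul]

/-- The minimal norm of a sum of tensors of weighted permutations is bounded by the norm of the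
product action on the `ℓ²` space of the product index set, with arbitrary coefficient spaces. -/
lemma minNorm_tw_le {κ : Type} [Fintype κ] (hc : ‖c‖ = 1)
    (hy : ∀ i j, star (y i) * y j = if i = j then c else 0)
    (hy' : ∀ i j, star (y' i) * y' j = if i = j then c else 0)
    (σ : κ → Equiv.Perm X) (σ' : κ → Equiv.Perm X') (χ : κ → X → ℂ) (χ' : κ → X' → ℂ) (M : ℝ)
    (hM : 0 ≤ M)
    (h : ∀ (L : Type) [NormedAddCommGroup L] [NormedSpace ℂ L] (F : X × X' → L),
      ∑ p : X × X', ‖∑ k, (χ k ((σ k).symm p.1) * χ' k ((σ' k).symm p.2)) •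
        F ((σ k).symm p.1, (σ' k).symm p.2)‖ ^ 2 ≤ M ^ 2 * ∑ p, ‖F p‖ ^ 2) :
    minNorm A A (∑ k, tw y (σ k) (χ k) ⊗ₜ[ℂ] tw y' (σ' k) (χ' k)) ≤ M := by
  refine minNorm_le_of_irred _ M hM fun r s _ _ => ?_
  have key := bessel_twist (V := HT r.H s.H) (X := X × X')
    (Y := fun p => tau r s (y p.1 ⊗ₜ[ℂ] y' p.2))
    (Z := fun p => tau r s (star (y p.1) ⊗ₜ[ℂ] star (y' p.2)))
    (C := tau r s (c ⊗ₜ[ℂ] c)) (κ := κ)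
    ((tau_tmul_norm_le r s c c).trans (by rw [hc, one_mul]))
    (fun p q u v => by
      have e : tau r s (y p.1 ⊗ₜ[ℂ] y' p.2) =
          tau r s (tensorStar A A (star (y p.1) ⊗ₜ[ℂ] star (y' p.2))) := by
        rw [tensorStar_tmul, star_star, star_star]
      rw [e, tau_inner_tensorStar, ← mul_apply_eq_comp, ← tau_mul,
        Algebra.TensorProduct.tmul_mul_tmul, hy, hy']
      by_cases h1 : p.1 = q.1
      · by_cases h2 : p.2 = q.2
        · simp [h1, h2, Prod.ext_iff]
        · simp [h2, Prod.ext_iff]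
      · simp [h1, Prod.ext_iff])
    (fun p u v => by
      rw [← tau_inner_tensorStar, tensorStar_tmul, star_star, star_star])
    (fun k => (σ k).prodCongr (σ' k)) (fun k p => χ k p.1 * χ' k p.2) M hM
    (fun F => h _ F)
  have e : tau r s (∑ k, tw y (σ k) (χ k) ⊗ₜ[ℂ] tw y' (σ' k) (χ' k)) =
      ∑ k, ∑ p : X × X', (χ k p.1 * χ' k p.2) •
        (tau r s (y ((σ k) p.1) ⊗ₜ[ℂ] y' ((σ' k) p.2)) *
          tau r s (star (y p.1) ⊗ₜ[ℂ] star (y' p.2))) := by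
    rw [map_sum]
    refine Finset.sum_congr rfl fun k _ => ?_
    rw [tw, tw, TensorProduct.sum_tmul, map_sum, Fintype.sum_prod_type]
    refine Finset.sum_congr rfl fun x _ => ?_
    rw [TensorProduct.tmul_sum, map_sum]
    refine Finset.sum_congr rfl fun x' _ => ?_
    rw [← tau_mul, Algebra.TensorProduct.tmul_mul_tmul, TensorProduct.smul_tmul_smul, map_smul]
  rw [e]
  exact key

/-- On the diagonal the five weighted permutations have a common invariant vector, so that the
minimal norm is as large as possible. -/
lemma le_minNorm_tw [Nontrivial A] [Nonempty X] {n : ℕ} (hc : ‖c‖ = 1)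
    (hy : ∀ i j, star (y i) * y j = if i = j then c else 0) (σ : Fin n → Equiv.Perm X)
    (χ : Fin n → X → ℂ) (hχ : ∀ k x, ‖χ k x‖ = 1) :
    (n : ℝ) ≤ minNorm A A (∑ k, tw y (σ k) (χ k) ⊗ₜ[ℂ]
      tw y (σ k) fun x => (starRingEnd ℂ) (χ k x)) := by
  have hν := isCStarNorm_minNorm A A
  set ν := minNorm A A
  set T := ∑ k, tw y (σ k) (χ k) ⊗ₜ[ℂ] tw y (σ k) fun x => (starRingEnd ℂ) (χ k x) with hT
  set w : A ⊗[ℂ] A := ∑ x, y x ⊗ₜ[ℂ] y x with hw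
  have hstar : tensorStar A A w = ∑ x, star (y x) ⊗ₜ[ℂ] star (y x) := by
    rw [hw, map_sum]
    exact Finset.sum_congr rfl fun x _ => tensorStar_tmul _ _
  set N : ℝ := (Fintype.card X : ℝ) with hN
  have hN0 : 0 < N := Nat.cast_pos.2 Fintype.card_pos
  have hww : tensorStar A A w * w = (N : ℂ) • (c ⊗ₜ[ℂ] c) := by
    rw [hstar, hw, Finset.sum_mul]
    simp_rw [Finset.mul_sum, Algebra.TensorProduct.tmul_mul_tmul, hy]
    have : ∀ i j : X, (if i = j then c else 0) ⊗ₜ[ℂ] (if i = j then c else 0) =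
        if i = j then c ⊗ₜ[ℂ] c else 0 := fun i j => by split_ifs <;> simp
    simp_rw [this]
    rw [hN, Complex.ofReal_natCast, Nat.cast_smul_eq_nsmul]
    simp
  have hcpos : ∃ x : A, c = star x * x := by
    obtain ⟨x⟩ := ‹Nonempty X›
    exact ⟨y x, by rw [hy, if_pos rfl]⟩
  have hcs : IsSelfAdjoint c := by
    obtain ⟨x, rfl⟩ := hcpos
    exact IsSelfAdjoint.star_mul_self x
  have hc1 : (1 : ℝ) ∈ spectrum ℝ c := by
    let := CStarAlgebra.spectralOrder A
    let := CStarAlgebra.spectralOrderedRing A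
    obtain ⟨x, hx⟩ := hcpos
    rw [← hc]
    exact CStarAlgebra.norm_mem_spectrum_of_nonneg (by rw [hx]; exact star_mul_self_nonneg x)
  have hc3 : (1 : ℝ) ∈ spectrum ℝ (c ^ 3) := by
    have := spectrum.pow_mem_pow c 3 hc1
    rwa [one_pow] at this
  have hlow := hν.one_le_tmul (c ^ 3) (c ^ 3) (hcs.pow 3) (hcs.pow 3) hc3 hc3
  have hTw : T * w = (n : ℂ) • (w * (c ⊗ₜ[ℂ] c)) := by
    have h1 : ∀ (τ : Equiv.Perm X) (φ : X → ℂ) (x : X),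
        tw y τ φ * y x = φ x • (y (τ x) * c) := by
      intro τ φ x
      rw [tw, Finset.sum_mul]
      simp_rw [smul_mul_assoc, mul_assoc, hy]
      simp
    have h2 : ∀ k, (tw y (σ k) (χ k) ⊗ₜ[ℂ] tw y (σ k) fun x => (starRingEnd ℂ) (χ k x)) * w =
        w * (c ⊗ₜ[ℂ] c) := by
      intro k
      rw [hw, Finset.mul_sum, Finset.sum_mul,
        ← Equiv.sum_comp (σ k) fun x => y x ⊗ₜ[ℂ] y x * c ⊗ₜ[ℂ] c]
      refine Finset.sum_congr rfl fun x _ => ?_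
      rw [Algebra.TensorProduct.tmul_mul_tmul, h1, h1, TensorProduct.smul_tmul_smul,
        Complex.mul_conj, Complex.normSq_eq_norm_sq, hχ, Algebra.TensorProduct.tmul_mul_tmul]
      simp
    rw [hT, Finset.sum_mul]
    simp_rw [h2]
    rw [Finset.sum_const, Finset.card_univ, Fintype.card_fin, Nat.cast_smul_eq_nsmul]
  have hnw : ν w ^ 2 ≤ N := by
    rw [← hν.cstar, hww, hν.smul_eq, Complex.norm_real, Real.norm_of_nonneg hN0.le]
    have := hν.tmul_le c c
    rw [hc, one_mul] at this
    nlinarith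
  have hnwc : N ≤ ν (w * (c ⊗ₜ[ℂ] c)) ^ 2 := by
    rw [← hν.cstar, tensorStar_mul, tensorStar_tmul, hcs.star_eq, mul_assoc,
      ← mul_assoc _ w, hww, smul_mul_assoc, mul_smul_comm, Algebra.TensorProduct.tmul_mul_tmul,
      Algebra.TensorProduct.tmul_mul_tmul, hν.smul_eq, Complex.norm_real,
      Real.norm_of_nonneg hN0.le, show c * (c * c) = c ^ 3 by noncomm_ring]
    nlinarith
  have h3 : (n : ℝ) * ν (w * (c ⊗ₜ[ℂ] c)) ≤ ν T * ν w := by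
    have := hν.mul_le T w
    rwa [hTw, hν.smul_eq, Complex.norm_natCast] at this
  have h4 : (n : ℝ) ^ 2 * N ≤ ν T ^ 2 * N := by
    calc (n : ℝ) ^ 2 * N ≤ (n : ℝ) ^ 2 * ν (w * (c ⊗ₜ[ℂ] c)) ^ 2 :=
          mul_le_mul_of_nonneg_left hnwc (sq_nonneg _)
      _ = (n * ν (w * (c ⊗ₜ[ℂ] c))) ^ 2 := (mul_pow _ _ _).symm
      _ ≤ (ν T * ν w) ^ 2 :=
          pow_le_pow_left₀ (mul_nonneg (Nat.cast_nonneg _) (hν.nonneg _)) h3 2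
      _ = ν T ^ 2 * ν w ^ 2 := mul_pow _ _ _
      _ ≤ ν T ^ 2 * N := mul_le_mul_of_nonneg_left hnw (sq_nonneg _)
  exact (pow_le_pow_iff_left₀ (Nat.cast_nonneg _) (hν.nonneg _) two_ne_zero).1
    (le_of_mul_le_mul_right h4 hN0)

end Twist

section Undefinable

/-- An ultrafilter on pairs both of whose marginals are a given nonprincipal ultrafilter, and which
does not charge the diagonal. -/
lemma exists_pair_ultrafilter (U : Ultrafilter ℕ) (hU : (U : Filter ℕ) ≤ atTop) :
    ∃ V : Ultrafilter (ℕ × ℕ), Tendsto Prod.fst (V : Filter (ℕ × ℕ)) (U : Filter ℕ) ∧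
      Tendsto Prod.snd (V : Filter (ℕ × ℕ)) (U : Filter ℕ) ∧
      ∀ᶠ p in (V : Filter (ℕ × ℕ)), p.1 ≠ p.2 := by
  have hf : ∃ᶠ p in (U : Filter ℕ) ×ˢ (U : Filter ℕ), p.1 ≠ p.2 := by
    intro h
    simp only [ne_eq, not_not] at h
    obtain ⟨pa, ha, pb, hb, hab⟩ := eventually_prod_iff.1 h
    obtain ⟨x, hx⟩ := ha.exists
    obtain ⟨y, hy, hxy⟩ := (hb.and (hU (eventually_gt_atTop x))).exists
    exact hxy.ne (hab hx hy)
  have : NeBot ((U : Filter ℕ) ×ˢ (U : Filter ℕ) ⊓ 𝓟 {p | p.1 ≠ p.2}) :=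
    frequently_mem_iff_neBot.1 hf
  set V := Ultrafilter.of ((U : Filter ℕ) ×ˢ (U : Filter ℕ) ⊓ 𝓟 {p | p.1 ≠ p.2})
  have hV : (V : Filter (ℕ × ℕ)) ≤ _ := Ultrafilter.of_le _
  exact ⟨V, tendsto_fst.mono_left (hV.trans inf_le_left),
    tendsto_snd.mono_left (hV.trans inf_le_left),
    (hV.trans inf_le_right) (mem_principal_self _)⟩

lemma Formula.los_append {I : Type} {V : Ultrafilter I} {A : I → Type} [∀ i, CStarAlgebra (A i)]
    {n : ℕ} (phi : Formula (n + n)) (f g : Fin n → BF V A) (hf : ∀ k i, ‖(f k).val i‖ ≤ 1)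
    (hg : ∀ k i, ‖(g k).val i‖ ≤ 1) :
    Tendsto (fun i => phi.interp (A i) (Fin.append (fun k => (f k).val i) fun k => (g k).val i))
      (V : Filter I) (𝓝 (phi.interp (UProd V A)
        (Fin.append (fun k => UProd.mk (f k)) fun k => UProd.mk (g k)))) := by
  have h := phi.los (Fin.append f g) (fun k i => by
    refine Fin.addCases (fun l => ?_) (fun l => ?_) k
    · rw [Fin.append_left]; exact hf l i
    · rw [Fin.append_right]; exact hg l i)
  have e1 : ∀ i, (fun k => (Fin.append f g k).val i) =
      Fin.append (fun k => (f k).val i) fun k => (g k).val i := by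
    intro i
    funext k
    refine Fin.addCases (fun l => ?_) (fun l => ?_) k <;>
      simp only [Fin.append_left, Fin.append_right]
  have e2 : (fun k => UProd.mk (Fin.append f g k)) =
      Fin.append (fun k => UProd.mk (f k)) fun k => UProd.mk (g k) := by
    funext k
    refine Fin.addCases (fun l => ?_) (fun l => ?_) k <;>
      simp only [Fin.append_left, Fin.append_right]
  simp only [e1, e2] at h
  exact h

variable {T : CStarTheory}

/-- If the minimal norm is definable over `T`, then in ultraproducts of models it is a limit, up to
an error. -/
lemma minNorm_limit {n : ℕ} {ε : ℝ} {phi : Formula (n + n)}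
    (hphi : ∀ (A : Type) [CStarAlgebra A], Models A T →
      ∀ a b : Fin n → A, (∀ k, ‖a k‖ ≤ 1) → (∀ k, ‖b k‖ ≤ 1) →
        |minNorm A A (∑ k, a k ⊗ₜ[ℂ] b k) - phi.interp A (Fin.append a b)| ≤ ε)
    {I : Type} {V : Ultrafilter I} {A : I → Type} [∀ i, CStarAlgebra (A i)]
    (hA : ∀ i, Models (A i) T) (f g : Fin n → BF V A) (hf : ∀ k i, ‖(f k).val i‖ ≤ 1)
    (hg : ∀ k i, ‖(g k).val i‖ ≤ 1) (M : ℝ) :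
    ((∀ᶠ i in (V : Filter I), M ≤ minNorm (A i) (A i) (∑ k, (f k).val i ⊗ₜ[ℂ] (g k).val i)) →
      M - 2 * ε ≤ minNorm (UProd V A) (UProd V A) (∑ k, UProd.mk (f k) ⊗ₜ[ℂ] UProd.mk (g k))) ∧
    ((∀ᶠ i in (V : Filter I), minNorm (A i) (A i) (∑ k, (f k).val i ⊗ₜ[ℂ] (g k).val i) ≤ M) →
      minNorm (UProd V A) (UProd V A) (∑ k, UProd.mk (f k) ⊗ₜ[ℂ] UProd.mk (g k)) ≤ M + 2 * ε) := by
  have hl := phi.los_append f g hf hg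
  have h0 := abs_le.1 (hphi (UProd V A) (Models.uprod hA) (fun k => UProd.mk (f k))
    (fun k => UProd.mk (g k))
    (fun k => by
      rw [UProd.norm_mk]; exact BF.norm_le _ _ (Eventually.of_forall (hf k)))
    (fun k => by
      rw [UProd.norm_mk]; exact BF.norm_le _ _ (Eventually.of_forall (hg k))))
  have h1 := fun i => abs_le.1 (hphi (A i) (hA i) (fun k => (f k).val i) (fun k => (g k).val i)
    (fun k => hf k i) fun k => hg k i)
  refine ⟨fun h => ?_, fun h => ?_⟩
  · have := ge_of_tendsto hl (h.mono fun i hi => show M - ε ≤ _ by linarith [(h1 i).2])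
    linarith
  · have := le_of_tendsto hl (h.mono fun i hi => show _ ≤ M + ε by linarith [(h1 i).1])
    linarith

/-- Definability fails in the presence of an infinite system: the five weighted permutations of
torsion points of the torus have norm `5` against themselves, and norm uniformly smaller than `5`
against those of another order, while the minimal norm in a double ultrapower does not see
whether two tuples are taken along the same coordinate. -/
theorem not_minDefinable {A : Type} [CStarAlgebra A] (hA : Models A T) (y : ℕ → A) (c : A)
    (hc : ‖c‖ = 1) (hy : ∀ i j, star (y i) * y j = if i = j then c else 0) :
    ¬ MinDefinableOver T := by
  intro hdef
  classical
  have : Nontrivial A := ⟨⟨c, 0, fun h => by simp [h] at hc⟩⟩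
  obtain ⟨phi, hphi⟩ := hdef 5 (1 / 10000) (by norm_num)
  set yy : ∀ n, TorPt n → A := fun n x => y (Fintype.equivFin (TorPt n) x) with hyy
  have hy' : ∀ n i j, star (yy n i) * yy n j = if i = j then c else 0 := by
    intro n i j
    simp only [hyy, hy, Fin.val_inj, EmbeddingLike.apply_eq_iff_eq]
  set a : ℕ → Fin 5 → A := fun n k => tw (yy n) (torSigma n k) (torChi n k) with ha
  set b : ℕ → Fin 5 → A := fun n k =>
    tw (yy n) (torSigma n k) fun x => (starRingEnd ℂ) (torChi n k x) with hb
  have ha1 : ∀ n k, ‖a n k‖ ≤ 1 := fun n k => norm_tw_le hc (hy' n) _ _ (norm_torChi n k)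
  have hb1 : ∀ n k, ‖b n k‖ ≤ 1 := fun n k => norm_tw_le hc (hy' n) _ _ fun x => by
    rw [RCLike.norm_conj, norm_torChi]
  have hlow : ∀ n, 5 ≤ minNorm A A (∑ k, a n k ⊗ₜ[ℂ] b n k) := fun n => by
    have := le_minNorm_tw hc (hy' n) (torSigma n) (torChi n) (norm_torChi n)
    exact_mod_cast this
  have hup : ∀ n m, n ≠ m → minNorm A A (∑ k, a n k ⊗ₜ[ℂ] b m k) ≤ 5 - 1 / 1024 := fun n m h =>
    minNorm_tw_le hc (hy' n) (hy' m) (torSigma n) (torSigma m) (torChi n)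
      (fun k x => (starRingEnd ℂ) (torChi m k x)) _ (by norm_num) fun L _ _ F => torus_gap h F
  set U : Ultrafilter ℕ := hyperfilter ℕ
  have hU : (U : Filter ℕ) ≤ atTop := Nat.hyperfilter_le_atTop
  obtain ⟨V, h1, h2, h12⟩ := exists_pair_ultrafilter U hU
  let f : Fin 5 → BF U (fun _ => A) := fun k => BF.mk (fun n => a n k) ⟨1, fun n => ha1 n k⟩
  let g : Fin 5 → BF U (fun _ => A) := fun k => BF.mk (fun n => b n k) ⟨1, fun n => hb1 n k⟩
  let f1 : Fin 5 → BF V (fun _ => A) := fun k => BF.mk (fun p => a p.1 k) ⟨1, fun p => ha1 p.1 k⟩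
  let g1 : Fin 5 → BF V (fun _ => A) := fun k => BF.mk (fun p => b p.1 k) ⟨1, fun p => hb1 p.1 k⟩
  let g2 : Fin 5 → BF V (fun _ => A) := fun k => BF.mk (fun p => b p.2 k) ⟨1, fun p => hb1 p.2 k⟩
  have e1 := minNorm_map (UProd.reindex U V Prod.fst h1) (UProd.reindex U V Prod.fst h1)
    (UProd.reindex_injective U V Prod.fst h1) (UProd.reindex_injective U V Prod.fst h1)
    (fun k => UProd.mk (f k)) (fun k => UProd.mk (g k))
  have e2 := minNorm_map (UProd.reindex U V Prod.fst h1) (UProd.reindex U V Prod.snd h2)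
    (UProd.reindex_injective U V Prod.fst h1) (UProd.reindex_injective U V Prod.snd h2)
    (fun k => UProd.mk (f k)) (fun k => UProd.mk (g k))
  have l1 := (minNorm_limit hphi (V := V) (A := fun _ => A) (fun _ => hA) f1 g1
    (fun k p => ha1 p.1 k) (fun k p => hb1 p.1 k) 5).1 (Eventually.of_forall fun p => hlow p.1)
  have l2 := (minNorm_limit hphi (V := V) (A := fun _ => A) (fun _ => hA) f1 g2
    (fun k p => ha1 p.1 k) (fun k p => hb1 p.2 k) (5 - 1 / 1024)).2
    (h12.mono fun p hp => hup _ _ hp)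
  have e3 : minNorm (UProd V fun _ => A) (UProd V fun _ => A)
      (∑ k, UProd.mk (f1 k) ⊗ₜ[ℂ] UProd.mk (g1 k)) =
      minNorm (UProd V fun _ => A) (UProd V fun _ => A)
      (∑ k, UProd.mk (f1 k) ⊗ₜ[ℂ] UProd.mk (g2 k)) := e1.trans e2.symm
  linarith

/-- Half of the equivalence: definability of the minimal norm implies subhomogeneity. -/
theorem subhomogeneous_of_minDefinable (h : MinDefinableOver T) (A : Type) [CStarAlgebra A]
    (hA : Models A T) : ∃ n : ℕ, IsSubhomogeneous n A := by
  by_contra! hn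
  obtain ⟨y, c, hc, hy⟩ := exists_system (fun _ => A) hn (hyperfilter ℕ) Nat.hyperfilter_le_atTop
  exact not_minDefinable (Models.uprod fun _ => hA) y c hc hy h

end Undefinable

/-! ### Subhomogeneity forces definability of the minimal norm -/

section Uniform

variable {T : CStarTheory}

/-- Subhomogeneity of all models is automatically uniform: an ultraproduct of models of growing
degrees contains an infinite system, hence is not subhomogeneous. -/
lemma exists_uniform_degree
    (h : ∀ (A : Type) [CStarAlgebra A], Models A T → ∃ n : ℕ, IsSubhomogeneous n A) :
    ∃ n : ℕ, ∀ (A : Type) [CStarAlgebra A], Models A T → IsSubhomogeneous n A := by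
  by_contra! hn
  choose A hA hmod hsub using hn
  obtain ⟨y, c, hc, hy⟩ := exists_system A hsub (hyperfilter ℕ) Nat.hyperfilter_le_atTop
  obtain ⟨N, hN⟩ := h (UProd (hyperfilter ℕ) A) (Models.uprod hmod)
  refine not_isSubhomogeneous_of_system N (fun i => y i) c hc (fun i j => ?_) hN
  simp only [hy, Fin.val_inj]

end Uniform

section Injective

variable {A : Type} [CStarAlgebra A] {ι : Type} [Fintype ι]

/-- Slices by matrix coefficients are bounded by the minimal norm. -/
lemma norm_coeff_sum_le (r : CRep A) (α β : ι → A) (ξ η : r.H) (hξ : ‖ξ‖ ≤ 1) (hη : ‖η‖ ≤ 1) :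
    ‖∑ l, r.coeff ξ η (α l) • β l‖ ≤ minNorm A A (∑ l, α l ⊗ₜ[ℂ] β l) := by
  rcases subsingleton_or_nontrivial A with hA | hA
  · rw [Subsingleton.elim (∑ l, r.coeff ξ η (α l) • β l) 0, norm_zero]
    exact minNorm_nonneg _
  set b := ∑ l, r.coeff ξ η (α l) • β l with hb
  obtain ⟨s, ζ, -, hζ, hn⟩ := exists_irred b
  rw [← hn]
  by_cases h0 : s.π b ζ = 0
  · rw [h0, norm_zero]; exact minNorm_nonneg _
  have h1 : (inner ℂ (tm ξ (s.π b ζ)) (tau r s (∑ l, α l ⊗ₜ[ℂ] β l) (tm η ζ)) : ℂ) =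
      inner ℂ (s.π b ζ) (s.π b ζ) := by
    have hv : s.π b ζ = ∑ l, r.coeff ξ η (α l) • s.π (β l) ζ := by
      simp only [hb, map_sum, sum_apply, map_smul, smul_apply]
    generalize s.π b ζ = w at hv
    trans inner ℂ w (∑ l, r.coeff ξ η (α l) • s.π (β l) ζ)
    · simp only [map_sum, sum_apply, tau_tmul_tm, inner_sum, inner_tm, inner_smul_right]
      rfl
    · rw [← hv]
  have h2 := norm_inner_le_norm (𝕜 := ℂ) (tm ξ (s.π b ζ))
    (tau r s (∑ l, α l ⊗ₜ[ℂ] β l) (tm η ζ))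
  rw [h1, inner_self_eq_norm_sq_to_K, norm_tm] at h2
  have h3 : ‖tau r s (∑ l, α l ⊗ₜ[ℂ] β l) (tm η ζ)‖ ≤ minNorm A A (∑ l, α l ⊗ₜ[ℂ] β l) := by
    refine (ContinuousLinearMap.le_of_opNorm_le _ (tau_le_minNorm r s _) _).trans ?_
    rw [norm_tm, hζ, mul_one]
    exact mul_le_of_le_one_right (minNorm_nonneg _) hη
  have h4 : 0 < ‖s.π b ζ‖ := norm_pos_iff.2 h0
  have h5 : ‖s.π b ζ‖ * ‖s.π b ζ‖ ≤ ‖s.π b ζ‖ * minNorm A A (∑ l, α l ⊗ₜ[ℂ] β l) := by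
    calc ‖s.π b ζ‖ * ‖s.π b ζ‖ = ‖((‖s.π b ζ‖ : ℂ)) ^ 2‖ := by
          rw [norm_pow, Complex.norm_real, norm_norm, sq]
      _ ≤ _ := h2
      _ ≤ ‖s.π b ζ‖ * minNorm A A (∑ l, α l ⊗ₜ[ℂ] β l) :=
          mul_le_mul (mul_le_of_le_one_left h4.le hξ) h3 (norm_nonneg _) h4.le
  exact le_of_mul_le_mul_left h5 h4

/-- Over an `n`-subhomogeneous algebra the minimal norm is at most `n²` times the supremum of the
norms of the slices: expand the first leg in an orthonormal basis. -/
lemma minNorm_le_of_coeff {n : ℕ} (hA : IsSubhomogeneous n A) (α β : ι → A) (E : ℝ) (hE : 0 ≤ E)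
    (h : ∀ (r : CRep A) (ξ η : r.H), ‖ξ‖ ≤ 1 → ‖η‖ ≤ 1 → ‖∑ l, r.coeff ξ η (α l) • β l‖ ≤ E) :
    minNorm A A (∑ l, α l ⊗ₜ[ℂ] β l) ≤ (n : ℝ) ^ 2 * E := by
  refine minNorm_le_of_irred _ _ (by positivity) fun r s hr _ => ?_
  obtain ⟨hfin, hdim⟩ := hA r.H r.π hr
  set e := stdOrthonormalBasis ℂ r.H with he
  have e1 : tau r s (∑ l, α l ⊗ₜ[ℂ] β l) = ∑ i, ∑ j,
      HT.map (InnerProductSpace.rankOne ℂ (e j) (e i))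
        (s.π (∑ l, r.coeff (e j) (e i) (α l) • β l)) := by
    refine HT.ext_op fun x y => ?_
    have hx : ∀ a, r.π a x =
        ∑ i, ∑ j, r.coeff (e j) (e i) a • (InnerProductSpace.rankOne ℂ (e j) (e i) x) := by
      intro a
      conv_lhs => rw [← e.sum_repr' x, map_sum]
      refine Finset.sum_congr rfl fun i _ => ?_
      rw [map_smul]
      conv_lhs => rw [← e.sum_repr' (r.π a (e i)), Finset.smul_sum]
      refine Finset.sum_congr rfl fun j _ => ?_
      rw [InnerProductSpace.rankOne_apply, smul_comm]
      rfl
    simp only [map_sum, sum_apply, tau_tmul_tm, HT.map_tm, map_smul, smul_apply, hx,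
      LinearMap.sum_apply, LinearMap.smul_apply]
    rw [Finset.sum_comm]
    refine Finset.sum_congr rfl fun i _ => ?_
    rw [Finset.sum_comm]
  rw [e1]
  have hcard : (Module.finrank ℂ r.H : ℝ) ≤ n := by exact_mod_cast hdim
  calc _ ≤ ∑ i, ∑ j, ‖HT.map (InnerProductSpace.rankOne ℂ (e j) (e i))
        (s.π (∑ l, r.coeff (e j) (e i) (α l) • β l))‖ :=
        (norm_sum_le _ _).trans (Finset.sum_le_sum fun i _ => norm_sum_le _ _)
    _ ≤ ∑ _i : Fin (Module.finrank ℂ r.H), ∑ _j : Fin (Module.finrank ℂ r.H), E := by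
        refine Finset.sum_le_sum fun i _ => Finset.sum_le_sum fun j _ => ?_
        refine (HT.norm_map_le _ _).trans ?_
        rw [InnerProductSpace.norm_rankOne, e.norm_eq_one, e.norm_eq_one, one_mul, one_mul]
        exact (s.norm_le _).trans (h r _ _ (e.norm_eq_one j).le (e.norm_eq_one i).le)
    _ = (Module.finrank ℂ r.H : ℝ) ^ 2 * E := by
        simp only [Finset.sum_const, Finset.card_univ, Fintype.card_fin, nsmul_eq_mul]
        ring
    _ ≤ (n : ℝ) ^ 2 * E := by gcongr

lemma exists_finset_net (δ : ℝ) (hδ : 0 < δ) :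
    ∃ S : Finset ℂ, S.Nonempty ∧ (∀ s ∈ S, ‖s‖ ≤ 1) ∧ ∀ z : ℂ, ‖z‖ ≤ 1 → ∃ s ∈ S, ‖z - s‖ ≤ δ := by
  obtain ⟨t, ht, hfin, hcov⟩ := finite_cover_balls_of_compact (isCompact_closedBall (0 : ℂ) 1) hδ
  have hnet : ∀ z : ℂ, ‖z‖ ≤ 1 → ∃ s ∈ hfin.toFinset, ‖z - s‖ ≤ δ := by
    intro z hz
    obtain ⟨s, hs, hzs⟩ := Set.mem_iUnion₂.1 (hcov (mem_closedBall_zero_iff.2 hz))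
    exact ⟨s, hfin.mem_toFinset.2 hs, by rw [← dist_eq_norm]; exact (Metric.mem_ball.1 hzs).le⟩
  obtain ⟨s, hs, -⟩ := hnet 0 (by simp)
  exact ⟨hfin.toFinset, ⟨s, hs⟩, fun s hs => by simpa using ht (hfin.mem_toFinset.1 hs), hnet⟩

lemma norm_sum_smul_sub_le (u v : ι → ℂ) (β : ι → A) (hβ : ∀ l, ‖β l‖ ≤ 1) (δ : ℝ)
    (h : ∀ l, ‖u l - v l‖ ≤ δ) :
    ‖∑ l, u l • β l‖ ≤ ‖∑ l, v l • β l‖ + Fintype.card ι * δ := by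
  have h1 : ∑ l, u l • β l = ∑ l, v l • β l + ∑ l, (u l - v l) • β l := by
    rw [← Finset.sum_add_distrib]
    exact Finset.sum_congr rfl fun l _ => by rw [sub_smul]; abel
  rw [h1]
  refine (norm_add_le _ _).trans (add_le_add_right ?_ _)
  refine (norm_sum_le _ _).trans ?_
  calc ∑ l, ‖(u l - v l) • β l‖ ≤ ∑ _l : ι, δ := Finset.sum_le_sum fun l _ => by
        rw [norm_smul]
        exact (mul_le_of_le_one_right (norm_nonneg _) (hβ l)).trans (h l)
    _ = Fintype.card ι * δ := by simp

lemma norm_sum_mul_sub_le (u v w : ι → ℂ) (hw : ∀ l, ‖w l‖ ≤ 1) (δ : ℝ)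
    (h : ∀ l, ‖u l - v l‖ ≤ δ) :
    ‖∑ l, u l * w l‖ ≤ ‖∑ l, v l * w l‖ + Fintype.card ι * δ :=
  norm_sum_smul_sub_le (A := ℂ) u v w hw δ h

variable [DecidableEq ι]

/-- The defect of `t` from being the tuple of values at `α` of a contractive functional, tested on
the tuples of elements of a finite set `S`. -/
def defect (S : Finset ℂ) (hS : S.Nonempty) (t : ι → ℂ) (N : (ι → S) → ℝ) : ℝ :=
  have : Nonempty S := hS.to_subtype
  Finset.univ.sup' Finset.univ_nonempty fun u : ι → S => max (‖∑ l, (u l : ℂ) * t l‖ - N u) 0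

/-- A combination of norms approximating the injective tensor norm: the norms of the images of a
tensor under the functionals with values in a finite set `S`, penalized by the defect. -/
def injComb (S : Finset ℂ) (hS : S.Nonempty) (x : (ι → S) ⊕ (ι → S) → ℝ) : ℝ :=
  have : Nonempty S := hS.to_subtype
  Finset.univ.sup' Finset.univ_nonempty fun t : ι → S =>
    x (Sum.inl t) - defect S hS (fun l => t l) fun u => x (Sum.inr u)

lemma continuous_injComb (S : Finset ℂ) (hS : S.Nonempty) :
    Continuous (injComb S hS : ((ι → S) ⊕ (ι → S) → ℝ) → ℝ) := by
  unfold injComb defect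
  refine Continuous.finset_sup'_apply _ fun t _ => (continuous_apply _).sub ?_
  refine Continuous.finset_sup'_apply _ fun u _ => ?_
  exact (continuous_const.sub (continuous_apply _)).max continuous_const

/-- The values at `α` and `β` of the norms entering `injComb`. -/
def injNorms (S : Finset ℂ) (α β : ι → A) : (ι → S) ⊕ (ι → S) → ℝ :=
  Sum.elim (fun t => ‖∑ l, (t l : ℂ) • β l‖) fun u => ‖∑ l, (u l : ℂ) • α l‖

lemma le_defect (S : Finset ℂ) (hS : S.Nonempty) (t : ι → ℂ) (N : (ι → S) → ℝ) (u : ι → S) :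
    max (‖∑ l, (u l : ℂ) * t l‖ - N u) 0 ≤ defect S hS t N := by
  have : Nonempty S := hS.to_subtype
  exact Finset.le_sup' (fun u : ι → S => max (‖∑ l, (u l : ℂ) * t l‖ - N u) 0)
    (Finset.mem_univ u)

lemma defect_nonneg (S : Finset ℂ) (hS : S.Nonempty) (t : ι → ℂ) (N : (ι → S) → ℝ) :
    0 ≤ defect S hS t N :=
  (le_max_right _ _).trans (le_defect S hS t N fun _ => ⟨hS.choose, hS.choose_spec⟩)

lemma le_injComb (S : Finset ℂ) (hS : S.Nonempty) (x : (ι → S) ⊕ (ι → S) → ℝ) (t : ι → S) :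
    x (Sum.inl t) - defect S hS (fun l => t l) (fun u => x (Sum.inr u)) ≤ injComb S hS x := by
  have : Nonempty S := hS.to_subtype
  exact Finset.le_sup' (fun t : ι → S =>
    x (Sum.inl t) - defect S hS (fun l => t l) fun u => x (Sum.inr u)) (Finset.mem_univ t)

/-- The combination of norms is bounded by the minimal norm, up to the mesh of the net: a norming
functional for `∑ tₗ βₗ` turns `β` into a tuple of scalars against which the defect is tested. -/
lemma injComb_le (S : Finset ℂ) (hS : S.Nonempty) (hS1 : ∀ s ∈ S, ‖s‖ ≤ 1) (δ : ℝ)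
    (hnet : ∀ z : ℂ, ‖z‖ ≤ 1 → ∃ s ∈ S, ‖z - s‖ ≤ δ) (α β : ι → A) (hα : ∀ l, ‖α l‖ ≤ 1)
    (hβ : ∀ l, ‖β l‖ ≤ 1) :
    injComb S hS (injNorms S α β) ≤
      minNorm A A (∑ l, α l ⊗ₜ[ℂ] β l) + 2 * Fintype.card ι * δ := by
  have hδ : 0 ≤ δ := by
    obtain ⟨s, -, h⟩ := hnet 0 (by simp)
    exact (norm_nonneg _).trans h
  have : Nonempty S := hS.to_subtype
  unfold injComb
  refine Finset.sup'_le _ _ fun t _ => ?_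
  simp only [injNorms, Sum.elim_inl, Sum.elim_inr]
  rcases subsingleton_or_nontrivial A with hA | hA
  · have h0 := defect_nonneg S hS (fun l => t l) fun u => ‖∑ l, (u l : ℂ) • α l‖
    have h1 : ‖∑ l, (t l : ℂ) • β l‖ = 0 := by
      rw [Subsingleton.elim (∑ l, (t l : ℂ) • β l) 0, norm_zero]
    have := minNorm_nonneg (∑ l, α l ⊗ₜ[ℂ] β l)
    have : 0 ≤ 2 * Fintype.card ι * δ := by positivity
    linarith
  obtain ⟨g, hg1, hg⟩ := exists_dual_vector'' ℂ (∑ l, (t l : ℂ) • β l)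
  have hgl : ∀ l, ‖g (β l)‖ ≤ 1 := fun l =>
    (g.le_of_opNorm_le hg1 _).trans (by rw [one_mul]; exact hβ l)
  choose u hu hud using fun l => hnet (g (β l)) (hgl l)
  have h1 : ‖∑ l, (t l : ℂ) • β l‖ = ‖∑ l, g (β l) * (t l : ℂ)‖ := by
    have h2 : g (∑ l, (t l : ℂ) • β l) = ∑ l, g (β l) * (t l : ℂ) := by
      rw [map_sum]
      exact Finset.sum_congr rfl fun l _ => by rw [map_smul, smul_eq_mul, mul_comm]
    rw [← h2, hg]
    simp
  have h2 := norm_sum_mul_sub_le (fun l => g (β l)) u (fun l => (t l : ℂ))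
    (fun l => hS1 _ (t l).2) δ hud
  have h3 : ‖∑ l, u l * (t l : ℂ)‖ - ‖∑ l, u l • α l‖ ≤
      defect S hS (fun l => t l) fun u => ‖∑ l, (u l : ℂ) • α l‖ :=
    (le_max_left _ _).trans (le_defect S hS (fun l => t l) (fun u => ‖∑ l, (u l : ℂ) • α l‖)
      fun l => ⟨u l, hu l⟩)
  have h4 := norm_sum_smul_sub_le u (fun l => g (β l)) α hα δ fun l => by
    rw [norm_sub_rev]; exact hud l
  have h5 : ‖∑ l, g (β l) • α l‖ ≤ minNorm A A (∑ l, α l ⊗ₜ[ℂ] β l) := by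
    obtain ⟨r, ξ, -, hξ, hn⟩ := exists_irred (∑ l, g (β l) • α l)
    rw [← hn]
    set v := r.π (∑ l, g (β l) • α l) ξ with hv
    by_cases h0 : v = 0
    · rw [h0, norm_zero]; exact minNorm_nonneg _
    have hvpos : 0 < ‖v‖ := norm_pos_iff.2 h0
    have h6 := norm_coeff_sum_le r α β ((‖v‖⁻¹ : ℂ) • v) ξ
      (by rw [norm_smul, norm_inv, Complex.norm_real, norm_norm, inv_mul_cancel₀ hvpos.ne']) hξ.le
    have h7 : g (∑ l, r.coeff ((‖v‖⁻¹ : ℂ) • v) ξ (α l) • β l) = ‖v‖ := by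
      have h8 : (inner ℂ ((‖v‖⁻¹ : ℂ) • v) v : ℂ) = ‖v‖ := by
        rw [inner_smul_left, inner_self_eq_norm_sq_to_K, ← Complex.ofReal_inv, Complex.conj_ofReal]
        have : (‖v‖ : ℂ) ≠ 0 := by exact_mod_cast hvpos.ne'
        push_cast
        field_simp
        rfl
      have hv' : v = ∑ l, g (β l) • r.π (α l) ξ := by
        simp only [hv, map_sum, sum_apply, map_smul, smul_apply]
      refine Eq.trans ?_ h8
      generalize ((‖v‖⁻¹ : ℂ) • v) = w
      rw [hv']
      simp only [map_sum, map_smul, inner_sum, inner_smul_right, smul_eq_mul]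
      exact Finset.sum_congr rfl fun l _ => mul_comm _ _
    have h9 := g.le_of_opNorm_le hg1 (∑ l, r.coeff ((‖v‖⁻¹ : ℂ) • v) ξ (α l) • β l)
    rw [h7, one_mul, Complex.norm_real, norm_norm] at h9
    exact h9.trans h6
  linarith

/-- Over an `n`-subhomogeneous algebra the combination of norms controls the minimal norm. -/
lemma minNorm_le_injComb {n : ℕ} (hA : IsSubhomogeneous n A) (S : Finset ℂ) (hS : S.Nonempty)
    (δ : ℝ) (hnet : ∀ z : ℂ, ‖z‖ ≤ 1 → ∃ s ∈ S, ‖z - s‖ ≤ δ) (hS1 : ∀ s ∈ S, ‖s‖ ≤ 1)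
    (α β : ι → A) (hα : ∀ l, ‖α l‖ ≤ 1) (hβ : ∀ l, ‖β l‖ ≤ 1) :
    minNorm A A (∑ l, α l ⊗ₜ[ℂ] β l) ≤
      (n : ℝ) ^ 2 * (max (injComb S hS (injNorms S α β)) 0 + 2 * Fintype.card ι * δ) := by
  have hδ : 0 ≤ δ := by
    obtain ⟨s, -, h⟩ := hnet 0 (by simp)
    exact (norm_nonneg _).trans h
  have : Nonempty S := hS.to_subtype
  refine minNorm_le_of_coeff hA α β _ (by positivity) fun r ξ η hξ hη => ?_
  have hc : ∀ l, ‖r.coeff ξ η (α l)‖ ≤ 1 := fun l => by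
    refine (norm_inner_le_norm _ _).trans ?_
    have h1 : ‖r.π (α l) η‖ ≤ 1 :=
      (ContinuousLinearMap.le_of_opNorm_le _ ((r.norm_le _).trans (hα l)) _).trans
        (by rw [one_mul]; exact hη)
    exact mul_le_one₀ hξ (norm_nonneg _) h1
  choose t ht htd using fun l => hnet _ (hc l)
  have h1 := norm_sum_smul_sub_le (fun l => r.coeff ξ η (α l)) t β hβ δ htd
  have h2 : defect S hS t (fun u => ‖∑ l, (u l : ℂ) • α l‖) ≤ Fintype.card ι * δ := by
    unfold defect
    refine Finset.sup'_le _ _ fun u _ => max_le ?_ (by positivity)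
    have h3 := norm_sum_mul_sub_le t (fun l => r.coeff ξ η (α l)) (fun l => (u l : ℂ))
      (fun l => hS1 _ (u l).2) δ fun l => by rw [norm_sub_rev]; exact htd l
    have h4 : ‖∑ l, r.coeff ξ η (α l) * (u l : ℂ)‖ ≤ ‖∑ l, (u l : ℂ) • α l‖ := by
      have h5 : ∑ l, r.coeff ξ η (α l) * (u l : ℂ) =
          inner ℂ ξ (r.π (∑ l, (u l : ℂ) • α l) η) := by
        simp only [map_sum, sum_apply, map_smul, smul_apply, inner_sum, inner_smul_right]
        exact Finset.sum_congr rfl fun l _ => mul_comm _ _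
      rw [h5]
      refine (norm_inner_le_norm _ _).trans ?_
      refine (mul_le_of_le_one_left (norm_nonneg _) hξ).trans ?_
      refine (ContinuousLinearMap.le_of_opNorm_le _ (r.norm_le _) _).trans ?_
      exact mul_le_of_le_one_right (norm_nonneg _) hη
    simp only [mul_comm (t _), mul_comm (r.coeff ξ η _)] at h3 h4
    linarith
  have h3 : ‖∑ l, t l • β l‖ - defect S hS t (fun u => ‖∑ l, (u l : ℂ) • α l‖) ≤
      injComb S hS (injNorms S α β) :=
    le_injComb S hS (injNorms S α β) fun l => ⟨t l, ht l⟩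
  have h4 := le_max_left (injComb S hS (injNorms S α β)) 0
  linarith

end Injective

/-! ### Formulas for the minimal norm -/

section Formulas

lemma Formula.exists_comb {n : ℕ} {J : Type} [Fintype J] (u : (J → ℝ) → ℝ) (hu : Continuous u)
    (phis : J → Formula n) : ∃ psi : Formula n, ∀ (A : Type) [CStarAlgebra A] (a : Fin n → A),
      psi.interp A a = u fun j => (phis j).interp A a := by
  let e := Fintype.equivFin J
  refine ⟨Formula.comb (fun x => u fun j => x (e j)) (hu.comp (by fun_prop))
    fun i => phis (e.symm i), fun A _ a => ?_⟩
  simp only [Formula.interp, Equiv.symm_apply_apply]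

lemma CTerm.exists_sum {n : ℕ} {J : Type} (s : Finset J) (c : J → ℂ) (p : J → CTerm n) :
    ∃ t : CTerm n, ∀ (A : Type) [CStarAlgebra A] (a : Fin n → A),
      t.eval a = ∑ j ∈ s, c j • (p j).eval a := by
  classical
  induction s using Finset.induction_on with
  | empty => exact ⟨CTerm.smul 0 CTerm.one, fun A _ a => by simp [CTerm.eval]⟩
  | insert j s hj ih =>
    obtain ⟨t, ht⟩ := ih
    exact ⟨CTerm.add (CTerm.smul (c j) (p j)) t, fun A _ a => by
      rw [Finset.sum_insert hj, ← ht, CTerm.eval, CTerm.eval]⟩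

/-- The iterated squares `y ↦ y* y` of `∑ aₖ ⊗ bₖ` are again sums of elementary tensors of
contractions, which are given by terms in the variables `a`, `b`. -/
lemma exists_sqIter_terms (k m : ℕ) : ∃ (ι : Type) (_ : Fintype ι) (p q : ι → CTerm (k + k)),
    ∀ (A : Type) [CStarAlgebra A] (a b : Fin k → A), (∀ i, ‖a i‖ ≤ 1) → (∀ i, ‖b i‖ ≤ 1) →
      sqIter (∑ i, a i ⊗ₜ[ℂ] b i) m =
        ∑ l, (p l).eval (Fin.append a b) ⊗ₜ[ℂ] (q l).eval (Fin.append a b) ∧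
      (∀ l, ‖(p l).eval (Fin.append a b)‖ ≤ 1) ∧ ∀ l, ‖(q l).eval (Fin.append a b)‖ ≤ 1 := by
  induction m with
  | zero =>
    refine ⟨Fin k, inferInstance, fun i => CTerm.var (Fin.castAdd k i),
      fun i => CTerm.var (Fin.natAdd k i), fun A _ a b ha hb => ?_⟩
    simp only [CTerm.eval, Fin.append_left, Fin.append_right, sqIter]
    exact ⟨trivial, ha, hb⟩
  | succ m ih =>
    obtain ⟨ι, _, p, q, h⟩ := ih
    refine ⟨ι × ι, inferInstance, fun l => CTerm.mul (CTerm.star (p l.1)) (p l.2),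
      fun l => CTerm.mul (CTerm.star (q l.1)) (q l.2), fun A _ a b ha hb => ?_⟩
    obtain ⟨h1, h2, h3⟩ := h A a b ha hb
    simp only [CTerm.eval]
    refine ⟨?_, fun l => ?_, fun l => ?_⟩
    · rw [sqIter, h1, map_sum, Finset.sum_mul_sum, Fintype.sum_prod_type]
      refine Finset.sum_congr rfl fun i _ => Finset.sum_congr rfl fun j _ => ?_
      rw [tensorStar_tmul, Algebra.TensorProduct.tmul_mul_tmul]
    · refine (norm_mul_le _ _).trans ?_
      rw [norm_star]
      exact mul_le_one₀ (h2 _) (norm_nonneg _) (h2 _)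
    · refine (norm_mul_le _ _).trans ?_
      rw [norm_star]
      exact mul_le_one₀ (h3 _) (norm_nonneg _) (h3 _)

/-- Taking `N`-th roots turns a multiplicative error `D` into one close to `1`. -/
lemma abs_sub_root_le {N : ℕ} (hN : N ≠ 0) {P x D η e k ε : ℝ} (hP : 0 ≤ P) (hx : 0 ≤ x)
    (hη : 0 ≤ η) (hη1 : η ≤ 1) (hε : 0 < ε) (hηk : η * (k + ε) ≤ ε / 4)
    (hD : D ≤ (1 + η) ^ N) (he0 : 0 ≤ e) (he : e ≤ (ε / 4) ^ N) (hPk : P ≤ k)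
    (h1 : x ≤ P ^ N + e) (h2 : P ^ N ≤ D * (x + e)) :
    |P - x ^ ((N : ℝ)⁻¹)| ≤ ε := by
  have hy0 : 0 ≤ x ^ ((N : ℝ)⁻¹) := Real.rpow_nonneg hx _
  have hy : (x ^ ((N : ℝ)⁻¹)) ^ N = x := Real.rpow_inv_natCast_pow hx hN
  set y := x ^ ((N : ℝ)⁻¹)
  have hε4 : 0 ≤ ε / 4 := by positivity
  have h3 : y ≤ P + ε / 4 := by
    refine (pow_le_pow_iff_left₀ hy0 (by positivity) hN).1 ?_
    rw [hy]
    have := pow_add_pow_le hP hε4 hN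
    linarith
  have h4 : P ≤ (1 + η) * (y + ε / 4) := by
    refine (pow_le_pow_iff_left₀ hP (by positivity) hN).1 ?_
    rw [mul_pow]
    have h5 := pow_add_pow_le hy0 hε4 hN
    rw [hy] at h5
    exact h2.trans (mul_le_mul hD (by linarith) (by positivity) (by positivity))
  rw [abs_le]
  constructor
  · linarith
  · have h5 : η * y ≤ η * (k + ε) := mul_le_mul_of_nonneg_left (by linarith) hη
    have h6 : η * (ε / 4) ≤ 1 * (ε / 4) := mul_le_mul_of_nonneg_right hη1 hε4
    linarith

end Formulas

/-- If all models are subhomogeneous, the norms entering `injComb`, evaluated at the terms of a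
high iterated square, produce formulas converging to the minimal norm. -/
theorem minDefinable_of_subhomogeneous {T : CStarTheory}
    (h : ∀ (A : Type) [CStarAlgebra A], Models A T → ∃ n : ℕ, IsSubhomogeneous n A) :
    MinDefinableOver T := by
  classical
  obtain ⟨n, hn⟩ := exists_uniform_degree h
  intro k ε hε
  set η : ℝ := min 1 (ε / (4 * (k + ε))) with hη
  have hη0 : 0 < η := by positivity
  have hηk : η * (k + ε) ≤ ε / 4 := by
    calc η * (k + ε) ≤ ε / (4 * (k + ε)) * (k + ε) := by gcongr; exact min_le_right _ _
      _ = ε / 4 := by field_simp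
  obtain ⟨m, hm⟩ := pow_unbounded_of_one_lt ((n : ℝ) ^ 2) (by linarith : 1 < 1 + η)
  have hD : (n : ℝ) ^ 2 ≤ (1 + η) ^ 2 ^ m :=
    hm.le.trans (pow_le_pow_right₀ (by linarith) Nat.lt_two_pow_self.le)
  have hN : 2 ^ m ≠ 0 := by positivity
  obtain ⟨ι, _, p, q, hpq⟩ := exists_sqIter_terms k m
  obtain ⟨δ, hδ, he⟩ : ∃ δ : ℝ, 0 < δ ∧ 2 * Fintype.card ι * δ ≤ (ε / 4) ^ 2 ^ m := by
    refine ⟨(ε / 4) ^ 2 ^ m / (2 * Fintype.card ι + 1), by positivity, ?_⟩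
    rw [← mul_div_assoc, div_le_iff₀ (by positivity), mul_comm]
    exact mul_le_mul_of_nonneg_left (by linarith) (by positivity)
  obtain ⟨S, hS, hS1, hnet⟩ := exists_finset_net δ hδ
  choose tq htq using fun t : ι → S => CTerm.exists_sum Finset.univ (fun l => (t l : ℂ)) q
  choose tp htp using fun t : ι → S => CTerm.exists_sum Finset.univ (fun l => (t l : ℂ)) p
  obtain ⟨psi, hpsi⟩ := Formula.exists_comb (J := (ι → S) ⊕ (ι → S))
    (fun x => (max (injComb S hS x) 0) ^ (((2 ^ m : ℕ) : ℝ)⁻¹))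
    (((continuous_injComb S hS).max continuous_const).rpow_const fun _ => Or.inr (by positivity))
    (Sum.elim (fun t => Formula.atom (tq t)) fun t => Formula.atom (tp t))
  refine ⟨psi, fun A _ hA a b ha hb => ?_⟩
  obtain ⟨h1, h2, h3⟩ := hpq A a b ha hb
  have h4 : (fun j : (ι → S) ⊕ (ι → S) => (Sum.elim (fun t => Formula.atom (tq t))
      (fun t => Formula.atom (tp t)) j : Formula (k + k)).interp A (Fin.append a b)) =
      injNorms S (fun l => (p l).eval (Fin.append a b))
        (fun l => (q l).eval (Fin.append a b)) := by
    funext j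
    rcases j with t | t <;>
      simp only [Sum.elim_inl, Sum.elim_inr, Formula.interp, injNorms, htq, htp]
  rw [hpsi, h4]
  have hc := isCStarNorm_minNorm A A
  have h5 := hc.sqIter_eq (∑ i, a i ⊗ₜ[ℂ] b i) m
  rw [h1] at h5
  have h6 := injComb_le S hS hS1 δ hnet _ _ h2 h3
  have h7 := minNorm_le_injComb (hn A hA) S hS δ hnet hS1 _ _ h2 h3
  rw [h5] at h6 h7
  have hPk : minNorm A A (∑ i, a i ⊗ₜ[ℂ] b i) ≤ k := by
    refine (hc.sum_le _ _).trans ?_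
    calc ∑ i, minNorm A A (a i ⊗ₜ[ℂ] b i) ≤ ∑ _i : Fin k, (1 : ℝ) :=
          Finset.sum_le_sum fun i _ => (hc.tmul_le _ _).trans
            (mul_le_one₀ (ha i) (norm_nonneg _) (hb i))
      _ = k := by simp
  have hP := minNorm_nonneg (∑ i, a i ⊗ₜ[ℂ] b i)
  exact abs_sub_root_le hN hP (le_max_right _ _) hη0.le (min_le_left _ _) hε hηk hD
    (by positivity) he hPk (max_le h6 (by positivity)) h7

/-- For any theory `T` of unital C*-algebras, the minimal tensor norm
predicate `P^min` is `T`-definable if and only if `T` is subhomogeneous, i.e. every model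
of `T` is `n`-subhomogeneous for some `n`. -/
theorem minNorm_definable_iff_subhomogeneous (T : CStarTheory) :
    MinDefinableOver T ↔
    (∀ (A : Type) [CStarAlgebra A], Models A T → ∃ n : ℕ, IsSubhomogeneous n A) :=
  ⟨fun h A _ hA => subhomogeneous_of_minDefinable h A hA, minDefinable_of_subhomogeneous⟩

end
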